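/- (Theorem 9: bounds on the ID capacity region of the BC with a common message identified separately.) The ID capacity region 𝒞_{cm-s} of the BC W(y,z|x) with a common message, where each receiver identifies the common message and its private message separately, is contained in the set of all triples (R, R_𝒴, R_𝒵) ∈ [0,∞)³ for which some PMF P on 𝒳 satisfies R ≤ I(P,W_𝒴), R_𝒴 ≤ I(P,W_𝒴), R ≤ I(P,W_𝒵), and R_𝒵 ≤ I(P,W_𝒵); and 𝒞_{cm-s} contains the set of all triples (R, R_𝒴, R_𝒵) ∈ [0,∞)³ for which some PMF P on 𝒳 satisfies those four inequalities together with R_𝒴 ≤ 2·I(P, W_𝒵) and R_𝒵 ≤ 2·I(P, W_𝒴). -/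

import Mathlib

open scoped Classical
open Finset

noncomputable section

/-- `P` is a probability mass function on the finite type `X`. -/
def IsPMF {X : Type*} [Fintype X] (P : X → ℝ) : Prop :=
  (∀ x, 0 ≤ P x) ∧ ∑ x, P x = 1

/-- `W` is a (discrete memoryless) channel from `X` to `Y`. -/
def IsChannel {X Y : Type*} [Fintype Y] (W : X → Y → ℝ) : Prop :=
  (∀ x y, 0 ≤ W x y) ∧ ∀ x, ∑ y, W x y = 1

/-- The `n`-fold memoryless extension `W^n(𝐲|𝐱) = ∏ᵢ W(yᵢ|xᵢ)`. -/
def Wn {X Y : Type*} (W : X → Y → ℝ) (n : ℕ) (x : Fin n → X) (y : Fin n → Y) : ℝ :=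
  ∏ i, W (x i) (y i)

/-- Mutual information `I(P,W)` (natural logarithm), with the convention that
terms with `P x * W x y = 0` contribute `0`. -/
def mutInf {X Y : Type*} [Fintype X] [Fintype Y] (P : X → ℝ) (W : X → Y → ℝ) : ℝ :=
  ∑ x, ∑ y, if P x * W x y = 0 then 0
    else P x * W x y * Real.log (W x y / ∑ x', P x' * W x' y)

/-- The error requirements of an `(n, M, l1, l2)` ID code for the DMC `W`:
maximum probability of missed identification at most `l1`, maximum probability
of wrong identification at most `l2`. -/
def IDCodeErr {X Y M : Type*} [Fintype X] [Fintype Y]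
    (n : ℕ) (W : X → Y → ℝ) (Q : M → (Fin n → X) → ℝ)
    (D : M → Finset (Fin n → Y)) (l1 l2 : ℝ) : Prop :=
  (∀ m, ∑ x, Q m x * ∑ y ∈ (D m)ᶜ, Wn W n x y ≤ l1) ∧
  (∀ m m', m ≠ m' → ∑ x, Q m x * ∑ y ∈ D m', Wn W n x y ≤ l2)

/-- `(n, M, l1, l2)` ID code for the DMC `W`. -/
def IsIDCode {X Y M : Type*} [Fintype X] [Fintype Y]
    (n : ℕ) (W : X → Y → ℝ) (Q : M → (Fin n → X) → ℝ)
    (D : M → Finset (Fin n → Y)) (l1 l2 : ℝ) : Prop :=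
  (∀ m, IsPMF (Q m)) ∧ IDCodeErr n W Q D l1 l2

/-- `W` is a two-receiver broadcast channel from `X` to `Y × Z`. -/
def IsBC {X Y Z : Type*} [Fintype Y] [Fintype Z] (W : X → Y → Z → ℝ) : Prop :=
  (∀ x y z, 0 ≤ W x y z) ∧ ∀ x, ∑ y, ∑ z, W x y z = 1

/-- Marginal channel to terminal `Y`. -/
def margY {X Y Z : Type*} [Fintype Z] (W : X → Y → Z → ℝ) : X → Y → ℝ :=
  fun x y => ∑ z, W x y z

/-- Marginal channel to terminal `Z`. -/
def margZ {X Y Z : Type*} [Fintype Y] (W : X → Y → Z → ℝ) : X → Z → ℝ :=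
  fun x z => ∑ y, W x y z

/-- ID code for the BC with a common message where each receiver identifies
the common message and its private message separately: the four mixture codes
are ID codes for the respective marginal channels. -/
def IsCMSIDCode {X Y Z : Type*} [Fintype X] [Fintype Y] [Fintype Z]
    (n k kY kZ : ℕ) (W : X → Y → Z → ℝ)
    (Q : Fin k → Fin kY → Fin kZ → (Fin n → X) → ℝ)
    (DcY : Fin k → Finset (Fin n → Y)) (DY : Fin kY → Finset (Fin n → Y))
    (DcZ : Fin k → Finset (Fin n → Z)) (DZ : Fin kZ → Finset (Fin n → Z))
    (l1Y l2Y l1Z l2Z : ℝ) : Prop :=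
  (∀ m my mz, IsPMF (Q m my mz)) ∧
  IDCodeErr n (margY W)
    (fun m x => ((kY * kZ : ℕ) : ℝ)⁻¹ * ∑ my, ∑ mz, Q m my mz x) DcY l1Y l2Y ∧
  IDCodeErr n (margY W)
    (fun my x => ((k * kZ : ℕ) : ℝ)⁻¹ * ∑ m, ∑ mz, Q m my mz x) DY l1Y l2Y ∧
  IDCodeErr n (margZ W)
    (fun m x => ((kY * kZ : ℕ) : ℝ)⁻¹ * ∑ my, ∑ mz, Q m my mz x) DcZ l1Z l2Z ∧
  IDCodeErr n (margZ W)
    (fun mz x => ((k * kY : ℕ) : ℝ)⁻¹ * ∑ m, ∑ my, Q m my mz x) DZ l1Z l2Z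

/-- The rate triple `(R, R_Y, R_Z)` is achievable for the BC with a common
message identified separately. -/
def CMSAchievable {X Y Z : Type*} [Fintype X] [Fintype Y] [Fintype Z]
    (W : X → Y → Z → ℝ) (Rt : ℝ × ℝ × ℝ) : Prop :=
  0 ≤ Rt.1 ∧ 0 ≤ Rt.2.1 ∧ 0 ≤ Rt.2.2 ∧
  ∀ l1Y l2Y l1Z l2Z : ℝ, 0 < l1Y → 0 < l2Y → 0 < l1Z → 0 < l2Z →
    ∃ n₀ : ℕ, ∀ n : ℕ, n₀ ≤ n →
      ∃ (k kY kZ : ℕ) (Q : Fin k → Fin kY → Fin kZ → (Fin n → X) → ℝ)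
        (DcY : Fin k → Finset (Fin n → Y)) (DY : Fin kY → Finset (Fin n → Y))
        (DcZ : Fin k → Finset (Fin n → Z)) (DZ : Fin kZ → Finset (Fin n → Z)),
        IsCMSIDCode n k kY kZ W Q DcY DY DcZ DZ l1Y l2Y l1Z l2Z ∧
        ((0 < Rt.1 → Rt.1 ≤ (1 / n) * Real.log (Real.log k)) ∧ (Rt.1 = 0 → k = 1)) ∧
        ((0 < Rt.2.1 → Rt.2.1 ≤ (1 / n) * Real.log (Real.log kY)) ∧ (Rt.2.1 = 0 → kY = 1)) ∧
        ((0 < Rt.2.2 → Rt.2.2 ≤ (1 / n) * Real.log (Real.log kZ)) ∧ (Rt.2.2 = 0 → kZ = 1))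

/-!
*Outer bound.* If the words carrying an input distribution have types whose information is below
`R' < R`, its output law can be reproduced, up to the mass lost by truncating the likelihood ratio,
by the uniform law on a list of about `exp (n R')` words. There are far fewer such lists than
`exp (exp (n R))`, so with that many messages the average encoder puts little mass on words of low
information. The four codes a broadcast code induces share this average encoder, hence one word
avoids all four exceptional sets, and its type is the required `P`. Compactness of the simplex
passes the bound to the closure.

*Inner bound.* Draw a pool of `exp (n r)` codewords from `Pⁿ`, give every message of each of the
three kinds a random list of pool indices, and decode a message by asking whether some codeword of
its list is jointly typical with the output. A triple of messages is sent as a random common element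
of its three lists. With list sizes `exp (n aᵢ)`, errors are rare if `a₁` is below both
informations, `a₂` below the first and `a₃` below the second, and common elements are plentiful if
`a₁ + a₂ + a₃ > 2 r`; the conditions `R_𝒴 ≤ 2 I(P, W_𝒵)` and `R_𝒵 ≤ 2 I(P, W_𝒴)` are what makes
such exponents exist. Second moments over the random lists bound average errors, and keeping half
of each family of messages turns them into maximal errors.
-/

namespace IsPMF

variable {A : Type*} [Fintype A] {p : A → ℝ}

lemma sum_mul_const (hp : IsPMF p) (c : ℝ) : ∑ a, p a * c = c := by
  rw [← sum_mul, hp.2, one_mul]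

lemma le_one (hp : IsPMF p) (a : A) : p a ≤ 1 :=
  hp.2 ▸ single_le_sum (fun b _ => hp.1 b) (mem_univ a)

lemma sum_filter_le_one (hp : IsPMF p) (B : A → Prop) : ∑ a with B a, p a ≤ 1 :=
  hp.2 ▸ sum_le_sum_of_subset_of_nonneg (filter_subset _ _) fun a _ _ => hp.1 a

lemma sum_mul_le (hp : IsPMF p) {f : A → ℝ} {c : ℝ} (hf : ∀ a, f a ≤ c) :
    ∑ a, p a * f a ≤ c :=
  hp.sum_mul_const c ▸ sum_le_sum fun a _ => mul_le_mul_of_nonneg_left (hf a) (hp.1 a)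

lemma exists_le (hp : IsPMF p) {f : A → ℝ} {c : ℝ} (h : ∑ a, p a * f a ≤ c) :
    ∃ a, f a ≤ c := by
  by_contra! hc
  obtain ⟨a, -, ha⟩ : ∃ a ∈ univ, 0 < p a :=
    exists_lt_of_sum_lt (s := univ) (f := fun _ => (0 : ℝ)) (by simp [hp.2])
  have hlt : ∑ a, p a * c < ∑ a, p a * f a :=
    sum_lt_sum (fun b _ => mul_le_mul_of_nonneg_left (hc b).le (hp.1 b))
      ⟨a, mem_univ a, mul_lt_mul_of_pos_left (hc a) ha⟩
  rw [hp.sum_mul_const] at hlt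
  exact hlt.not_ge h

lemma sum_mul_sub_sq (hp : IsPMF p) (f : A → ℝ) (c : ℝ) :
    ∑ a, p a * (f a - c) ^ 2 = ∑ a, p a * f a ^ 2 - 2 * c * ∑ a, p a * f a + c ^ 2 := by
  rw [← hp.sum_mul_const (c ^ 2), mul_sum, ← sum_sub_distrib, ← sum_add_distrib]
  exact sum_congr rfl fun a _ => by ring

lemma sum_mul_sub_mean (hp : IsPMF p) (f : A → ℝ) :
    ∑ a, p a * (f a - ∑ b, p b * f b) = 0 := by
  simp_rw [mul_sub, sum_sub_distrib, hp.sum_mul_const, sub_self]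

lemma sum_mul_sub_mean_sq_le (hp : IsPMF p) (f : A → ℝ) :
    ∑ a, p a * (f a - ∑ b, p b * f b) ^ 2 ≤ ∑ a, p a * f a ^ 2 := by
  rw [hp.sum_mul_sub_sq]
  nlinarith [sq_nonneg (∑ b, p b * f b)]

lemma sq_sum_mul_abs_le (hp : IsPMF p) (f : A → ℝ) :
    (∑ a, p a * |f a|) ^ 2 ≤ ∑ a, p a * f a ^ 2 := by
  have h : 0 ≤ ∑ a, p a * (|f a| - ∑ b, p b * |f b|) ^ 2 :=
    sum_nonneg fun a _ => mul_nonneg (hp.1 a) (sq_nonneg _)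
  rw [hp.sum_mul_sub_sq] at h
  simp_rw [sq_abs] at h
  linarith

lemma exists_forall_notMem {ι : Type*} [Fintype ι] (hp : IsPMF p) (B : ι → Finset A)
    (h : ∑ i, ∑ a ∈ B i, p a < 1) : ∃ a, ∀ i, a ∉ B i := by
  by_contra! hB
  have hle : ∑ a, p a ≤ ∑ a, ∑ i, if a ∈ B i then p a else 0 := by
    refine sum_le_sum fun a _ => ?_
    obtain ⟨i, hi⟩ := hB a
    refine (if_pos hi).ge.trans (single_le_sum (f := fun i => if a ∈ B i then p a else 0) ?_
      (mem_univ i))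
    intro j _
    split_ifs
    exacts [hp.1 a, le_rfl]
  rw [hp.2, sum_comm] at hle
  simp_rw [sum_ite_mem, univ_inter] at hle
  exact hle.not_gt h

end IsPMF

section ProductWeight

variable {ι A : Type*} [Fintype ι]

/-- The product weight `∏ᵢ pᵢ(ωᵢ)`, the law of independent letters `ωᵢ ∼ pᵢ`. -/
def piWeight (p : ι → A → ℝ) (ω : ι → A) : ℝ :=
  ∏ i, p i (ω i)

variable [DecidableEq ι] [Fintype A] {p : ι → A → ℝ}

lemma isPMF_piWeight (hp : ∀ i, IsPMF (p i)) : IsPMF (piWeight p) :=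
  ⟨fun _ => prod_nonneg fun i _ => (hp i).1 _,
    (Fintype.prod_sum p).symm.trans (prod_eq_one fun i _ => (hp i).2)⟩

lemma sum_piWeight_mul_prod (p g : ι → A → ℝ) :
    ∑ ω, piWeight p ω * ∏ i, g i (ω i) = ∏ i, ∑ a, p i a * g i a := by
  simp_rw [Fintype.prod_sum, piWeight, prod_mul_distrib]

lemma sum_piWeight_mul_apply (hp : ∀ i, IsPMF (p i)) (i : ι) (g : A → ℝ) :
    ∑ ω, piWeight p ω * g (ω i) = ∑ a, p i a * g a := by
  have h := sum_piWeight_mul_prod p fun l a => if l = i then g a else 1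
  rw [Fintype.prod_eq_single i fun l hl => by simp [hl, (hp l).2]] at h
  simpa using h

lemma sum_piWeight_mul_apply_mul_apply (hp : ∀ i, IsPMF (p i)) {i j : ι} (hij : i ≠ j)
    (g h : A → ℝ) :
    ∑ ω, piWeight p ω * (g (ω i) * h (ω j)) = (∑ a, p i a * g a) * ∑ a, p j a * h a := by
  have key := sum_piWeight_mul_prod p fun l a =>
    (if l = i then g a else 1) * if l = j then h a else 1
  rw [Fintype.prod_eq_mul i j hij fun l hl => by simp [hl.1, hl.2, (hp l).2]] at key
  simp_rw [prod_mul_distrib, Fintype.prod_ite_eq'] at key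
  simpa [hij, hij.symm] using key

lemma sum_piWeight_mul_apply₂ (hp : ∀ i, IsPMF (p i)) {i j : ι} (hij : i ≠ j)
    (f : A → A → ℝ) :
    ∑ ω, piWeight p ω * f (ω i) (ω j) = ∑ a, p i a * ∑ b, p j b * f a b := by
  calc ∑ ω, piWeight p ω * f (ω i) (ω j)
      = ∑ a, ∑ ω, piWeight p ω * ((if ω i = a then 1 else 0) * f a (ω j)) := by
        rw [sum_comm]
        simp_rw [← mul_sum, ite_mul, one_mul, zero_mul, sum_ite_eq, mem_univ, if_true]
    _ = ∑ a, p i a * ∑ b, p j b * f a b := by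
        refine sum_congr rfl fun a _ => ?_
        rw [sum_piWeight_mul_apply_mul_apply hp hij (fun b => if b = a then 1 else 0) (f a)]
        simp

lemma sum_piWeight_mul_sum_sq (hp : ∀ i, IsPMF (p i)) (f : ι → A → ℝ)
    (hf : ∀ i, ∑ a, p i a * f i a = 0) :
    ∑ ω, piWeight p ω * (∑ i, f i (ω i)) ^ 2 = ∑ i, ∑ a, p i a * f i a ^ 2 := by
  simp_rw [sq, sum_mul_sum, mul_sum]
  rw [sum_comm]
  refine sum_congr rfl fun i _ => ?_
  rw [sum_comm, sum_eq_single i]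
  · exact sum_piWeight_mul_apply hp i fun a => f i a * f i a
  · intro j _ hj
    rw [sum_piWeight_mul_apply_mul_apply hp hj.symm, hf, zero_mul]
  · simp

lemma sum_piWeight_le_abs_sub_mean_le (hp : ∀ i, IsPMF (p i)) (f : ι → A → ℝ) {t : ℝ}
    (ht : 0 < t) :
    ∑ ω with t ≤ |∑ i, f i (ω i) - ∑ i, ∑ a, p i a * f i a|, piWeight p ω
      ≤ (∑ i, ∑ a, p i a * f i a ^ 2) / t ^ 2 := by
  have hw := (isPMF_piWeight hp).1
  have hcheb (ω : ι → A) (hω : t ≤ |∑ i, f i (ω i) - ∑ i, ∑ a, p i a * f i a|) :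
      piWeight p ω * t ^ 2
        ≤ piWeight p ω * (∑ i, (f i (ω i) - ∑ a, p i a * f i a)) ^ 2 := by
    rw [sum_sub_distrib, ← sq_abs (_ - _)]
    exact mul_le_mul_of_nonneg_left (pow_le_pow_left₀ ht.le hω 2) (hw ω)
  rw [le_div_iff₀ (by positivity), sum_mul]
  calc _ ≤ ∑ ω with t ≤ |∑ i, f i (ω i) - ∑ i, ∑ a, p i a * f i a|,
          piWeight p ω * (∑ i, (f i (ω i) - ∑ a, p i a * f i a)) ^ 2 :=
        sum_le_sum fun ω hω => hcheb ω (mem_filter.1 hω).2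
    _ ≤ ∑ ω, piWeight p ω * (∑ i, (f i (ω i) - ∑ a, p i a * f i a)) ^ 2 :=
        sum_le_sum_of_subset_of_nonneg (filter_subset _ _) fun ω _ _ =>
          mul_nonneg (hw ω) (sq_nonneg _)
    _ = ∑ i, ∑ a, p i a * (f i a - ∑ b, p i b * f i b) ^ 2 :=
        sum_piWeight_mul_sum_sq hp (fun i a => f i a - ∑ b, p i b * f i b) fun i =>
          (hp i).sum_mul_sub_mean _
    _ ≤ _ := sum_le_sum fun i _ => (hp i).sum_mul_sub_mean_sq_le _

end ProductWeight

section Averages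

variable {A : Type*} [Fintype A] {p : A → ℝ} {L : ℕ}

lemma sum_piWeight_mul_average (hp : IsPMF p) (hL : 0 < L) (f : A → ℝ) :
    ∑ s : Fin L → A, piWeight (fun _ => p) s * ((L : ℝ)⁻¹ * ∑ l, f (s l)) = ∑ a, p a * f a := by
  simp_rw [mul_left_comm _ (L : ℝ)⁻¹, mul_sum]
  rw [sum_comm]
  simp_rw [← mul_sum, sum_piWeight_mul_apply (fun _ => hp) _ f]
  simp [hL.ne']

lemma sum_piWeight_mul_abs_average_sub_le (hp : IsPMF p) (hL : 0 < L) (f : A → ℝ) :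
    ∑ s : Fin L → A, piWeight (fun _ => p) s * |(L : ℝ)⁻¹ * ∑ l, f (s l) - ∑ a, p a * f a|
      ≤ √((∑ a, p a * f a ^ 2) / L) := by
  have hL' : (0 : ℝ) < L := by exact_mod_cast hL
  have hcentre (s : Fin L → A) : (L : ℝ)⁻¹ * ∑ l, f (s l) - ∑ a, p a * f a
      = (L : ℝ)⁻¹ * ∑ l, (f (s l) - ∑ a, p a * f a) := by
    simp [mul_sub, hL'.ne']
  refine Real.le_sqrt_of_sq_le (((isPMF_piWeight fun _ => hp).sq_sum_mul_abs_le _).trans ?_)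
  calc ∑ s : Fin L → A, piWeight (fun _ => p) s *
        ((L : ℝ)⁻¹ * ∑ l, f (s l) - ∑ a, p a * f a) ^ 2
      = (L : ℝ)⁻¹ ^ 2 * ∑ s : Fin L → A, piWeight (fun _ => p) s *
          (∑ l, (f (s l) - ∑ a, p a * f a)) ^ 2 := by
        simp_rw [hcentre, mul_pow, mul_sum]
        exact sum_congr rfl fun s _ => by ring
    _ = (L : ℝ)⁻¹ ^ 2 * (L * ∑ a, p a * (f a - ∑ b, p b * f b) ^ 2) := by
        rw [sum_piWeight_mul_sum_sq (fun _ => hp) (fun _ a => f a - ∑ b, p b * f b) fun _ =>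
          hp.sum_mul_sub_mean f]
        simp
    _ = (∑ a, p a * (f a - ∑ b, p b * f b) ^ 2) / L := by field_simp
    _ ≤ (∑ a, p a * f a ^ 2) / L := by
        gcongr ?_ / _
        exact hp.sum_mul_sub_mean_sq_le f

/- Only the second moment of the part `f` enters: the part `g`, which may be unbounded, is
controlled by its mean. -/
lemma sum_piWeight_mul_abs_average_add_sub_le (hp : IsPMF p) (hL : 0 < L) (f : A → ℝ)
    {g : A → ℝ} (hg : ∀ a, 0 ≤ g a) :
    ∑ s : Fin L → A, piWeight (fun _ => p) s *
        |(L : ℝ)⁻¹ * ∑ l, (f (s l) + g (s l)) - ∑ a, p a * (f a + g a)|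
      ≤ √((∑ a, p a * f a ^ 2) / L) + 2 * ∑ a, p a * g a := by
  have hpL : IsPMF (piWeight fun _ : Fin L => p) := isPMF_piWeight fun _ => hp
  have hg0 : 0 ≤ ∑ a, p a * g a := sum_nonneg fun a _ => mul_nonneg (hp.1 a) (hg a)
  have htri (s : Fin L → A) :
      |(L : ℝ)⁻¹ * ∑ l, (f (s l) + g (s l)) - ∑ a, p a * (f a + g a)|
        ≤ |(L : ℝ)⁻¹ * ∑ l, f (s l) - ∑ a, p a * f a|
          + ((L : ℝ)⁻¹ * ∑ l, g (s l) + ∑ a, p a * g a) := by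
    have hs : 0 ≤ (L : ℝ)⁻¹ * ∑ l, g (s l) :=
      mul_nonneg (by positivity) (sum_nonneg fun l _ => hg (s l))
    simp_rw [mul_add, sum_add_distrib, mul_add, add_sub_add_comm]
    refine (abs_add_le _ _).trans (add_le_add_right ?_ _)
    exact (abs_sub _ _).trans_eq (by rw [abs_of_nonneg hs, abs_of_nonneg hg0])
  calc _ ≤ ∑ s : Fin L → A, piWeight (fun _ => p) s *
          (|(L : ℝ)⁻¹ * ∑ l, f (s l) - ∑ a, p a * f a|
            + ((L : ℝ)⁻¹ * ∑ l, g (s l) + ∑ a, p a * g a)) :=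
        sum_le_sum fun s _ => mul_le_mul_of_nonneg_left (htri s) (hpL.1 s)
    _ = ∑ s : Fin L → A, piWeight (fun _ => p) s *
          |(L : ℝ)⁻¹ * ∑ l, f (s l) - ∑ a, p a * f a| + 2 * ∑ a, p a * g a := by
        simp_rw [mul_add, sum_add_distrib, sum_piWeight_mul_average hp hL, hpL.sum_mul_const]
        ring
    _ ≤ _ := by
        gcongr
        exact sum_piWeight_mul_abs_average_sub_le hp hL f

end Averages

/-! ### Output laws and information density -/

section OutputDistribution

variable {X Y : Type*}

lemma IsChannel.isPMF [Fintype Y] {W : X → Y → ℝ} (hW : IsChannel W) (x : X) : IsPMF (W x) :=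
  ⟨hW.1 x, hW.2 x⟩

lemma isChannel_wn [Fintype Y] {W : X → Y → ℝ} (hW : IsChannel W) (n : ℕ) :
    IsChannel (Wn W n) :=
  ⟨fun x => (isPMF_piWeight fun i => hW.isPMF (x i)).1,
    fun x => (isPMF_piWeight fun i => hW.isPMF (x i)).2⟩

variable [Fintype X]

/-- The output distribution `P W` of the channel `W` under the input distribution `P`. -/
def outDist (P : X → ℝ) (W : X → Y → ℝ) (y : Y) : ℝ :=
  ∑ x, P x * W x y

lemma sum_mul_sum_eq_sum_outDist (P : X → ℝ) (W : X → Y → ℝ) (D : Finset Y) :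
    ∑ x, P x * ∑ y ∈ D, W x y = ∑ y ∈ D, outDist P W y := by
  simp_rw [mul_sum]
  exact sum_comm

variable [Fintype Y] {P : X → ℝ} {W : X → Y → ℝ}

lemma isPMF_outDist (hP : IsPMF P) (hW : IsChannel W) : IsPMF (outDist P W) :=
  ⟨fun y => sum_nonneg fun x _ => mul_nonneg (hP.1 x) (hW.1 x y), by
    simp_rw [← sum_mul_sum_eq_sum_outDist, hW.2, mul_one, hP.2]⟩

lemma sum_mul_truncation_sq_le (hP : IsPMF P) (hW : IsChannel W) {κ : ℝ} (hκ : 0 ≤ κ) (y : Y) :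
    ∑ x, P x * (if κ * outDist P W y < W x y then 0 else W x y) ^ 2 ≤ κ * outDist P W y ^ 2 := by
  have hsq (x : X) : (if κ * outDist P W y < W x y then 0 else W x y) ^ 2
      ≤ κ * outDist P W y * W x y := by
    split_ifs with hx
    · simpa using mul_nonneg (mul_nonneg hκ ((isPMF_outDist hP hW).1 y)) (hW.1 x y)
    · exact (sq _).trans_le (mul_le_mul_of_nonneg_right (not_lt.1 hx) (hW.1 x y))
  calc _ ≤ ∑ x, P x * (κ * outDist P W y * W x y) :=
        sum_le_sum fun x _ => mul_le_mul_of_nonneg_left (hsq x) (hP.1 x)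
    _ = κ * outDist P W y * outDist P W y := by
        simp_rw [mul_left_comm (P _), ← mul_sum]; rfl
    _ = κ * outDist P W y ^ 2 := by ring

/- Soft covering by random coding: after truncation at likelihood ratio `κ`, each output letter
has second moment at most `κ (P W)²`. -/
lemma exists_list_sum_abs_average_sub_outDist_le (hP : IsPMF P) (hW : IsChannel W) {κ ε : ℝ}
    (hκ : 0 ≤ κ) (hε : ∑ x, P x * ∑ y with κ * outDist P W y < W x y, W x y ≤ ε)
    {L : ℕ} (hL : 0 < L) :
    ∃ s : Fin L → X,
      ∑ y, |(L : ℝ)⁻¹ * ∑ l, W (s l) y - outDist P W y| ≤ √(κ / L) + 2 * ε := by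
  have hout := isPMF_outDist hP hW
  let low (x : X) (y : Y) : ℝ := if κ * outDist P W y < W x y then 0 else W x y
  let high (x : X) (y : Y) : ℝ := if κ * outDist P W y < W x y then W x y else 0
  have hsplit (x : X) (y : Y) : low x y + high x y = W x y := by
    dsimp only [low, high]; split_ifs <;> simp
  have hhigh (x : X) (y : Y) : 0 ≤ high x y := by
    dsimp only [high]; split_ifs; exacts [hW.1 x y, le_rfl]
  refine (isPMF_piWeight fun _ : Fin L => hP).exists_le ?_
  simp_rw [mul_sum (s := (univ : Finset Y))]
  rw [sum_comm]
  calc _ ≤ ∑ y, (√(κ / L) * outDist P W y + 2 * ∑ x, P x * high x y) := by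
        refine sum_le_sum fun y _ => ?_
        have h := sum_piWeight_mul_abs_average_add_sub_le hP hL (low · y) (hhigh · y)
        simp_rw [hsplit] at h
        refine h.trans (add_le_add_left ?_ _)
        rw [← Real.sqrt_sq (hout.1 y), ← Real.sqrt_mul (by positivity), div_mul_eq_mul_div]
        gcongr
        exact sum_mul_truncation_sq_le hP hW hκ y
    _ = √(κ / L) + 2 * ∑ x, P x * ∑ y with κ * outDist P W y < W x y, W x y := by
        rw [sum_add_distrib, ← mul_sum, hout.2, mul_one, ← mul_sum, sum_comm]
        simp_rw [← mul_sum, high, ← sum_filter]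
    _ ≤ _ := by gcongr

end OutputDistribution

section InformationDensity

variable {X Y : Type*} [Fintype X]

/-- The information density `log (W(y|x) / PW(y))` of `P` and `W`, set to `0` off the support of
the joint law. -/
def infoDensity (P : X → ℝ) (W : X → Y → ℝ) (x : X) (y : Y) : ℝ :=
  if P x * W x y = 0 then 0 else Real.log (W x y / outDist P W y)

variable [Fintype Y] {P : X → ℝ} {W : X → Y → ℝ}

lemma mul_le_outDist (hP : IsPMF P) (hW : IsChannel W) (x : X) (y : Y) :
    P x * W x y ≤ outDist P W y :=
  single_le_sum (f := fun x => P x * W x y) (fun x _ => mul_nonneg (hP.1 x) (hW.1 x y))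
    (mem_univ x)

lemma outDist_pos (hP : IsPMF P) (hW : IsChannel W) {x : X} {y : Y} (h : P x * W x y ≠ 0) :
    0 < outDist P W y :=
  ((mul_nonneg (hP.1 x) (hW.1 x y)).lt_of_ne' h).trans_le (mul_le_outDist hP hW x y)

lemma prod_outDist_nonneg (hP : IsPMF P) (hW : IsChannel W) {n : ℕ} (y : Fin n → Y) :
    0 ≤ ∏ i, outDist P W (y i) :=
  prod_nonneg fun _ _ => (isPMF_outDist hP hW).1 _

lemma mutInf_eq_sum_infoDensity (P : X → ℝ) (W : X → Y → ℝ) :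
    mutInf P W = ∑ x, P x * ∑ y, W x y * infoDensity P W x y := by
  simp_rw [mutInf, infoDensity, outDist, mul_sum, ← mul_assoc, mul_ite, mul_zero]

lemma mutInf_eq_sum_negMulLog (hP : IsPMF P) (hW : IsChannel W) :
    mutInf P W = ∑ y, Real.negMulLog (outDist P W y) - ∑ x, ∑ y, P x * Real.negMulLog (W x y) := by
  have hout (y : Y) : Real.negMulLog (outDist P W y)
      = ∑ x, -(P x * W x y * Real.log (outDist P W y)) := by
    rw [Real.negMulLog, sum_neg_distrib, ← sum_mul, outDist, neg_mul]
  simp_rw [hout]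
  rw [sum_comm, ← sum_sub_distrib, mutInf]
  refine sum_congr rfl fun x _ => ?_
  rw [← sum_sub_distrib]
  refine sum_congr rfl fun y _ => ?_
  split_ifs with h
  · rcases mul_eq_zero.1 h with h | h <;> simp [h]
  · rw [← outDist, Real.log_div (right_ne_zero_of_mul h) (outDist_pos hP hW h).ne', Real.negMulLog]
    ring

lemma continuousOn_mutInf (hW : IsChannel W) :
    ContinuousOn (fun P => mutInf P W) {P : X → ℝ | IsPMF P} := by
  refine ContinuousOn.congr ?_ fun P hP => mutInf_eq_sum_negMulLog hP hW
  unfold outDist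
  fun_prop

lemma mutInf_nonneg (hP : IsPMF P) (hW : IsChannel W) : 0 ≤ mutInf P W := by
  have hlog (x : X) (y : Y) : P x * W x y - P x * outDist P W y
      ≤ P x * (W x y * infoDensity P W x y) := by
    have h0 := mul_nonneg (hP.1 x) ((isPMF_outDist hP hW).1 y)
    rw [infoDensity]
    split_ifs with h
    · simpa [h] using h0
    · have hout := outDist_pos hP hW h
      have hWxy : 0 < W x y := (hW.1 x y).lt_of_ne' (right_ne_zero_of_mul h)
      have hle := mul_le_mul_of_nonneg_left (Real.one_sub_inv_le_log_of_pos (div_pos hWxy hout))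
        (mul_nonneg (hP.1 x) hWxy.le)
      rw [← mul_assoc]
      refine le_trans (le_of_eq ?_) hle
      field_simp
  calc (0 : ℝ) = ∑ x, ∑ y, (P x * W x y - P x * outDist P W y) := by
        simp_rw [sum_sub_distrib, ← mul_sum, hW.2, (isPMF_outDist hP hW).2, sub_self]
    _ ≤ mutInf P W := by
        simp_rw [mutInf_eq_sum_infoDensity, mul_sum]
        exact sum_le_sum fun x _ => sum_le_sum fun y _ => hlog x y

lemma mul_log_sq_le {t : ℝ} (h0 : 0 ≤ t) (h1 : t ≤ 1) : t * Real.log t ^ 2 ≤ 4 := by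
  rcases h0.eq_or_lt with rfl | h0
  · simp
  have h := Real.abs_log_mul_self_rpow_lt t (1 / 2) h0 h1 (by norm_num)
  rw [← Real.sqrt_eq_rpow] at h
  have hsq : (Real.log t * √t) ^ 2 ≤ 2 ^ 2 := by
    rw [← sq_abs]
    exact pow_le_pow_left₀ (abs_nonneg _) (by linarith) 2
  rw [mul_pow, Real.sq_sqrt h0.le] at hsq
  linarith

lemma mul_infoDensity_sq_le (hP : IsPMF P) (hW : IsChannel W) (x : X) (y : Y) :
    P x * W x y * infoDensity P W x y ^ 2 ≤ 16 := by
  rw [infoDensity]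
  split_ifs with h
  · norm_num
  have hout := outDist_pos hP hW h
  have hPW : 0 ≤ P x * W x y := mul_nonneg (hP.1 x) (hW.1 x y)
  have hlogW : P x * W x y * Real.log (W x y) ^ 2 ≤ 4 := by
    refine (mul_le_mul_of_nonneg_right ?_ (sq_nonneg _)).trans
      (mul_log_sq_le (hW.1 x y) ((hW.isPMF x).le_one y))
    exact mul_le_of_le_one_left (hW.1 x y) (hP.le_one x)
  have hlogOut : P x * W x y * Real.log (outDist P W y) ^ 2 ≤ 4 :=
    (mul_le_mul_of_nonneg_right (mul_le_outDist hP hW x y) (sq_nonneg _)).trans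
      (mul_log_sq_le hout.le ((isPMF_outDist hP hW).le_one y))
  rw [Real.log_div (right_ne_zero_of_mul h) hout.ne']
  nlinarith [mul_nonneg hPW (sq_nonneg (Real.log (W x y) + Real.log (outDist P W y)))]

lemma sum_mul_infoDensity_sq_le (hP : IsPMF P) (hW : IsChannel W) :
    ∑ x, P x * ∑ y, W x y * infoDensity P W x y ^ 2
      ≤ 16 * (Fintype.card X * Fintype.card Y) := by
  simp_rw [mul_sum, ← mul_assoc]
  calc _ ≤ ∑ _x : X, ∑ _y : Y, (16 : ℝ) :=
        sum_le_sum fun x _ => sum_le_sum fun y _ => mul_infoDensity_sq_le hP hW x y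
    _ = _ := by
        simp only [sum_const, card_univ, nsmul_eq_mul]
        ring

lemma wn_eq_exp_sum_infoDensity (hP : IsPMF P) (hW : IsChannel W) {n : ℕ} {x : Fin n → X}
    {y : Fin n → Y} (h : ∀ i, P (x i) * W (x i) (y i) ≠ 0) :
    Wn W n x y = Real.exp (∑ i, infoDensity P W (x i) (y i)) * ∏ i, outDist P W (y i) := by
  rw [Real.exp_sum, ← prod_mul_distrib]
  refine prod_congr rfl fun i _ => ?_
  have hout := outDist_pos hP hW (h i)
  have hWxy : 0 < W (x i) (y i) := (hW.1 _ _).lt_of_ne' (right_ne_zero_of_mul (h i))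
  rw [infoDensity, if_neg (h i), Real.exp_log (div_pos hWxy hout), div_mul_cancel₀ _ hout.ne']

lemma exp_mul_prod_outDist_lt_wn_iff (hP : IsPMF P) (hW : IsChannel W) {n : ℕ} {x : Fin n → X}
    {y : Fin n → Y} (h : ∀ i, P (x i) * W (x i) (y i) ≠ 0) (c : ℝ) :
    Real.exp c * ∏ i, outDist P W (y i) < Wn W n x y ↔ c < ∑ i, infoDensity P W (x i) (y i) := by
  rw [wn_eq_exp_sum_infoDensity hP hW h,
    mul_lt_mul_iff_left₀ (prod_pos fun i _ => outDist_pos hP hW (h i)), Real.exp_lt_exp]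

lemma wn_lt_exp_mul_prod_outDist_iff (hP : IsPMF P) (hW : IsChannel W) {n : ℕ} {x : Fin n → X}
    {y : Fin n → Y} (h : ∀ i, P (x i) * W (x i) (y i) ≠ 0) (c : ℝ) :
    Wn W n x y < Real.exp c * ∏ i, outDist P W (y i) ↔ ∑ i, infoDensity P W (x i) (y i) < c := by
  rw [wn_eq_exp_sum_infoDensity hP hW h,
    mul_lt_mul_iff_left₀ (prod_pos fun i _ => outDist_pos hP hW (h i)), Real.exp_lt_exp]

end InformationDensity

section Types

variable {X : Type*} {n : ℕ}

/-- The empirical distribution (type) of a word. -/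
def empDist (x : Fin n → X) (a : X) : ℝ :=
  (#{i | x i = a} : ℝ) / n

lemma empDist_apply_pos (x : Fin n → X) (i : Fin n) : 0 < empDist x (x i) := by
  have hn : 0 < n := i.pos
  have hcard : 0 < #{j | x j = x i} := card_pos.2 ⟨i, by simp⟩
  unfold empDist
  positivity

variable [Fintype X]

lemma sum_apply_eq_mul_sum_empDist (x : Fin n → X) (f : X → ℝ) :
    ∑ i, f (x i) = n * ∑ a, empDist x a * f a := by
  rcases n.eq_zero_or_pos with rfl | hn
  · simp
  rw [← sum_fiberwise' univ x f, mul_sum]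
  simp_rw [sum_const, nsmul_eq_mul, empDist]
  exact sum_congr rfl fun a _ => by field_simp

lemma isPMF_empDist (hn : 0 < n) (x : Fin n → X) : IsPMF (empDist x) := by
  have hn' : (n : ℝ) ≠ 0 := by exact_mod_cast hn.ne'
  refine ⟨fun a => by unfold empDist; positivity, mul_left_cancel₀ hn' ?_⟩
  simpa using (sum_apply_eq_mul_sum_empDist x fun _ => 1).symm

lemma card_image_empDist_le (n : ℕ) :
    #(univ.image (empDist : (Fin n → X) → X → ℝ)) ≤ (n + 1) ^ Fintype.card X := by
  have hsub : univ.image (empDist : (Fin n → X) → X → ℝ)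
      ⊆ univ.image fun (c : X → Fin (n + 1)) (a : X) => ((c a : ℕ) : ℝ) / n := by
    refine image_subset_iff.2 fun x _ =>
      mem_image.2 ⟨fun a => ⟨#{i | x i = a}, ?_⟩, mem_univ _, rfl⟩
    exact Nat.lt_succ_of_le ((card_le_univ _).trans_eq (Fintype.card_fin n))
  exact (card_le_card hsub).trans (card_image_le.trans (by simp))

end Types

section Tails

variable {X Y : Type*} [Fintype X] [Fintype Y] {P : X → ℝ} {W : X → Y → ℝ} {n : ℕ} {δ : ℝ}

/- Given an input word, the normalised information density with respect to the type of that word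
rarely exceeds its mean, which is the mutual information. -/
lemma sum_wn_upper_tail_le (hW : IsChannel W) (hn : 0 < n) (x : Fin n → X) (hδ : 0 < δ) :
    ∑ y with Real.exp (n * (mutInf (empDist x) W + δ)) * ∏ i, outDist (empDist x) W (y i)
        < Wn W n x y, Wn W n x y
      ≤ 16 * (Fintype.card X * Fintype.card Y) / (n * δ ^ 2) := by
  have hn' : (0 : ℝ) < n := by exact_mod_cast hn
  have hP : IsPMF (empDist x) := isPMF_empDist hn x
  have hmean : ∑ i, ∑ y, W (x i) y * infoDensity (empDist x) W (x i) y
      = n * mutInf (empDist x) W := by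
    rw [mutInf_eq_sum_infoDensity]
    exact sum_apply_eq_mul_sum_empDist x fun a => ∑ y, W a y * infoDensity (empDist x) W a y
  have hsecond : ∑ i, ∑ y, W (x i) y * infoDensity (empDist x) W (x i) y ^ 2
      ≤ n * (16 * (Fintype.card X * Fintype.card Y)) := by
    rw [sum_apply_eq_mul_sum_empDist x fun a => ∑ y, W a y * infoDensity (empDist x) W a y ^ 2]
    exact mul_le_mul_of_nonneg_left (sum_mul_infoDensity_sq_le hP hW) hn'.le
  have hsub (y : Fin n → Y)
      (hy : Real.exp (n * (mutInf (empDist x) W + δ)) * ∏ i, outDist (empDist x) W (y i)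
        < Wn W n x y) :
      n * δ ≤ |∑ i, infoDensity (empDist x) W (x i) (y i) - n * mutInf (empDist x) W| := by
    have hpos : 0 < Wn W n x y :=
      (mul_nonneg (Real.exp_nonneg _) (prod_outDist_nonneg hP hW y)).trans_lt hy
    have hne (i : Fin n) : empDist x (x i) * W (x i) (y i) ≠ 0 :=
      mul_ne_zero (empDist_apply_pos x i).ne' (prod_ne_zero_iff.1 hpos.ne' i (mem_univ i))
    have hlt := (exp_mul_prod_outDist_lt_wn_iff hP hW hne _).1 hy
    exact le_trans (by linarith) (le_abs_self _)
  calc _ ≤ ∑ y with n * δ ≤ |∑ i, infoDensity (empDist x) W (x i) (y i)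
            - n * mutInf (empDist x) W|, piWeight (fun i => W (x i)) y :=
        sum_le_sum_of_subset_of_nonneg (monotone_filter_right _ fun y _ => hsub y) fun y _ _ =>
          (isChannel_wn hW n).1 x y
    _ ≤ (n * (16 * (Fintype.card X * Fintype.card Y))) / (n * δ) ^ 2 := by
        rw [← hmean]
        refine (sum_piWeight_le_abs_sub_mean_le (fun i => hW.isPMF (x i))
          (fun i => infoDensity (empDist x) W (x i)) (by positivity)).trans ?_
        gcongr
    _ = _ := by field_simp

/-- The joint law of input and output letters. -/
def jointDist (P : X → ℝ) (W : X → Y → ℝ) (a : X × Y) : ℝ :=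
  P a.1 * W a.1 a.2

lemma sum_jointDist_mul (P : X → ℝ) (W : X → Y → ℝ) (f : X → Y → ℝ) :
    ∑ a, jointDist P W a * f a.1 a.2 = ∑ x, P x * ∑ y, W x y * f x y := by
  simp_rw [Fintype.sum_prod_type, jointDist, mul_sum, mul_assoc]

lemma isPMF_jointDist (hP : IsPMF P) (hW : IsChannel W) : IsPMF (jointDist P W) :=
  ⟨fun _ => mul_nonneg (hP.1 _) (hW.1 _ _), by
    simpa [hW.2, hP.2] using sum_jointDist_mul P W fun _ _ => 1⟩

lemma sum_piWeight_jointDist_mul (P : X → ℝ) (W : X → Y → ℝ) (F : (Fin n → X × Y) → ℝ) :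
    ∑ ω, piWeight (fun _ => jointDist P W) ω * F ω
      = ∑ x, piWeight (fun _ => P) x * ∑ y, Wn W n x y * F fun i => (x i, y i) := by
  rw [← (Equiv.arrowProdEquivProdArrow (Fin n) (fun _ => X) fun _ => Y).symm.sum_comp,
    Fintype.sum_prod_type]
  simp_rw [mul_sum, ← mul_assoc, piWeight, Wn, ← prod_mul_distrib]
  rfl

lemma sum_piWeight_jointDist_far_le (hP : IsPMF P) (hW : IsChannel W) (hn : 0 < n) (hδ : 0 < δ) :
    ∑ ω : Fin n → X × Y with
        n * δ ≤ |∑ i, infoDensity P W (ω i).1 (ω i).2 - n * mutInf P W|,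
      piWeight (fun _ => jointDist P W) ω
        ≤ 16 * (Fintype.card X * Fintype.card Y) / (n * δ ^ 2) := by
  have : (0 : ℝ) < n := by exact_mod_cast hn
  have h := sum_piWeight_le_abs_sub_mean_le (ι := Fin n) (fun _ => isPMF_jointDist hP hW)
    (fun _ a => infoDensity P W a.1 a.2) (t := n * δ) (by positivity)
  simp_rw [sum_jointDist_mul P W (infoDensity P W), ← mutInf_eq_sum_infoDensity,
    sum_jointDist_mul P W fun x y => infoDensity P W x y ^ 2, sum_const, card_univ,
    Fintype.card_fin, nsmul_eq_mul] at h
  calc _ ≤ _ := h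
    _ ≤ n * (16 * (Fintype.card X * Fintype.card Y)) / (n * δ) ^ 2 := by
        gcongr
        exact sum_mul_infoDensity_sq_le hP hW
    _ = _ := by field_simp

lemma sum_piWeight_mul_sum_wn_lower_tail_le (hP : IsPMF P) (hW : IsChannel W) (hn : 0 < n)
    (hδ : 0 < δ) :
    ∑ x : Fin n → X, piWeight (fun _ => P) x *
        ∑ y with Wn W n x y < Real.exp (n * (mutInf P W - δ)) * ∏ i, outDist P W (y i), Wn W n x y
      ≤ 16 * (Fintype.card X * Fintype.card Y) / (n * δ ^ 2) := by
  let far (ω : Fin n → X × Y) : Prop :=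
    n * δ ≤ |∑ i, infoDensity P W (ω i).1 (ω i).2 - n * mutInf P W|
  have hsub (x : Fin n → X) (y : Fin n → Y) (hx : piWeight (fun _ => P) x ≠ 0)
      (hy : Wn W n x y ≠ 0)
      (hlt : Wn W n x y < Real.exp (n * (mutInf P W - δ)) * ∏ i, outDist P W (y i)) :
      far fun i => (x i, y i) := by
    have hne (i : Fin n) : P (x i) * W (x i) (y i) ≠ 0 :=
      mul_ne_zero (prod_ne_zero_iff.1 hx i (mem_univ i)) (prod_ne_zero_iff.1 hy i (mem_univ i))
    have hlt' := (wn_lt_exp_mul_prod_outDist_iff hP hW hne _).1 hlt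
    exact le_trans (by linarith) (neg_le_abs _)
  calc _ ≤ ∑ x, piWeight (fun _ => P) x *
          ∑ y, Wn W n x y * if far fun i => (x i, y i) then 1 else 0 := by
        simp_rw [mul_sum, sum_filter, mul_ite, mul_one, mul_zero]
        refine sum_le_sum fun x _ => sum_le_sum fun y _ => ?_
        have h0 : 0 ≤ piWeight (fun _ => P) x * Wn W n x y :=
          mul_nonneg ((isPMF_piWeight fun _ => hP).1 x) ((isChannel_wn hW n).1 x y)
        split_ifs with hlt hfar hfar
        · exact le_rfl
        · exact (by_contra fun hne =>
            hfar (hsub x y (left_ne_zero_of_mul hne) (right_ne_zero_of_mul hne) hlt) :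
              piWeight (fun _ => P) x * Wn W n x y = 0).le
        · exact h0
        · exact le_rfl
    _ = ∑ ω with far ω, piWeight (fun _ => jointDist P W) ω := by
        rw [← sum_piWeight_jointDist_mul P W fun ω => if far ω then 1 else 0, sum_filter]
        simp_rw [mul_ite, mul_one, mul_zero]
    _ ≤ _ := sum_piWeight_jointDist_far_le hP hW hn hδ

end Tails

/-! ### Converse -/

section Approximation

variable {A Y : Type*} [Fintype Y]

lemma sum_filter_le_add {f : Y → ℝ} (hf : ∀ y, 0 ≤ f y) {p q r : Y → Prop}
    (h : ∀ y, p y → q y ∨ r y) :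
    ∑ y with p y, f y ≤ ∑ y with q y, f y + ∑ y with r y, f y := by
  simp_rw [sum_filter, ← sum_add_distrib]
  refine sum_le_sum fun y _ => ?_
  have := hf y
  have := h y
  split_ifs <;> first | linarith | tauto

lemma sum_filter_lt_mul_le {p q : Y → ℝ} (hq : ∀ y, 0 ≤ q y) {c : ℝ} (hc : 0 ≤ c) :
    ∑ y with p y < c * q y, p y ≤ c * ∑ y, q y := by
  rw [mul_sum]
  exact (sum_le_sum fun y hy => (mem_filter.1 hy).2.le).trans
    (sum_le_sum_of_subset_of_nonneg (filter_subset _ _) fun y _ _ => mul_nonneg hc (hq y))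

/- A set that accepts `p` and rejects `q` separates them by more than two approximations by a
common `c` allow. -/
lemma IsPMF.one_le_sum_compl_add_sum_add_variation [DecidableEq Y] {p : Y → ℝ} (hp : IsPMF p)
    (q c : Y → ℝ) (D : Finset Y) :
    1 ≤ ∑ y ∈ Dᶜ, p y + ∑ y ∈ D, q y + (∑ y, |c y - p y| + ∑ y, |c y - q y|) := by
  have hsep : ∑ y ∈ D, p y - ∑ y ∈ D, q y ≤ ∑ y, |c y - p y| + ∑ y, |c y - q y| := by
    rw [← sum_sub_distrib, ← sum_add_distrib]
    refine (sum_le_sum fun y _ => ?_).trans (sum_le_sum_of_subset_of_nonneg (subset_univ D)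
      fun y _ _ => add_nonneg (abs_nonneg (c y - p y)) (abs_nonneg (c y - q y)))
    linarith [neg_abs_le (c y - p y), le_abs_self (c y - q y)]
  linarith [sum_add_sum_compl D p, hp.2]

/-- The law `Q` conditioned on the event `B`. -/
def condWeight (Q : A → ℝ) (B : Finset A) (a : A) : ℝ :=
  if a ∈ B then Q a / ∑ b ∈ B, Q b else 0

variable [Fintype A] {Q : A → ℝ} {B : Finset A}

lemma isPMF_condWeight (hQ : ∀ a, 0 ≤ Q a) (hB : 0 < ∑ b ∈ B, Q b) : IsPMF (condWeight Q B) := by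
  refine ⟨fun a => ?_, ?_⟩
  · rw [condWeight]
    split_ifs
    exacts [div_nonneg (hQ a) hB.le, le_rfl]
  · simp_rw [condWeight, sum_ite_mem, univ_inter, ← sum_div, div_self hB.ne']

lemma sum_condWeight_mul_le (hQ : ∀ a, 0 ≤ Q a) {c : ℝ} (hc : 0 < c) (hB : c ≤ ∑ b ∈ B, Q b)
    {g : A → ℝ} (hg : ∀ a, 0 ≤ g a) :
    ∑ a, condWeight Q B a * g a ≤ c⁻¹ * ∑ a, Q a * g a := by
  rw [mul_sum]
  refine sum_le_sum fun a _ => ?_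
  rw [← mul_assoc, inv_mul_eq_div, condWeight]
  refine mul_le_mul_of_nonneg_right ?_ (hg a)
  split_ifs
  · exact div_le_div_of_nonneg_left (hQ a) hc hB
  · exact div_nonneg (hQ a) hc.le

/- Lists reproducing the output laws of two messages up to `η` must differ, since otherwise the
decision set of the first message would not tell the messages apart. -/
lemma card_le_card_pow_of_approximation [DecidableEq Y] {M : Type*} [Fintype M]
    {V : A → Y → ℝ} (hV : IsChannel V) {L : ℕ} {η : ℝ}
    (happrox : ∀ P, IsPMF P → (∀ a ∉ B, P a = 0) →
      ∃ s : Fin L → A, ∑ y, |(L : ℝ)⁻¹ * ∑ l, V (s l) y - outDist P V y| ≤ η)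
    {Q : M → A → ℝ} (hQ : ∀ m, IsPMF (Q m)) {D : M → Finset Y} {lam c : ℝ}
    (hmiss : ∀ m, ∑ a, Q m a * ∑ y ∈ (D m)ᶜ, V a y ≤ lam)
    (hfalse : ∀ m m', m ≠ m' → ∑ a, Q m a * ∑ y ∈ D m', V a y ≤ lam)
    (hc : 0 < c) (hlt : 2 * (c⁻¹ * lam + η) < 1) :
    #{m | c ≤ ∑ a ∈ B, Q m a} ≤ Fintype.card A ^ L := by
  have hcond (m : {m | c ≤ ∑ a ∈ B, Q m a}) : IsPMF (condWeight (Q m) B) :=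
    isPMF_condWeight (hQ m).1 (hc.trans_le m.2)
  choose s hs using fun m => happrox _ (hcond m) fun a ha => by rw [condWeight, if_neg ha]
  have herr (m : {m | c ≤ ∑ a ∈ B, Q m a}) {E : Finset Y}
      (hE : ∑ a, Q m a * ∑ y ∈ E, V a y ≤ lam) :
      ∑ y ∈ E, outDist (condWeight (Q m) B) V y ≤ c⁻¹ * lam := by
    rw [← sum_mul_sum_eq_sum_outDist]
    refine (sum_condWeight_mul_le (hQ m).1 hc m.2 fun a => sum_nonneg fun y _ =>
      hV.1 a y).trans ?_
    gcongr
  have hinj : Function.Injective s := fun m m' h => by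
    by_contra hne
    have hsep := (isPMF_outDist (hcond m) hV).one_le_sum_compl_add_sum_add_variation
      (outDist (condWeight (Q m') B) V) (fun y => (L : ℝ)⁻¹ * ∑ l, V (s m l) y) (D m)
    have hm' := hs m'
    rw [← h] at hm'
    linarith [hs m, herr m (hmiss m), herr m' (hfalse m' m fun h => hne (Subtype.ext h.symm))]
  simpa [Fintype.card_subtype] using Fintype.card_le_of_injective s hinj

end Approximation

section SoftCovering

variable {X Y : Type*} [Fintype X] [Fintype Y] {W : X → Y → ℝ} {n : ℕ}

/-- The sum, over all types `P` of words of length `n`, of the laws `(PW)ⁿ`. -/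
def typeOutputSum (W : X → Y → ℝ) (n : ℕ) (y : Fin n → Y) : ℝ :=
  ∑ P ∈ univ.image (empDist : (Fin n → X) → X → ℝ), ∏ i, outDist P W (y i)

lemma isPMF_of_mem_image_empDist (hn : 0 < n) {P : X → ℝ}
    (hP : P ∈ univ.image (empDist : (Fin n → X) → X → ℝ)) : IsPMF P := by
  obtain ⟨x, -, rfl⟩ := mem_image.1 hP
  exact isPMF_empDist hn x

lemma typeOutputSum_nonneg (hW : IsChannel W) (hn : 0 < n) (y : Fin n → Y) :
    0 ≤ typeOutputSum W n y :=
  sum_nonneg fun _ hP => prod_outDist_nonneg (isPMF_of_mem_image_empDist hn hP) hW y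

lemma prod_outDist_empDist_le_typeOutputSum (hW : IsChannel W) (hn : 0 < n) (x : Fin n → X)
    (y : Fin n → Y) : ∏ i, outDist (empDist x) W (y i) ≤ typeOutputSum W n y :=
  single_le_sum (f := fun P => ∏ i, outDist P W (y i))
    (fun _ hP => prod_outDist_nonneg (isPMF_of_mem_image_empDist hn hP) hW y)
    (mem_image_of_mem _ (mem_univ x))

lemma sum_typeOutputSum_le (hW : IsChannel W) (hn : 0 < n) :
    ∑ y, typeOutputSum W n y ≤ (n + 1) ^ Fintype.card X := by
  have hmass (P : X → ℝ) (hP : P ∈ univ.image (empDist : (Fin n → X) → X → ℝ)) :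
      ∑ y : Fin n → Y, ∏ i, outDist P W (y i) = 1 :=
    (isPMF_piWeight fun _ : Fin n => isPMF_outDist (isPMF_of_mem_image_empDist hn hP) hW).2
  simp_rw [typeOutputSum]
  rw [sum_comm, sum_congr rfl hmass, sum_const, nsmul_one]
  exact_mod_cast card_image_empDist_le n

variable {r δ θ : ℝ} {Q : (Fin n → X) → ℝ}

lemma sum_mul_sum_high_likelihood_le (hW : IsChannel W) (hn : 0 < n) (hδ : 0 < δ) (hθ : 0 < θ)
    (hQ : IsPMF Q) (hsupp : ∀ x, Q x ≠ 0 → mutInf (empDist x) W ≤ r) :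
    ∑ x, Q x * ∑ y with (n + 1) ^ Fintype.card X * Real.exp (n * (r + δ)) / θ
        * outDist Q (Wn W n) y < Wn W n x y, Wn W n x y
      ≤ θ + 16 * (Fintype.card X * Fintype.card Y) / (n * δ ^ 2) := by
  have hWn := isChannel_wn hW n
  set T : ℝ := (n + 1) ^ Fintype.card X
  have hT0 : 0 < T := by positivity
  set E := Real.exp (n * (r + δ)) with hE
  let rare (y : Fin n → Y) : Prop := outDist Q (Wn W n) y < θ / T * typeOutputSum W n y
  let high (x : Fin n → X) (y : Fin n → Y) : Prop :=
    Real.exp (n * (mutInf (empDist x) W + δ)) * ∏ i, outDist (empDist x) W (y i) < Wn W n x y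
  have hrare : ∑ x, Q x * ∑ y with rare y, Wn W n x y ≤ θ := by
    rw [sum_mul_sum_eq_sum_outDist]
    calc _ ≤ θ / T * ∑ y, typeOutputSum W n y :=
          sum_filter_lt_mul_le (typeOutputSum_nonneg hW hn) (by positivity)
      _ ≤ θ / T * T := by gcongr; exact sum_typeOutputSum_le hW hn
      _ = θ := div_mul_cancel₀ θ hT0.ne'
  have hcases (x : Fin n → X) (hx : Q x ≠ 0) (y : Fin n → Y)
      (hy : T * E / θ * outDist Q (Wn W n) y < Wn W n x y) : rare y ∨ high x y := by
    by_contra! hcon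
    obtain ⟨hout, hWxy⟩ := And.imp not_lt.1 not_lt.1 hcon
    refine hy.not_ge ?_
    calc Wn W n x y ≤ E * typeOutputSum W n y := by
          refine hWxy.trans (mul_le_mul ?_ (prod_outDist_empDist_le_typeOutputSum hW hn x y)
            (prod_outDist_nonneg (isPMF_empDist hn x) hW y) (by positivity))
          rw [hE]
          gcongr
          exact hsupp x hx
      _ = T * E / θ * (θ / T * typeOutputSum W n y) := by field_simp
      _ ≤ _ := by gcongr
  calc _ ≤ ∑ x, Q x * (∑ y with rare y, Wn W n x y + ∑ y with high x y, Wn W n x y) := by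
        refine sum_le_sum fun x _ => ?_
        by_cases hx : Q x = 0
        · simp [hx]
        · exact mul_le_mul_of_nonneg_left (sum_filter_le_add (hWn.1 x) (hcases x hx)) (hQ.1 x)
    _ ≤ _ := by
        simp_rw [mul_add, sum_add_distrib]
        exact add_le_add hrare (hQ.sum_mul_le fun x => sum_wn_upper_tail_le hW hn x hδ)

lemma exists_list_sum_abs_average_wn_sub_le (hW : IsChannel W) (hn : 0 < n) (hδ : 0 < δ)
    (hθ : 0 < θ) (hQ : IsPMF Q) (hsupp : ∀ x, Q x ≠ 0 → mutInf (empDist x) W ≤ r) {L : ℕ}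
    (hL : 0 < L) :
    ∃ s : Fin L → Fin n → X,
      ∑ y, |(L : ℝ)⁻¹ * ∑ l, Wn W n (s l) y - outDist Q (Wn W n) y|
        ≤ √((n + 1) ^ Fintype.card X * Real.exp (n * (r + δ)) / θ / L)
          + 2 * (θ + 16 * (Fintype.card X * Fintype.card Y) / (n * δ ^ 2)) :=
  exists_list_sum_abs_average_sub_outDist_le hQ (isChannel_wn hW n) (by positivity)
    (sum_mul_sum_high_likelihood_le hW hn hδ hθ hQ hsupp) hL

end SoftCovering

section Rates

open Filter Topology

lemma tendsto_natCast_succ_pow_mul_exp_neg (d : ℕ) {c : ℝ} (hc : 0 < c) :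
    Tendsto (fun n : ℕ => ((n : ℝ) + 1) ^ d * Real.exp (-(n * c))) atTop (𝓝 0) := by
  have h := ((isLittleO_pow_exp_pos_mul_atTop (k := d) hc).tendsto_div_nhds_zero.comp
    (tendsto_atTop_add_const_right _ (1 : ℝ) tendsto_natCast_atTop_atTop)).mul_const (Real.exp c)
  rw [zero_mul] at h
  refine h.congr fun n => ?_
  rw [Function.comp_apply, div_mul_eq_mul_div, div_eq_iff (Real.exp_pos _).ne', mul_assoc,
    ← Real.exp_add]
  ring_nf

lemma tendsto_div_natCast_mul (C : ℝ) {a : ℝ} (ha : 0 < a) :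
    Tendsto (fun n : ℕ => C / (n * a)) atTop (𝓝 0) :=
  Tendsto.const_div_atTop (tendsto_natCast_atTop_atTop.atTop_mul_const ha) C

lemma eventually_covering_error_le (d : ℕ) (C r : ℝ) {δ θ η : ℝ} (hδ : 0 < δ) (hθ : 0 < θ)
    (hη : 2 * θ < η) :
    ∀ᶠ n : ℕ in atTop, ∀ L : ℕ, Real.exp (n * (r + 2 * δ)) ≤ L →
      √((n + 1) ^ d * Real.exp (n * (r + δ)) / θ / L) + 2 * (θ + C / (n * δ ^ 2)) ≤ η := by
  have hlim : Tendsto (fun n : ℕ =>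
      √((n + 1) ^ d * Real.exp (-(n * δ)) / θ) + 2 * (θ + C / (n * δ ^ 2))) atTop (𝓝 (2 * θ)) := by
    simpa using ((tendsto_natCast_succ_pow_mul_exp_neg d hδ).div_const θ).sqrt.add
      (((tendsto_div_natCast_mul C (pow_pos hδ 2)).const_add θ).const_mul 2)
  filter_upwards [hlim.eventually_le_const hη] with n hn L hL
  refine (add_le_add_left (Real.sqrt_le_sqrt ?_) _).trans hn
  have hexp : Real.exp (n * (r + δ)) = Real.exp (-(n * δ)) * Real.exp (n * (r + 2 * δ)) := by
    rw [← Real.exp_add]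
    ring_nf
  rw [div_le_iff₀ ((Real.exp_pos _).trans_le hL), hexp, ← mul_assoc, mul_div_right_comm]
  gcongr

lemma eventually_mul_card_pow_le (d : ℕ) {a c R : ℝ} (hR : 0 < R) (hc : c < R) :
    ∀ᶠ n : ℕ in atTop, ∀ L : ℕ, (L : ℝ) ≤ 2 * Real.exp (n * c) →
      a * ((d : ℝ) ^ n) ^ L ≤ Real.exp (Real.exp (n * R)) := by
  have hlim : Tendsto (fun n : ℕ => Real.log a * Real.exp (-(n * R))
      + (n + 1) * Real.exp (-(n * (R - c))) * (2 * Real.log d)) atTop (𝓝 0) := by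
    simpa using ((tendsto_natCast_succ_pow_mul_exp_neg 0 hR).const_mul (Real.log a)).add
      ((tendsto_natCast_succ_pow_mul_exp_neg 1 (sub_pos.2 hc)).mul_const (2 * Real.log d))
  filter_upwards [hlim.eventually_le_const one_pos] with n hn L hL
  have : 0 ≤ Real.log d := Real.log_natCast_nonneg d
  have hexponent : Real.log a + n * L * Real.log d ≤ Real.exp (n * R) := by
    calc Real.log a + n * L * Real.log d
        ≤ Real.log a + (n + 1) * (2 * Real.exp (n * c)) * Real.log d := by
          gcongr
          linarith
      _ = Real.exp (n * R) * (Real.log a * Real.exp (-(n * R))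
            + (n + 1) * Real.exp (-(n * (R - c))) * (2 * Real.log d)) := by
          have hexp : Real.exp (-(n * (R - c))) = Real.exp (-(n * R)) * Real.exp (n * c) := by
            rw [← Real.exp_add]
            ring_nf
          rw [hexp, Real.exp_neg]
          field_simp
      _ ≤ Real.exp (n * R) * 1 := by gcongr
      _ = Real.exp (n * R) := mul_one _
  calc a * ((d : ℝ) ^ n) ^ L
      ≤ Real.exp (Real.log a) * (Real.exp (Real.log d) ^ n) ^ L := by
        gcongr <;> exact Real.le_exp_log _
    _ = Real.exp (Real.log a + n * L * Real.log d) := by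
        rw [← Real.exp_nat_mul, ← Real.exp_nat_mul, ← Real.exp_add]
        ring_nf
    _ ≤ _ := Real.exp_le_exp.2 hexponent

lemma exp_exp_le_of_le_log_log {n k : ℕ} {R : ℝ} (hR : 0 < R)
    (h : R ≤ 1 / n * Real.log (Real.log k)) : Real.exp (Real.exp (n * R)) ≤ k := by
  have hn : (0 : ℝ) < n := by
    by_contra! hn
    rw [le_antisymm hn n.cast_nonneg, div_zero, zero_mul] at h
    exact h.not_gt hR
  rw [one_div, inv_mul_eq_div, le_div_iff₀ hn, mul_comm] at h
  have hloglog : 0 < Real.log (Real.log k) := (mul_pos hn hR).trans_le h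
  have hlog : 0 < Real.log k := (Real.log_natCast_nonneg k).lt_of_ne' fun h0 => by
    simp [h0] at hloglog
  have hk : (0 : ℝ) < k := k.cast_nonneg.lt_of_ne' fun h0 => by simp [h0] at hlog
  rwa [← Real.le_log_iff_exp_le hk, ← Real.le_log_iff_exp_le hlog]

end Rates

section Converse

open Filter

variable {X Y : Type*} [Fintype X] [Fintype Y] {W : X → Y → ℝ}

lemma average_le_add_of_card_le {k : ℕ} (hk : 0 < k) {f : Fin k → ℝ} (hf : ∀ m, f m ≤ 1) {c ε : ℝ}
    (hc : 0 ≤ c) (hcard : (#{m | c ≤ f m} : ℝ) ≤ ε * k) : (k : ℝ)⁻¹ * ∑ m, f m ≤ c + ε := by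
  have hk' : (0 : ℝ) < k := by exact_mod_cast hk
  have hpt (m : Fin k) : f m ≤ c + if c ≤ f m then 1 else 0 := by
    split_ifs with hm
    · linarith [hf m]
    · linarith
  rw [inv_mul_le_iff₀ hk']
  refine (sum_le_sum fun m _ => hpt m).trans ?_
  rw [sum_add_distrib, sum_boole, sum_const, card_univ, Fintype.card_fin, nsmul_eq_mul]
  linarith

/- Input laws concentrated on words of information at most `R - δ` are simulated by
`exp (n (R - δ / 2))` words, which leaves too few lists to serve a tenth of the messages. -/
lemma eventually_average_sum_low_information_le (hW : IsChannel W) {R δ : ℝ} (hR : 0 < R)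
    (hδ : 0 < δ) (hδR : δ ≤ R) :
    ∀ᶠ n : ℕ in atTop, ∀ (k : ℕ) (Q : Fin k → (Fin n → X) → ℝ) (D : Fin k → Finset (Fin n → Y)),
      (∀ m, IsPMF (Q m)) → IDCodeErr n W Q D (1 / 100) (1 / 100) →
      R ≤ 1 / n * Real.log (Real.log k) →
      (k : ℝ)⁻¹ * ∑ m, ∑ x with mutInf (empDist x) W ≤ R - δ, Q m x ≤ 1 / 5 := by
  filter_upwards [eventually_gt_atTop 0, eventually_covering_error_le (Fintype.card X)
      (16 * (Fintype.card X * Fintype.card Y)) (R - δ) (δ := δ / 4) (θ := 1 / 100) (η := 1 / 4)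
      (by positivity) (by norm_num) (by norm_num),
    eventually_mul_card_pow_le (Fintype.card X) (a := 10) (c := R - δ + 2 * (δ / 4)) hR
      (by linarith)] with n hn hcover hcount k Q D hQ hD hk
  have hkexp := exp_exp_le_of_le_log_log hR hk
  have hk0 : 0 < k := by exact_mod_cast (Real.exp_pos _).trans_le hkexp
  set E := Real.exp (n * (R - δ + 2 * (δ / 4)))
  have hE1 : 1 ≤ E := Real.one_le_exp (mul_nonneg n.cast_nonneg (by linarith))
  have hL0 : 0 < ⌈E⌉₊ := Nat.ceil_pos.2 (Real.exp_pos _)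
  have hL : (⌈E⌉₊ : ℝ) ≤ 2 * E := by linarith [Nat.ceil_lt_add_one (zero_le_one.trans hE1)]
  have happrox (P : (Fin n → X) → ℝ) (hP : IsPMF P)
      (hsupp : ∀ x ∉ ({x | mutInf (empDist x) W ≤ R - δ} : Finset (Fin n → X)), P x = 0) :
      ∃ s : Fin ⌈E⌉₊ → Fin n → X, ∑ y,
        |(⌈E⌉₊ : ℝ)⁻¹ * ∑ l, Wn W n (s l) y - outDist P (Wn W n) y| ≤ 1 / 4 := by
    obtain ⟨s, hs⟩ := exists_list_sum_abs_average_wn_sub_le hW hn (δ := δ / 4) (θ := 1 / 100)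
      (by positivity) (by norm_num) hP
      (fun x hx => by_contra fun h => hx (hsupp x (by simpa using h))) hL0
    exact ⟨s, hs.trans (hcover _ (Nat.le_ceil E))⟩
  have hcard := card_le_card_pow_of_approximation (isChannel_wn hW n) happrox hQ hD.1 hD.2
    (c := 1 / 10) (by norm_num) (by norm_num)
  rw [Fintype.card_fun, Fintype.card_fin] at hcard
  have hcard' : (#{m | 1 / 10 ≤ ∑ x with mutInf (empDist x) W ≤ R - δ, Q m x} : ℝ)
      ≤ 1 / 10 * k := by
    have h : (#{m | 1 / 10 ≤ ∑ x with mutInf (empDist x) W ≤ R - δ, Q m x} : ℝ)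
      ≤ ((Fintype.card X : ℝ) ^ n) ^ ⌈E⌉₊ := by exact_mod_cast hcard
    linarith [hcount _ hL]
  have hle1 (m : Fin k) : ∑ x with mutInf (empDist x) W ≤ R - δ, Q m x ≤ 1 :=
    (hQ m).sum_filter_le_one _
  exact (average_le_add_of_card_le hk0 hle1 (by norm_num) hcard').trans (by norm_num)

end Converse

section OuterBound

open Filter Topology

variable {X Y Z : Type*} [Fintype X] [Fintype Y] [Fintype Z]

lemma isPMF_average {A : Type*} [Fintype A] {a : ℕ} (ha : 0 < a) {Q : Fin a → A → ℝ}
    (hQ : ∀ i, IsPMF (Q i)) : IsPMF fun x => (a : ℝ)⁻¹ * ∑ i, Q i x := by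
  refine ⟨fun x => mul_nonneg (by positivity) (sum_nonneg fun i _ => (hQ i).1 x), ?_⟩
  rw [← mul_sum, sum_comm]
  simp [(hQ _).2, ha.ne']

lemma isPMF_average₂ {A : Type*} [Fintype A] {a b : ℕ} (ha : 0 < a) (hb : 0 < b)
    {Q : Fin a → Fin b → A → ℝ} (hQ : ∀ i j, IsPMF (Q i j)) :
    IsPMF fun x => ((a * b : ℕ) : ℝ)⁻¹ * ∑ i, ∑ j, Q i j x := by
  simpa only [← mul_sum, ← mul_assoc, ← mul_inv, ← Nat.cast_mul]
    using isPMF_average ha fun i => isPMF_average hb (hQ i)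

lemma average_average_comm₁₂ {a b c : ℕ} (f : Fin a → Fin b → Fin c → ℝ) :
    (a : ℝ)⁻¹ * ∑ i, ((b * c : ℕ) : ℝ)⁻¹ * ∑ j, ∑ k, f i j k
      = (b : ℝ)⁻¹ * ∑ j, ((a * c : ℕ) : ℝ)⁻¹ * ∑ i, ∑ k, f i j k := by
  rw [← mul_sum, ← mul_sum, sum_comm, ← mul_assoc, ← mul_assoc]
  push_cast
  ring

lemma average_average_comm₁₃ {a b c : ℕ} (f : Fin a → Fin b → Fin c → ℝ) :
    (a : ℝ)⁻¹ * ∑ i, ((b * c : ℕ) : ℝ)⁻¹ * ∑ j, ∑ k, f i j k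
      = (c : ℝ)⁻¹ * ∑ k, ((a * b : ℕ) : ℝ)⁻¹ * ∑ i, ∑ j, f i j k := by
  simp_rw [← average_average_comm₁₂ fun i k j => f i j k, mul_comm c b,
    sum_comm (s := univ (α := Fin b))]

omit [Fintype X] in
lemma isChannel_margY {W : X → Y → Z → ℝ} (hW : IsBC W) : IsChannel (margY W) :=
  ⟨fun x y => sum_nonneg fun z _ => hW.1 x y z, hW.2⟩

omit [Fintype X] in
lemma isChannel_margZ {W : X → Y → Z → ℝ} (hW : IsBC W) : IsChannel (margZ W) :=
  ⟨fun x z => sum_nonneg fun y _ => hW.1 x y z, fun x => sum_comm.trans (hW.2 x)⟩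

lemma eventually_sum_average_information_lt_le {W : X → Y → ℝ} (hW : IsChannel W) {R δ : ℝ}
    (hδ : 0 < δ) :
    ∀ᶠ n : ℕ in atTop, ∀ (k : ℕ) (Q : Fin k → (Fin n → X) → ℝ) (D : Fin k → Finset (Fin n → Y)),
      (∀ m, IsPMF (Q m)) → IDCodeErr n W Q D (1 / 100) (1 / 100) →
      (0 < R → R ≤ 1 / n * Real.log (Real.log k)) →
      ∑ x with mutInf (empDist x) W < R - δ, (k : ℝ)⁻¹ * ∑ m, Q m x ≤ 1 / 5 := by
  rcases le_or_gt δ R with hδR | hδR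
  · have hR : 0 < R := hδ.trans_le hδR
    filter_upwards [eventually_average_sum_low_information_le hW hR hδ hδR]
      with n h k Q D hQ hD hk
    refine le_trans ?_ (h k Q D hQ hD (hk hR))
    rw [← mul_sum, sum_comm]
    refine mul_le_mul_of_nonneg_left (sum_le_sum fun m _ => ?_) (by positivity)
    exact sum_le_sum_of_subset_of_nonneg (monotone_filter_right _ fun x _ => le_of_lt)
      fun x _ _ => (hQ m).1 x
  · filter_upwards [eventually_gt_atTop 0] with n hn k Q D _ _ _
    rw [filter_false_of_mem fun x _ => by linarith [mutInf_nonneg (isPMF_empDist hn x) hW]]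
    norm_num

/-- The requirement on the number `k` of messages of a code of block length `n` and rate `R`. -/
def MeetsRate (n k : ℕ) (R : ℝ) : Prop :=
  (0 < R → R ≤ 1 / n * Real.log (Real.log k)) ∧ (R = 0 → k = 1)

lemma MeetsRate.pos {n k : ℕ} {R : ℝ} (hk : MeetsRate n k R) (hR : 0 ≤ R) : 0 < k := by
  rcases hR.eq_or_lt with h | h
  · simp [hk.2 h.symm]
  · exact_mod_cast (Real.exp_pos _).trans_le (exp_exp_le_of_le_log_log h (hk.1 h))

/- The four induced codes share one input law, the average of all encoders, so a word drawn from it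
avoids the four low-information events simultaneously; its type is the wanted distribution. -/
lemma CMSAchievable.exists_isPMF_sub_le_mutInf {W : X → Y → Z → ℝ} (hW : IsBC W) {p : ℝ × ℝ × ℝ}
    (hp : CMSAchievable W p) {δ : ℝ} (hδ : 0 < δ) :
    ∃ P : X → ℝ, IsPMF P ∧ p.1 - δ ≤ mutInf P (margY W) ∧ p.2.1 - δ ≤ mutInf P (margY W) ∧
      p.1 - δ ≤ mutInf P (margZ W) ∧ p.2.2 - δ ≤ mutInf P (margZ W) := by
  obtain ⟨h₁, h₂, h₃, hcode⟩ := hp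
  obtain ⟨n₀, hn₀⟩ := hcode (1 / 100) (1 / 100) (1 / 100) (1 / 100) (by norm_num) (by norm_num)
    (by norm_num) (by norm_num)
  have hlowY (R : ℝ) := eventually_sum_average_information_lt_le (isChannel_margY hW) (R := R) hδ
  have hlowZ (R : ℝ) := eventually_sum_average_information_lt_le (isChannel_margZ hW) (R := R) hδ
  obtain ⟨n, hn, hn₀n, hlow₁, hlow₂, hlow₃, hlow₄⟩ := ((eventually_gt_atTop 0).and <|
    (eventually_ge_atTop n₀).and <| (hlowY p.1).and <| (hlowY p.2.1).and <|
    (hlowZ p.1).and (hlowZ p.2.2)).exists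
  obtain ⟨k, kY, kZ, Q, DcY, DY, DcZ, DZ, ⟨hQ, hcY, hY, hcZ, hZ⟩, hk, hkY, hkZ⟩ := hn₀ n hn₀n
  have hk0 := MeetsRate.pos hk h₁
  have hkY0 := MeetsRate.pos hkY h₂
  have hkZ0 := MeetsRate.pos hkZ h₃
  have hQc (m) : IsPMF fun x => ((kY * kZ : ℕ) : ℝ)⁻¹ * ∑ my, ∑ mz, Q m my mz x :=
    isPMF_average₂ hkY0 hkZ0 (hQ m)
  have hlawY := hlow₂ kY _ DY (fun my => isPMF_average₂ hk0 hkZ0 fun m => hQ m my) hY hkY.1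
  have hlawZ := hlow₄ kZ _ DZ (fun mz => isPMF_average₂ hk0 hkY0 fun m my => hQ m my mz) hZ hkZ.1
  simp_rw [← average_average_comm₁₂ fun m my mz => Q m my mz _] at hlawY
  simp_rw [← average_average_comm₁₃ fun m my mz => Q m my mz _] at hlawZ
  have hlaw : IsPMF fun x =>
      (k : ℝ)⁻¹ * ∑ m, ((kY * kZ : ℕ) : ℝ)⁻¹ * ∑ my, ∑ mz, Q m my mz x := by
    simpa using isPMF_average₂ hk0 one_pos fun m (_ : Fin 1) => hQc m
  obtain ⟨x, hx⟩ := hlaw.exists_forall_notMem (B := (![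
    filter fun x => mutInf (empDist x) (margY W) < p.1 - δ,
    filter fun x => mutInf (empDist x) (margY W) < p.2.1 - δ,
    filter fun x => mutInf (empDist x) (margZ W) < p.1 - δ,
    filter fun x => mutInf (empDist x) (margZ W) < p.2.2 - δ] · univ)) (by
      simp only [Fin.sum_univ_four, Matrix.cons_val]
      linarith [hlow₁ k _ DcY hQc hcY hk.1, hlow₃ k _ DcZ hQc hcZ hk.1])
  exact ⟨empDist x, isPMF_empDist hn x, by simpa using hx 0, by simpa using hx 1,
    by simpa using hx 2, by simpa using hx 3⟩

lemma isClosed_setOf_exists_isPMF_le_mutInf {V : X → Y → ℝ} {V' : X → Z → ℝ} (hV : IsChannel V)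
    (hV' : IsChannel V') :
    IsClosed {p : ℝ × ℝ × ℝ | ∃ P : X → ℝ, IsPMF P ∧ p.1 ≤ mutInf P V ∧ p.2.1 ≤ mutInf P V ∧
      p.1 ≤ mutInf P V' ∧ p.2.2 ≤ mutInf P V'} := by
  have hc : Continuous fun q : stdSimplex ℝ X × ℝ × ℝ × ℝ => mutInf (q.1 : X → ℝ) V :=
    (continuousOn_iff_continuous_domRestrict.1 (continuousOn_mutInf hV)).comp continuous_fst
  have hc' : Continuous fun q : stdSimplex ℝ X × ℝ × ℝ × ℝ => mutInf (q.1 : X → ℝ) V' :=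
    (continuousOn_iff_continuous_domRestrict.1 (continuousOn_mutInf hV')).comp continuous_fst
  have hclosed : IsClosed {q : stdSimplex ℝ X × ℝ × ℝ × ℝ |
      q.2.1 ≤ mutInf (q.1 : X → ℝ) V ∧ q.2.2.1 ≤ mutInf (q.1 : X → ℝ) V ∧
      q.2.1 ≤ mutInf (q.1 : X → ℝ) V' ∧ q.2.2.2 ≤ mutInf (q.1 : X → ℝ) V'} :=
    (isClosed_le (by fun_prop) hc).and <| (isClosed_le (by fun_prop) hc).and <|
      (isClosed_le (by fun_prop) hc').and (isClosed_le (by fun_prop) hc')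
  have : CompactSpace (stdSimplex ℝ X) := isCompact_iff_compactSpace.1 (isCompact_stdSimplex ℝ X)
  convert isClosedMap_snd_of_compactSpace _ hclosed using 1
  ext p
  constructor
  · rintro ⟨P, hP, h⟩
    exact ⟨(⟨P, hP⟩, p), h, rfl⟩
  · rintro ⟨⟨P, p⟩, h, rfl⟩
    exact ⟨P, P.2, h⟩

theorem closure_setOf_cmsAchievable_subset {W : X → Y → Z → ℝ} (hW : IsBC W) :
    closure {p : ℝ × ℝ × ℝ | CMSAchievable W p}
      ⊆ {p : ℝ × ℝ × ℝ | 0 ≤ p.1 ∧ 0 ≤ p.2.1 ∧ 0 ≤ p.2.2 ∧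
          ∃ P : X → ℝ, IsPMF P ∧
            p.1 ≤ mutInf P (margY W) ∧ p.2.1 ≤ mutInf P (margY W) ∧
            p.1 ≤ mutInf P (margZ W) ∧ p.2.2 ≤ mutInf P (margZ W)} := by
  have hregion := isClosed_setOf_exists_isPMF_le_mutInf (isChannel_margY hW) (isChannel_margZ hW)
  refine closure_minimal (fun p hp => ⟨hp.1, hp.2.1, hp.2.2.1, ?_⟩) <|
    (isClosed_le continuous_const continuous_fst).and <|
    (isClosed_le continuous_const (continuous_fst.comp continuous_snd)).and <|
    (isClosed_le continuous_const (continuous_snd.comp continuous_snd)).and hregion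
  have hlim : Tendsto (fun δ : ℝ => p - (δ, δ, δ)) (𝓝[>] 0) (𝓝 p) := by
    have : Continuous fun δ : ℝ => p - (δ, δ, δ) := by fun_prop
    simpa using (this.tendsto' 0 p (by simp)).mono_left nhdsWithin_le_nhds
  exact hregion.mem_of_tendsto hlim
    (eventually_mem_nhdsWithin.mono fun δ hδ => hp.exists_isPMF_sub_le_mutInf hW hδ)

end OuterBound

/-! ### Random lists -/

section RandomLists

variable {V : Type*} [Fintype V]

/-- The uniform distribution on a finite type. -/
def uniformWeight (V : Type*) [Fintype V] (_ : V) : ℝ :=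
  (Fintype.card V : ℝ)⁻¹

lemma isPMF_uniformWeight [Nonempty V] : IsPMF (uniformWeight V) :=
  ⟨fun _ => by unfold uniformWeight; positivity, by simp [uniformWeight]⟩

/-- The law of a list of `K` independent uniform elements of `V`. -/
def listWeight (V : Type*) [Fintype V] (K : ℕ) : (Fin K → V) → ℝ :=
  piWeight fun _ => uniformWeight V

lemma isPMF_listWeight [Nonempty V] (K : ℕ) : IsPMF (listWeight V K) :=
  isPMF_piWeight fun _ => isPMF_uniformWeight

lemma sum_listWeight_mul_sum [Nonempty V] {K : ℕ} (f : V → ℝ) :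
    ∑ β, listWeight V K β * ∑ i, f (β i) = K * ((Fintype.card V : ℝ)⁻¹ * ∑ v, f v) := by
  have happly (i : Fin K) :
      ∑ β, listWeight V K β * f (β i) = (Fintype.card V : ℝ)⁻¹ * ∑ v, f v := by
    rw [listWeight, sum_piWeight_mul_apply (fun _ => isPMF_uniformWeight) i f, mul_sum]
    rfl
  simp_rw [mul_sum (s := (univ : Finset (Fin K)))]
  rw [sum_comm]
  simp [happly]

/-- The number of times `v` occurs in the list `β`, as a real number. -/
def listCount {V : Type*} {K : ℕ} (β : Fin K → V) (v : V) : ℝ :=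
  ∑ i, if β i = v then 1 else 0

omit [Fintype V] in
lemma listCount_nonneg {K : ℕ} (β : Fin K → V) (v : V) : 0 ≤ listCount β v :=
  sum_nonneg fun _ _ => by split_ifs <;> norm_num

lemma sum_listCount_mul {K : ℕ} (β : Fin K → V) (f : V → ℝ) :
    ∑ v, listCount β v * f v = ∑ i, f (β i) := by
  simp_rw [listCount, sum_mul]
  rw [sum_comm]
  simp

lemma sum_listWeight_mul_listCount [Nonempty V] (K : ℕ) (v : V) :
    ∑ β, listWeight V K β * listCount β v = K / Fintype.card V := by
  simp_rw [listCount]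
  rw [sum_listWeight_mul_sum fun a => if a = v then 1 else 0]
  simp [div_eq_mul_inv]

lemma sum_listWeight_mul_indicator_mul_indicator [Nonempty V] {K : ℕ} (i j : Fin K) (v v' : V) :
    ∑ β, listWeight V K β * ((if β i = v then (1 : ℝ) else 0) * if β j = v' then 1 else 0)
      = if i = j then if v = v' then (Fintype.card V : ℝ)⁻¹ else 0
        else (Fintype.card V : ℝ)⁻¹ ^ 2 := by
  unfold listWeight
  split_ifs with hij hv
  · subst hij hv
    rw [sum_piWeight_mul_apply (fun _ => isPMF_uniformWeight) i
      (fun a => (if a = v then (1 : ℝ) else 0) * if a = v then 1 else 0)]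
    simp [uniformWeight]
  · subst hij
    rw [sum_piWeight_mul_apply (fun _ => isPMF_uniformWeight) i
      (fun a => (if a = v then (1 : ℝ) else 0) * if a = v' then 1 else 0)]
    simp [Ne.symm hv]
  · rw [sum_piWeight_mul_apply_mul_apply (fun _ => isPMF_uniformWeight) hij
      (fun a => if a = v then 1 else 0) (fun a => if a = v' then 1 else 0)]
    simp [uniformWeight, sq]

lemma sum_listWeight_mul_listCount_mul_listCount_le [Nonempty V] (K : ℕ) (v v' : V) :
    ∑ β, listWeight V K β * (listCount β v * listCount β v')
      ≤ (if v = v' then (K : ℝ) / Fintype.card V else 0) + (K / Fintype.card V) ^ 2 := by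
  calc ∑ β, listWeight V K β * (listCount β v * listCount β v')
      = ∑ i, ∑ j, ∑ β, listWeight V K β *
          ((if β i = v then (1 : ℝ) else 0) * if β j = v' then 1 else 0) := by
        simp_rw [listCount, sum_mul_sum, mul_sum]
        rw [sum_comm]
        exact sum_congr rfl fun i _ => sum_comm
    _ ≤ ∑ i : Fin K, ∑ j : Fin K, ((if i = j then if v = v' then (Fintype.card V : ℝ)⁻¹ else 0
          else 0) + (Fintype.card V : ℝ)⁻¹ ^ 2) := by
        refine sum_le_sum fun i _ => sum_le_sum fun j _ => ?_
        rw [sum_listWeight_mul_indicator_mul_indicator]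
        have : 0 ≤ (Fintype.card V : ℝ)⁻¹ ^ 2 := by positivity
        split_ifs <;> linarith
    _ = (if v = v' then (K : ℝ) / Fintype.card V else 0) + (K / Fintype.card V) ^ 2 := by
        simp only [inv_pow, sum_add_distrib, sum_ite_eq, mem_univ, ↓reduceIte, sum_const, card_univ,
          Fintype.card_fin, nsmul_eq_mul, smul_ite]
        split_ifs <;> ring

lemma sum_listWeight_mul_indicator_le_exp [Nonempty V] {g : V → ℝ} (h0 : ∀ v, 0 ≤ g v)
    (h1 : ∀ v, g v ≤ 1) {ε : ℝ} (hg : (Fintype.card V : ℝ)⁻¹ * ∑ v, g v ≤ ε) (K : ℕ) :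
    ∑ β, listWeight V K β * (if 4 * ε * K ≤ ∑ i, g (β i) then 1 else 0)
      ≤ Real.exp (-(2 * ε * K)) := by
  have hexp (v : V) : Real.exp (g v) ≤ 1 + 2 * g v := by
    have := (abs_le.1 (Real.abs_exp_sub_one_sub_id_le (x := g v)
      (by rw [abs_of_nonneg (h0 v)]; exact h1 v))).2
    nlinarith [h0 v, h1 v]
  have hmgf : ∑ v, uniformWeight V v * Real.exp (g v) ≤ Real.exp (2 * ε) :=
    calc ∑ v, uniformWeight V v * Real.exp (g v)
        ≤ ∑ v, uniformWeight V v * (1 + 2 * g v) :=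
          sum_le_sum fun v _ => mul_le_mul_of_nonneg_left (hexp v) (isPMF_uniformWeight.1 v)
      _ = 1 + 2 * ((Fintype.card V : ℝ)⁻¹ * ∑ v, g v) := by
          simp_rw [mul_add, sum_add_distrib, isPMF_uniformWeight.sum_mul_const, mul_sum,
            uniformWeight, mul_left_comm]
      _ ≤ 2 * ε + 1 := by linarith
      _ ≤ Real.exp (2 * ε) := Real.add_one_le_exp _
  have hmarkov (β : Fin K → V) : (if 4 * ε * K ≤ ∑ i, g (β i) then (1 : ℝ) else 0)
      ≤ Real.exp (-(4 * ε * K)) * ∏ i, Real.exp (g (β i)) := by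
    rw [← Real.exp_sum, ← Real.exp_add]
    split_ifs
    · exact Real.one_le_exp (by linarith)
    · positivity
  calc ∑ β, listWeight V K β * (if 4 * ε * K ≤ ∑ i, g (β i) then 1 else 0)
      ≤ ∑ β, listWeight V K β * (Real.exp (-(4 * ε * K)) * ∏ i, Real.exp (g (β i))) :=
        sum_le_sum fun β _ => mul_le_mul_of_nonneg_left (hmarkov β) ((isPMF_listWeight K).1 β)
    _ = Real.exp (-(4 * ε * K)) * (∑ v, uniformWeight V v * Real.exp (g v)) ^ K := by
        simp_rw [mul_left_comm (listWeight V K _), ← mul_sum, listWeight]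
        rw [sum_piWeight_mul_prod (fun _ => uniformWeight V) fun (_ : Fin K) v => Real.exp (g v)]
        simp
    _ ≤ Real.exp (-(4 * ε * K)) * Real.exp (2 * ε) ^ K := by
        gcongr
        exact sum_nonneg fun v _ => mul_nonneg (isPMF_uniformWeight.1 v) (Real.exp_pos _).le
    _ = Real.exp (-(2 * ε * K)) := by
        rw [← Real.exp_nat_mul, ← Real.exp_add]
        congr 1
        ring

end RandomLists

section TripleMass

lemma IsPMF.prod {A B : Type*} [Fintype A] [Fintype B] {p : A → ℝ} {q : B → ℝ} (hp : IsPMF p)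
    (hq : IsPMF q) : IsPMF fun t : A × B => p t.1 * q t.2 := by
  refine ⟨fun t => mul_nonneg (hp.1 _) (hq.1 _), ?_⟩
  simp_rw [Fintype.sum_prod_type, ← mul_sum, hq.2, mul_one, hp.2]

lemma IsPMF.sum_mul_indicator_lt_half_mean_le {A : Type*} [Fintype A] {p : A → ℝ} (hp : IsPMF p)
    {f : A → ℝ} {s t : ℝ} (hs : 0 < s) (hmean : ∑ a, p a * f a = s)
    (hsq : ∑ a, p a * f a ^ 2 ≤ s ^ 2 + t) :
    ∑ a, p a * (if f a < s / 2 then 1 else 0) ≤ 4 * t / s ^ 2 := by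
  have hcheb (a : A) : (if f a < s / 2 then (1 : ℝ) else 0) * s ^ 2 ≤ 4 * (f a - s) ^ 2 := by
    split_ifs
    · nlinarith
    · nlinarith [sq_nonneg (f a - s)]
  rw [le_div_iff₀ (by positivity), sum_mul]
  calc ∑ a, p a * (if f a < s / 2 then 1 else 0) * s ^ 2
      ≤ ∑ a, 4 * (p a * (f a - s) ^ 2) := sum_le_sum fun a _ => by
        nlinarith [mul_le_mul_of_nonneg_left (hcheb a) (hp.1 a)]
    _ ≤ 4 * t := by
        rw [← mul_sum, hp.sum_mul_sub_sq, hmean]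
        linarith

variable {V : Type*} [Fintype V]

/-- The total mass of the product of three weights. For the multiplicities of three lists this is
their number of coincidences. -/
def tripleMass (a b c : V → ℝ) : ℝ :=
  ∑ v, a v * b v * c v

lemma tripleMass_comm (a b c : V → ℝ) : tripleMass a b c = tripleMass b a c := by
  simp only [tripleMass, mul_comm (a _)]

lemma tripleMass_rotate (a b c : V → ℝ) : tripleMass a b c = tripleMass c a b :=
  sum_congr rfl fun v _ => by ring

lemma tripleMass_sq (a b c : V → ℝ) :
    tripleMass a b c ^ 2
      = ∑ t : V × V, (a t.1 * a t.2) * (b t.1 * b t.2) * (c t.1 * c t.2) := by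
  rw [tripleMass, sq, sum_mul_sum, Fintype.sum_prod_type]
  exact sum_congr rfl fun v _ => sum_congr rfl fun v' _ => by ring

lemma sum_prod_mul_sum_mul {A B C τ : Type*} [Fintype A] [Fintype B] [Fintype C] [Fintype τ]
    (p : A → ℝ) (q : B → ℝ) (r : C → ℝ) (f : τ → A → ℝ) (g : τ → B → ℝ) (h : τ → C → ℝ) :
    ∑ x : A × B × C, p x.1 * (q x.2.1 * r x.2.2) * ∑ t, f t x.1 * g t x.2.1 * h t x.2.2
      = ∑ t, (∑ a, p a * f t a) * (∑ b, q b * g t b) * ∑ c, r c * h t c := by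
  rw [sum_congr rfl fun _ _ => mul_sum _ _ _, sum_comm]
  refine sum_congr rfl fun t _ => ?_
  simp_rw [Fintype.sum_prod_type, mul_assoc, sum_mul_sum, mul_sum]
  exact sum_congr rfl fun a _ => sum_congr rfl fun b _ => sum_congr rfl fun c _ => by ring

lemma add_sq_mul_add_sq_mul_add_sq_le {x y z : ℝ} (hx : 0 ≤ x) (hx1 : x ≤ 1) (hy : 0 ≤ y)
    (hy1 : y ≤ 1) (hz : 0 ≤ z) (hz1 : z ≤ 1) :
    (x + x ^ 2) * (y + y ^ 2) * (z + z ^ 2) ≤ 8 * (x * y * z) := by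
  calc (x + x ^ 2) * (y + y ^ 2) * (z + z ^ 2) ≤ (2 * x) * (2 * y) * (2 * z) := by
        gcongr <;> nlinarith
    _ = 8 * (x * y * z) := by ring

variable [Nonempty V]

lemma sum_listWeight_mul_tripleMass (a b c : ℕ) :
    ∑ x : (Fin a → V) × (Fin b → V) × (Fin c → V),
        listWeight V a x.1 * (listWeight V b x.2.1 * listWeight V c x.2.2)
          * tripleMass (listCount x.1) (listCount x.2.1) (listCount x.2.2)
      = (a * b * c : ℝ) / (Fintype.card V : ℝ) ^ 2 := by
  have hV : (Fintype.card V : ℝ) ≠ 0 := by exact_mod_cast Fintype.card_ne_zero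
  unfold tripleMass
  rw [sum_prod_mul_sum_mul _ _ _ (fun v α => listCount α v) (fun v β => listCount β v)
    fun v γ => listCount γ v]
  simp_rw [sum_listWeight_mul_listCount]
  simp only [sum_const, card_univ, nsmul_eq_mul]
  field_simp

lemma sum_listWeight_mul_tripleMass_sq_le {a b c : ℕ} (ha : a ≤ Fintype.card V)
    (hb : b ≤ Fintype.card V) (hc : c ≤ Fintype.card V) :
    ∑ x : (Fin a → V) × (Fin b → V) × (Fin c → V),
        listWeight V a x.1 * (listWeight V b x.2.1 * listWeight V c x.2.2)
          * tripleMass (listCount x.1) (listCount x.2.1) (listCount x.2.2) ^ 2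
      ≤ ((a * b * c : ℝ) / (Fintype.card V : ℝ) ^ 2) ^ 2
        + 8 * ((a * b * c : ℝ) / (Fintype.card V : ℝ) ^ 2) := by
  set N : ℝ := (Fintype.card V : ℝ) with hN
  have hN0 : 0 < N := by rw [hN]; exact_mod_cast Fintype.card_pos
  have hratio {K : ℕ} (hK : K ≤ Fintype.card V) : 0 ≤ (K : ℝ) / N ∧ (K : ℝ) / N ≤ 1 :=
    ⟨by positivity, (div_le_one hN0).2 (by rw [hN]; exact_mod_cast hK)⟩
  have hnonneg (K : ℕ) (t : V × V) :
      0 ≤ ∑ β, listWeight V K β * (listCount β t.1 * listCount β t.2) :=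
    sum_nonneg fun β _ => mul_nonneg ((isPMF_listWeight K).1 β)
      (mul_nonneg (listCount_nonneg _ _) (listCount_nonneg _ _))
  have hmoment (K : ℕ) (t : V × V) := sum_listWeight_mul_listCount_mul_listCount_le K t.1 t.2
  simp_rw [tripleMass_sq]
  rw [sum_prod_mul_sum_mul _ _ _ (fun (t : V × V) α => listCount α t.1 * listCount α t.2)
    (fun t β => listCount β t.1 * listCount β t.2) fun t γ => listCount γ t.1 * listCount γ t.2]
  calc _ ≤ ∑ t : V × V, ((if t.1 = t.2 then 8 * (a / N * (b / N) * (c / N)) else 0)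
          + (a / N * (b / N) * (c / N)) ^ 2) := by
        refine sum_le_sum fun t _ => (mul_le_mul (mul_le_mul (hmoment a t) (hmoment b t)
          (hnonneg b t) ((hnonneg a t).trans (hmoment a t))) (hmoment c t) (hnonneg c t)
          (mul_nonneg ((hnonneg a t).trans (hmoment a t))
            ((hnonneg b t).trans (hmoment b t)))).trans ?_
        split_ifs
        · linarith [sq_nonneg (a / N * (b / N) * (c / N)), add_sq_mul_add_sq_mul_add_sq_le
            (hratio ha).1 (hratio ha).2 (hratio hb).1 (hratio hb).2 (hratio hc).1 (hratio hc).2]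
        · apply le_of_eq
          ring
    _ = ((a * b * c : ℝ) / N ^ 2) ^ 2 + 8 * ((a * b * c : ℝ) / N ^ 2) := by
        simp_rw [sum_add_distrib, Fintype.sum_prod_type]
        simp only [sum_ite_eq, mem_univ, ↓reduceIte, sum_const, card_univ, nsmul_eq_mul, ← hN]
        field_simp
        ring

lemma sum_listWeight_mul_tripleMass_lt_le {a b c : ℕ} (ha : 0 < a) (hb : 0 < b)
    (hc : 0 < c) (haV : a ≤ Fintype.card V) (hbV : b ≤ Fintype.card V)
    (hcV : c ≤ Fintype.card V) :
    ∑ α, listWeight V a α * ∑ β, listWeight V b β * ∑ γ, listWeight V c γ *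
      (if tripleMass (listCount α) (listCount β) (listCount γ)
        < (a * b * c : ℝ) / (Fintype.card V : ℝ) ^ 2 / 2 then 1 else 0)
      ≤ 32 / ((a * b * c : ℝ) / (Fintype.card V : ℝ) ^ 2) := by
  set s : ℝ := (a * b * c : ℝ) / (Fintype.card V : ℝ) ^ 2 with hs
  have : (0 : ℝ) < Fintype.card V := by exact_mod_cast Fintype.card_pos
  have hs0 : 0 < s := by positivity
  have hcheb := ((isPMF_listWeight a).prod
    ((isPMF_listWeight b).prod (isPMF_listWeight c))).sum_mul_indicator_lt_half_mean_le hs0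
      (sum_listWeight_mul_tripleMass (V := V) a b c)
      (sum_listWeight_mul_tripleMass_sq_le haV hbV hcV)
  calc _ = _ := by simp_rw [Fintype.sum_prod_type, mul_assoc, mul_sum]
    _ ≤ _ := hcheb
    _ = 32 / s := by
      rw [← hs]
      field_simp
      norm_num

end TripleMass

section RandomFamilies

variable {L : Type*} [Fintype L] {p : L → ℝ} {M : ℕ}

lemma sum_mul_card_filter {A τ : Type*} [Fintype A] [Fintype τ] (p : A → ℝ)
    (B : A → τ → Prop) [∀ a, DecidablePred (B a)] :
    ∑ a, p a * #{t | B a t} = ∑ t, ∑ a, p a * (if B a t then 1 else 0) := by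
  simp_rw [← sum_boole, mul_sum]
  exact sum_comm

lemma sum_piWeight_mul_card_pairs_le (hp : IsPMF p) (r : L → L → Prop) {e : ℝ}
    (h : ∀ b, ∑ a, p a * (if r a b then 1 else 0) ≤ e) :
    ∑ ω : Fin M → L, piWeight (fun _ => p) ω *
        #{t : Fin M × Fin M | t.1 ≠ t.2 ∧ r (ω t.1) (ω t.2)} ≤ (M : ℝ) ^ 2 * e := by
  have hmean : ∑ b, p b * ∑ a, p a * (if r a b then (1 : ℝ) else 0) ≤ e := hp.sum_mul_le h
  have hnonneg : 0 ≤ ∑ b, p b * ∑ a, p a * (if r a b then (1 : ℝ) else 0) :=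
    sum_nonneg fun b _ => mul_nonneg (hp.1 b) <| sum_nonneg fun a _ =>
      mul_nonneg (hp.1 a) (by split_ifs <;> norm_num)
  have hpair (t : Fin M × Fin M) : ∑ ω : Fin M → L, piWeight (fun _ => p) ω *
      (if t.1 ≠ t.2 ∧ r (ω t.1) (ω t.2) then (1 : ℝ) else 0) ≤ e := by
    by_cases ht : t.1 = t.2
    · simpa [ht] using hnonneg.trans hmean
    · simp only [ne_eq, ht, not_false_eq_true, true_and]
      rwa [sum_piWeight_mul_apply₂ (fun _ => hp) (Ne.symm ht)
        fun b a => if r a b then (1 : ℝ) else 0]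
  calc _ = ∑ t : Fin M × Fin M, ∑ ω, piWeight (fun _ => p) ω *
          (if t.1 ≠ t.2 ∧ r (ω t.1) (ω t.2) then (1 : ℝ) else 0) := by
        simp_rw [sum_mul_card_filter]
    _ ≤ ∑ _ : Fin M × Fin M, e := sum_le_sum fun t _ => hpair t
    _ = (M : ℝ) ^ 2 * e := by simp [sq]

lemma sum_piWeight_mul_indicator_two_mul_mean_le (hp : IsPMF p) (hM : 0 < M) {f : L → ℝ}
    {d e : ℝ} (hd : 0 < d) (hmean : ∑ a, p a * f a = d) (hsq : ∑ a, p a * f a ^ 2 ≤ e) :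
    ∑ ω : Fin M → L, piWeight (fun _ => p) ω * (if 2 * d * M ≤ ∑ m, f (ω m) then 1 else 0)
      ≤ e / (M * d ^ 2) := by
  have : (0 : ℝ) < M := by exact_mod_cast hM
  have hcheb := sum_piWeight_le_abs_sub_mean_le (fun _ : Fin M => hp) (fun _ => f)
    (t := M * d) (by positivity)
  simp only [hmean, sum_const, card_univ, Fintype.card_fin, nsmul_eq_mul] at hcheb
  simp_rw [mul_ite, mul_one, mul_zero]
  rw [← sum_filter]
  calc _ ≤ ∑ ω : Fin M → L with M * d ≤ |∑ i, f (ω i) - M * d|, piWeight (fun _ => p) ω := by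
        refine sum_le_sum_of_subset_of_nonneg (monotone_filter_right _ fun ω _ hω => ?_)
          fun ω _ _ => (isPMF_piWeight fun _ => hp).1 ω
        exact le_trans (by linarith) (le_abs_self _)
    _ ≤ (M * ∑ a, p a * f a ^ 2) / (M * d) ^ 2 := hcheb
    _ ≤ (M * e) / (M * d) ^ 2 := by gcongr
    _ = e / (M * d ^ 2) := by field_simp

end RandomFamilies

section Selection

lemma exists_injective_le_two_mul {k : ℕ} (hk : 0 < k) {f : Fin (2 * k) → ℝ} (hf : ∀ m, 0 ≤ f m)
    {τ : ℝ} (h : ((2 * k : ℕ) : ℝ)⁻¹ * ∑ m, f m ≤ τ) :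
    ∃ ι : Fin k → Fin (2 * k), Function.Injective ι ∧ ∀ m, f (ι m) ≤ 2 * τ := by
  have hk0 : (0 : ℝ) < k := by exact_mod_cast hk
  have hcard : k ≤ #{m | f m ≤ 2 * τ} := by
    by_contra! hlt
    have hlarge : k + 1 ≤ #{m | ¬ f m ≤ 2 * τ} := by
      have := card_filter_add_card_filter_not (s := univ) fun m => f m ≤ 2 * τ
      rw [card_univ, Fintype.card_fin] at this
      omega
    have hmarkov : #{m | ¬ f m ≤ 2 * τ} * (2 * τ) < ∑ m, f m :=
      calc #{m | ¬ f m ≤ 2 * τ} * (2 * τ) < ∑ m with ¬ f m ≤ 2 * τ, f m := by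
            rw [← nsmul_eq_mul, ← sum_const]
            exact sum_lt_sum_of_nonempty (card_pos.1 (by omega)) fun m hm =>
              not_le.1 (mem_filter.1 hm).2
        _ ≤ ∑ m, f m := sum_le_sum_of_subset_of_nonneg (filter_subset _ _) fun m _ _ => hf m
    rw [inv_mul_le_iff₀ (by positivity)] at h
    push_cast at h
    have hlarge' : (k : ℝ) + 1 ≤ #{m | ¬ f m ≤ 2 * τ} := by exact_mod_cast hlarge
    have hτ : 0 ≤ τ := by nlinarith [sum_nonneg fun m (_ : m ∈ univ) => hf m]
    nlinarith
  obtain ⟨s, hs, hsk⟩ := exists_subset_card_eq hcard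
  exact ⟨s.orderEmbOfFin hsk, (s.orderEmbOfFin hsk).injective,
    fun m => (mem_filter.1 (hs (s.orderEmbOfFin_mem hsk m))).2⟩

lemma sum_comp_le_sum_of_injective {A B : Type*} [Fintype A] [Fintype B] {ι : A → B}
    (hι : Function.Injective ι) {f : B → ℝ} (hf : ∀ b, 0 ≤ f b) : ∑ a, f (ι a) ≤ ∑ b, f b := by
  rw [← sum_image (f := f) (g := ι) (s := univ) fun a _ b _ hab => hι hab]
  exact sum_le_sum_of_subset_of_nonneg (subset_univ _) fun b _ _ => hf b

lemma sum_sum_comp_le_of_average_le {k k' : ℕ} (hk : 0 < k) (hk' : 0 < k')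
    {ι : Fin k → Fin (2 * k)} {ι' : Fin k' → Fin (2 * k')} (hι : Function.Injective ι)
    (hι' : Function.Injective ι') {f : Fin (2 * k) → Fin (2 * k') → ℝ} (hf : ∀ i j, 0 ≤ f i j)
    {τ : ℝ}
    (h : ((2 * k : ℕ) : ℝ)⁻¹ * ((2 * k' : ℕ) : ℝ)⁻¹ * ∑ i, ∑ j, f i j ≤ τ) :
    ∑ i, ∑ j, f (ι i) (ι' j) ≤ 4 * τ * (k * k') := by
  have hk0 : (0 : ℝ) < k := by exact_mod_cast hk
  have hk0' : (0 : ℝ) < k' := by exact_mod_cast hk'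
  rw [← mul_inv, inv_mul_le_iff₀ (by positivity)] at h
  push_cast at h
  calc ∑ i, ∑ j, f (ι i) (ι' j) ≤ ∑ i, ∑ j, f (ι i) j :=
        sum_le_sum fun i _ => sum_comp_le_sum_of_injective hι' (hf (ι i))
    _ ≤ ∑ i, ∑ j, f i j :=
        sum_comp_le_sum_of_injective hι fun i => sum_nonneg fun j _ => hf i j
    _ ≤ 4 * τ * (k * k') := by linarith

end Selection

section ListFamilies

/-- A criterion for selecting families of elements of `L`: every member should have small `cost`,
and no ordered pair of distinct members should `clash`. -/
structure FamilyCriterion (L : Type*) where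
  cost : L → ℝ
  clash : L → L → Prop
  cost_nonneg : ∀ a, 0 ≤ cost a

namespace FamilyCriterion

variable {V : Type*} [Fintype V] {K k M : ℕ} (S : FamilyCriterion (Fin K → V))

/-- The average cost of a family of lists, plus its number of clashes, plus the number of elements
of `V` which the family contains at least twice as often as expected of a random family. -/
def penalty (ω : Fin M → Fin K → V) : ℝ :=
  (M : ℝ)⁻¹ * ∑ m, S.cost (ω m)
    + #{t : Fin M × Fin M | t.1 ≠ t.2 ∧ S.clash (ω t.1) (ω t.2)}
    + #{v | 2 * (K / Fintype.card V : ℝ) * M ≤ ∑ m, listCount (ω m) v}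

/-- A family of lists all of whose members cost at most `τ`, without clashes, and with every
element of `V` contained at most four times as often as expected of a random family. -/
def IsGoodFamily (τ : ℝ) (α : Fin k → Fin K → V) : Prop :=
  (∀ i, S.cost (α i) ≤ τ) ∧ (∀ i i', i ≠ i' → ¬ S.clash (α i) (α i')) ∧
    ∀ v, ∑ i, listCount (α i) v ≤ 4 * (K / Fintype.card V) * k

lemma penalty_nonneg (ω : Fin M → Fin K → V) : 0 ≤ S.penalty ω := by
  have := sum_nonneg fun m (_ : m ∈ univ) => S.cost_nonneg (ω m)
  unfold penalty
  positivity

lemma exists_isGoodFamily (hk : 0 < k) (ω : Fin (2 * k) → Fin K → V) {ψ : Fin (2 * k) → ℝ}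
    (hψ : ∀ m, 0 ≤ ψ m) {τ : ℝ} (hτ : τ < 1)
    (h : S.penalty ω + ((2 * k : ℕ) : ℝ)⁻¹ * ∑ m, ψ m ≤ τ) :
    ∃ ι : Fin k → Fin (2 * k), Function.Injective ι ∧ S.IsGoodFamily (2 * τ) (ω ∘ ι) ∧
      ∀ m, ψ (ι m) ≤ 2 * τ := by
  set clashes := #{t : Fin (2 * k) × Fin (2 * k) | t.1 ≠ t.2 ∧ S.clash (ω t.1) (ω t.2)}
  set overfull := #{v | 2 * (K / Fintype.card V : ℝ) * (2 * k : ℕ) ≤ ∑ m, listCount (ω m) v}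
  have hsplit : S.penalty ω = ((2 * k : ℕ) : ℝ)⁻¹ * ∑ m, S.cost (ω m) + clashes + overfull := rfl
  have hcost : 0 ≤ ((2 * k : ℕ) : ℝ)⁻¹ * ∑ m, S.cost (ω m) :=
    mul_nonneg (by positivity) (sum_nonneg fun m _ => S.cost_nonneg _)
  have hψ' : 0 ≤ ((2 * k : ℕ) : ℝ)⁻¹ * ∑ m, ψ m :=
    mul_nonneg (by positivity) (sum_nonneg fun m _ => hψ _)
  have hclashes0 : clashes = 0 := by
    refine (Nat.cast_lt_one (α := ℝ)).1 ?_
    linarith [(overfull.cast_nonneg : (0 : ℝ) ≤ overfull)]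
  have hoverfull0 : overfull = 0 := by
    refine (Nat.cast_lt_one (α := ℝ)).1 ?_
    linarith [(clashes.cast_nonneg : (0 : ℝ) ≤ clashes)]
  obtain ⟨ι, hι, hle⟩ := exists_injective_le_two_mul hk (f := fun m => S.cost (ω m) + ψ m)
    (fun m => add_nonneg (S.cost_nonneg _) (hψ m)) (τ := τ) (by
      rw [sum_add_distrib, mul_add]
      linarith [(clashes.cast_nonneg : (0 : ℝ) ≤ clashes),
        (overfull.cast_nonneg : (0 : ℝ) ≤ overfull)])
  refine ⟨ι, hι, ⟨fun m => ?_, fun m m' hmm hclash => ?_, fun v => ?_⟩, fun m => ?_⟩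
  · exact (le_add_of_nonneg_right (hψ (ι m))).trans (hle m)
  · exact filter_eq_empty_iff.1 (card_eq_zero.1 hclashes0) (mem_univ (ι m, ι m'))
      ⟨hι.ne hmm, hclash⟩
  · have hv := not_le.1 (filter_eq_empty_iff.1 (card_eq_zero.1 hoverfull0) (mem_univ v))
    push_cast at hv
    exact (sum_comp_le_sum_of_injective hι fun m => listCount_nonneg (ω m) v).trans (by linarith)
  · exact (le_add_of_nonneg_left (S.cost_nonneg _)).trans (hle m)

lemma sum_piWeight_mul_card_overfull_le [Nonempty V] (hK : 0 < K) (hM : 0 < M) :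
    ∑ ω : Fin M → Fin K → V, piWeight (fun _ => listWeight V K) ω *
        #{v | 2 * (K / Fintype.card V : ℝ) * M ≤ ∑ m, listCount (ω m) v}
      ≤ Fintype.card V * (Fintype.card V + 1) / M := by
  set N : ℝ := (Fintype.card V : ℝ) with hN
  have hN0 : 0 < N := by rw [hN]; exact_mod_cast Fintype.card_pos
  have : (0 : ℝ) < M := by exact_mod_cast hM
  have hK1 : (1 : ℝ) ≤ K := by exact_mod_cast hK
  have : (0 : ℝ) < K := by linarith
  have hsq (v : V) : ∑ β, listWeight V K β * listCount β v ^ 2 ≤ K / N + (K / N) ^ 2 := by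
    have := sum_listWeight_mul_listCount_mul_listCount_le K v v
    simp_rw [sq (listCount _ v)]
    simpa using this
  rw [sum_mul_card_filter (piWeight fun _ : Fin M => listWeight V K) fun ω v =>
    2 * (K / N) * M ≤ ∑ m, listCount (ω m) v]
  calc _ ≤ ∑ _ : V, (K / N + (K / N) ^ 2) / (M * (K / N) ^ 2) :=
        sum_le_sum fun v _ => sum_piWeight_mul_indicator_two_mul_mean_le (isPMF_listWeight K) hM
          (by positivity) (sum_listWeight_mul_listCount K v) (hsq v)
    _ = N * (N / K + 1) / M := by
        rw [sum_const, card_univ, nsmul_eq_mul, ← hN]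
        field_simp
    _ ≤ N * (N + 1) / M := by
        gcongr
        exact div_le_self hN0.le hK1

lemma sum_piWeight_mul_penalty_le [Nonempty V] (hK : 0 < K) (hM : 0 < M) {c e : ℝ}
    (hcost : ∑ β, listWeight V K β * S.cost β ≤ c)
    (hclash : ∀ β', ∑ β, listWeight V K β * (if S.clash β β' then 1 else 0) ≤ e) :
    ∑ ω : Fin M → Fin K → V, piWeight (fun _ => listWeight V K) ω * S.penalty ω
      ≤ c + (M : ℝ) ^ 2 * e + Fintype.card V * (Fintype.card V + 1) / M := by
  rw [sum_congr rfl fun ω _ => by rw [penalty, mul_add, mul_add], sum_add_distrib, sum_add_distrib]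
  refine add_le_add (add_le_add ?_ ?_) (sum_piWeight_mul_card_overfull_le hK hM)
  · rwa [sum_piWeight_mul_average (isPMF_listWeight K) hM]
  · exact sum_piWeight_mul_card_pairs_le (isPMF_listWeight K) S.clash hclash

end FamilyCriterion

end ListFamilies

section ThreeFamilies

section

variable {A B C : Type*} [Fintype A] [Fintype B] [Fintype C] {p : A → ℝ} {q : B → ℝ} {r : C → ℝ}

lemma exists_add_add_add_le (hp : IsPMF p) (hq : IsPMF q) (hr : IsPMF r) {f : A → ℝ} {g : B → ℝ}
    {h : C → ℝ} {F : A → B → C → ℝ} {τ₁ τ₂ τ₃ τ₀ : ℝ} (hf : ∑ a, p a * f a ≤ τ₁)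
    (hg : ∑ b, q b * g b ≤ τ₂) (hh : ∑ c, r c * h c ≤ τ₃)
    (hF : ∑ a, p a * ∑ b, q b * ∑ c, r c * F a b c ≤ τ₀) :
    ∃ a b c, f a + g b + h c + F a b c ≤ τ₁ + τ₂ + τ₃ + τ₀ := by
  obtain ⟨a, ha⟩ := hp.exists_le
    (f := fun a => f a + ∑ b, q b * ∑ c, r c * F a b c) (c := τ₁ + τ₀) (by
      simp_rw [mul_add, sum_add_distrib]; linarith)
  obtain ⟨b, hb⟩ := hq.exists_le
    (f := fun b => f a + g b + ∑ c, r c * F a b c) (c := τ₁ + τ₂ + τ₀) (by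
      simp_rw [mul_add, sum_add_distrib, hq.sum_mul_const]; linarith)
  obtain ⟨c, hc⟩ := hr.exists_le
    (f := fun c => f a + g b + h c + F a b c) (c := τ₁ + τ₂ + τ₃ + τ₀) (by
      simp_rw [mul_add, sum_add_distrib, hr.sum_mul_const]; linarith)
  exact ⟨a, b, c, hc⟩

lemma sum_mul_mul_sum_comm {τ : Type*} [Fintype τ] (p : A → ℝ) (c : ℝ) (F : τ → A → ℝ) :
    ∑ a, p a * (c * ∑ t, F t a) = c * ∑ t, ∑ a, p a * F t a := by
  simp_rw [mul_left_comm _ c, mul_sum]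
  exact sum_comm

lemma sum_piWeight_mul_average₃ (hp : IsPMF p) (hq : IsPMF q) (hr : IsPMF r) {M₁ M₂ M₃ : ℕ}
    (hM₁ : 0 < M₁) (hM₂ : 0 < M₂) (hM₃ : 0 < M₃) (F : A → B → C → ℝ) :
    ∑ x : Fin M₁ → A, piWeight (fun _ => p) x * ∑ y : Fin M₂ → B, piWeight (fun _ => q) y *
        ∑ z : Fin M₃ → C, piWeight (fun _ => r) z *
        ((M₁ : ℝ)⁻¹ * ∑ i, (M₂ : ℝ)⁻¹ * ∑ j, (M₃ : ℝ)⁻¹ * ∑ l, F (x i) (y j) (z l))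
      = ∑ a, p a * ∑ b, q b * ∑ c, r c * F a b c := by
  have hz (x : Fin M₁ → A) (y : Fin M₂ → B) : ∑ z : Fin M₃ → C, piWeight (fun _ => r) z *
        ((M₁ : ℝ)⁻¹ * ∑ i, (M₂ : ℝ)⁻¹ * ∑ j, (M₃ : ℝ)⁻¹ * ∑ l, F (x i) (y j) (z l))
      = (M₁ : ℝ)⁻¹ * ∑ i, (M₂ : ℝ)⁻¹ * ∑ j, ∑ c, r c * F (x i) (y j) c := by
    rw [sum_mul_mul_sum_comm]
    refine congrArg _ (sum_congr rfl fun i _ => ?_)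
    rw [sum_mul_mul_sum_comm]
    exact congrArg _ (sum_congr rfl fun j _ => sum_piWeight_mul_average hr hM₃ (F (x i) (y j)))
  have hy (x : Fin M₁ → A) : ∑ y : Fin M₂ → B, piWeight (fun _ => q) y *
        ((M₁ : ℝ)⁻¹ * ∑ i, (M₂ : ℝ)⁻¹ * ∑ j, ∑ c, r c * F (x i) (y j) c)
      = (M₁ : ℝ)⁻¹ * ∑ i, ∑ b, q b * ∑ c, r c * F (x i) b c := by
    rw [sum_mul_mul_sum_comm]
    exact congrArg _ (sum_congr rfl fun i _ =>
      sum_piWeight_mul_average hq hM₂ fun b => ∑ c, r c * F (x i) b c)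
  simp_rw [hz, hy]
  exact sum_piWeight_mul_average hp hM₁ fun a => ∑ b, q b * ∑ c, r c * F a b c

end

open FamilyCriterion in
lemma exists_three_isGoodFamily {V : Type*} [Fintype V] {K₁ K₂ K₃ k₁ k₂ k₃ : ℕ} (hk₁ : 0 < k₁)
    (hk₂ : 0 < k₂) (hk₃ : 0 < k₃) (S₁ : FamilyCriterion (Fin K₁ → V))
    (S₂ : FamilyCriterion (Fin K₂ → V)) (S₃ : FamilyCriterion (Fin K₃ → V))
    {x : Fin (2 * k₁) → Fin K₁ → V} {y : Fin (2 * k₂) → Fin K₂ → V} {z : Fin (2 * k₃) → Fin K₃ → V}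
    {b : (Fin K₁ → V) → (Fin K₂ → V) → (Fin K₃ → V) → ℝ} (hb : ∀ α β γ, 0 ≤ b α β γ) {τ : ℝ}
    (hτ : τ < 1)
    (h : S₁.penalty x + S₂.penalty y + S₃.penalty z + ((2 * k₁ : ℕ) : ℝ)⁻¹ * ∑ i,
      ((2 * k₂ : ℕ) : ℝ)⁻¹ * ∑ j, ((2 * k₃ : ℕ) : ℝ)⁻¹ * ∑ l, b (x i) (y j) (z l) ≤ τ) :
    ∃ (α : Fin k₁ → Fin K₁ → V) (β : Fin k₂ → Fin K₂ → V) (γ : Fin k₃ → Fin K₃ → V),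
      (S₁.IsGoodFamily (2 * τ) α ∧ ∀ i, ∑ j, ∑ l, b (α i) (β j) (γ l) ≤ 8 * τ * (k₂ * k₃)) ∧
      (S₂.IsGoodFamily (2 * τ) β ∧ ∀ j, ∑ i, ∑ l, b (α i) (β j) (γ l) ≤ 8 * τ * (k₁ * k₃)) ∧
      (S₃.IsGoodFamily (2 * τ) γ ∧ ∀ l, ∑ i, ∑ j, b (α i) (β j) (γ l) ≤ 8 * τ * (k₁ * k₂)) := by
  have hnonneg {A B : Type} [Fintype A] [Fintype B] {c c' : ℕ} {f : A → B → ℝ}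
      (hf : ∀ a b, 0 ≤ f a b) : 0 ≤ (c : ℝ)⁻¹ * (c' : ℝ)⁻¹ * ∑ a, ∑ b, f a b :=
    mul_nonneg (by positivity) (sum_nonneg fun a _ => sum_nonneg fun b _ => hf a b)
  have h8 : 8 * τ = 4 * (2 * τ) := by ring
  have hp₁ := S₁.penalty_nonneg x
  have hp₂ := S₂.penalty_nonneg y
  have hp₃ := S₃.penalty_nonneg z
  simp_rw [mul_sum] at h
  obtain ⟨ι₁, hι₁, hgood₁, hb₁⟩ := S₁.exists_isGoodFamily hk₁ x
    (ψ := fun i => ((2 * k₂ : ℕ) : ℝ)⁻¹ * ((2 * k₃ : ℕ) : ℝ)⁻¹ * ∑ j, ∑ l, b (x i) (y j) (z l))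
    (fun i => hnonneg fun _ _ => hb _ _ _) hτ (by
      simp_rw [mul_sum, mul_assoc]
      linarith)
  obtain ⟨ι₂, hι₂, hgood₂, hb₂⟩ := S₂.exists_isGoodFamily hk₂ y
    (ψ := fun j => ((2 * k₁ : ℕ) : ℝ)⁻¹ * ((2 * k₃ : ℕ) : ℝ)⁻¹ * ∑ i, ∑ l, b (x i) (y j) (z l))
    (fun j => hnonneg fun _ _ => hb _ _ _) hτ (by
      rw [sum_comm] at h
      simp_rw [mul_sum, mul_assoc,
        mul_left_comm (((2 * k₂ : ℕ) : ℝ)⁻¹) (((2 * k₁ : ℕ) : ℝ)⁻¹)]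
      linarith)
  obtain ⟨ι₃, hι₃, hgood₃, hb₃⟩ := S₃.exists_isGoodFamily hk₃ z
    (ψ := fun l => ((2 * k₁ : ℕ) : ℝ)⁻¹ * ((2 * k₂ : ℕ) : ℝ)⁻¹ * ∑ i, ∑ j, b (x i) (y j) (z l))
    (fun l => hnonneg fun _ _ => hb _ _ _) hτ (by
      simp_rw [sum_comm (s := (univ : Finset (Fin (2 * k₂))))] at h
      rw [sum_comm] at h
      simp_rw [mul_sum, mul_assoc,
        mul_left_comm (((2 * k₃ : ℕ) : ℝ)⁻¹) (((2 * k₁ : ℕ) : ℝ)⁻¹),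
        mul_left_comm (((2 * k₃ : ℕ) : ℝ)⁻¹) (((2 * k₂ : ℕ) : ℝ)⁻¹)]
      linarith)
  refine ⟨x ∘ ι₁, y ∘ ι₂, z ∘ ι₃, ⟨hgood₁, fun i => ?_⟩, ⟨hgood₂, fun j => ?_⟩,
    ⟨hgood₃, fun l => ?_⟩⟩ <;> rw [h8]
  · exact sum_sum_comp_le_of_average_le hk₂ hk₃ hι₂ hι₃ (fun _ _ => hb _ _ _) (hb₁ i)
  · exact sum_sum_comp_le_of_average_le hk₁ hk₃ hι₁ hι₃ (fun _ _ => hb _ _ _) (hb₂ j)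
  · exact sum_sum_comp_le_of_average_le hk₁ hk₂ hι₁ hι₂ (fun _ _ => hb _ _ _) (hb₃ l)

end ThreeFamilies

/-! ### Codes from list decoders -/

section ListDecoding

variable {V B : Type*} [Fintype V] [Fintype B] {w : V → B → ℝ} {T : V → Finset B} {K k : ℕ}
  {ε σ τ : ℝ}

omit [Fintype V] [Fintype B] in
lemma sum_biUnion_le_sum {ι : Type*} [Fintype ι] {g : B → ℝ} (hg : ∀ y, 0 ≤ g y)
    (D : ι → Finset B) : ∑ y ∈ univ.biUnion D, g y ≤ ∑ i, ∑ y ∈ D i, g y := by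
  have key (s : Finset ι) : ∑ y ∈ s.biUnion D, g y ≤ ∑ i ∈ s, ∑ y ∈ D i, g y := by
    induction s using Finset.induction_on with
    | empty => simp
    | insert i s hi ih =>
      have hinter : 0 ≤ ∑ y ∈ D i ∩ s.biUnion D, g y := sum_nonneg fun y _ => hg y
      rw [biUnion_insert, sum_insert hi]
      linarith [sum_union_inter (s₁ := D i) (s₂ := s.biUnion D) (f := g)]
  exact key univ

omit [Fintype V] in
lemma IsChannel.sum_mem_nonneg (hw : IsChannel w) (v : V) (D : Finset B) : 0 ≤ ∑ y ∈ D, w v y :=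
  sum_nonneg fun y _ => hw.1 v y

omit [Fintype V] in
lemma IsChannel.sum_mem_le_one (hw : IsChannel w) (v : V) (D : Finset B) : ∑ y ∈ D, w v y ≤ 1 :=
  hw.2 v ▸ sum_le_sum_of_subset_of_nonneg (subset_univ D) fun y _ _ => hw.1 v y

/-- The decoding set of a list of inputs: the outputs accepted for at least one member. -/
def listDec (T : V → Finset B) (β : Fin K → V) : Finset B :=
  univ.biUnion fun i => T (β i)

omit [Fintype V] in
lemma IsChannel.sum_listDec_le (hw : IsChannel w) (T : V → Finset B) (β : Fin K → V) (v : V) :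
    ∑ y ∈ listDec T β, w v y ≤ ∑ i, ∑ y ∈ T (β i), w v y :=
  sum_biUnion_le_sum (hw.1 v) fun i => T (β i)

/-- Good lists for identification: `cost` is the missed detection probability of the decoding set of
a list for a uniformly drawn member, plus its false detection probability for a uniformly drawn
input; `β` and `β'` clash if many members of `β` are likely to be accepted by the decoding set of
`β'`. -/
def listCriterion (hw : IsChannel w) (T : V → Finset B) (ε : ℝ) : FamilyCriterion (Fin K → V) where
  cost β := (K : ℝ)⁻¹ * ∑ i, ∑ y ∈ (T (β i))ᶜ, w (β i) y
    + (Fintype.card V : ℝ)⁻¹ * ∑ v, ∑ y ∈ listDec T β, w v y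
  clash β β' := (Fintype.card V : ℝ)⁻¹ * ∑ v, ∑ y ∈ listDec T β', w v y ≤ ε ∧
    4 * ε * K ≤ ∑ i, ∑ y ∈ listDec T β', w (β i) y
  cost_nonneg β := add_nonneg
    (mul_nonneg (by positivity) (sum_nonneg fun i _ => hw.sum_mem_nonneg _ _))
    (mul_nonneg (by positivity) (sum_nonneg fun v _ => hw.sum_mem_nonneg _ _))

/-- The sets `T v` decode a uniformly drawn input `v` with missed detection probability at most
`σ`, and with false detection probability so small that it stays below `σ` for `K` inputs. -/
structure IsListDecoder (w : V → B → ℝ) (T : V → Finset B) (K : ℕ) (σ : ℝ) : Prop where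
  miss_le : (Fintype.card V : ℝ)⁻¹ * ∑ v, ∑ y ∈ (T v)ᶜ, w v y ≤ σ
  mul_cross_le : K * ((Fintype.card V : ℝ)⁻¹ * ∑ v', (Fintype.card V : ℝ)⁻¹ *
    ∑ v, ∑ y ∈ T v', w v y) ≤ σ

/-- Conditions under which the bounds on clashes and on overfull elements in a random family of `2k`
lists of `K` elements of `V` are at most `σ`. -/
structure IsListSize (V : Type*) [Fintype V] (K k : ℕ) (ε σ : ℝ) : Prop where
  length_pos : 0 < K
  length_le : K ≤ Fintype.card V
  card_pos : 0 < k
  exp_le : ((2 * k : ℕ) : ℝ) ^ 2 * Real.exp (-(2 * ε * K)) ≤ σ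
  div_le : (Fintype.card V : ℝ) * (Fintype.card V + 1) / k ≤ σ

lemma sum_listWeight_mul_cost_listCriterion_le [Nonempty V] (hw : IsChannel w) (hK : 0 < K)
    (hT : IsListDecoder w T K σ) :
    ∑ β : Fin K → V, listWeight V K β * (listCriterion hw T ε).cost β ≤ 2 * σ := by
  have hK0 : (K : ℝ) ≠ 0 := by exact_mod_cast hK.ne'
  have hcost (β : Fin K → V) : (listCriterion hw T ε).cost β
      ≤ (K : ℝ)⁻¹ * ∑ i, ∑ y ∈ (T (β i))ᶜ, w (β i) y
        + ∑ i, (Fintype.card V : ℝ)⁻¹ * ∑ v, ∑ y ∈ T (β i), w v y := by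
    refine add_le_add le_rfl ((mul_le_mul_of_nonneg_left
      (sum_le_sum fun v _ => hw.sum_listDec_le T β v) (by positivity)).trans_eq ?_)
    rw [sum_comm, mul_sum]
  calc _ ≤ ∑ β, listWeight V K β * ((K : ℝ)⁻¹ * ∑ i, ∑ y ∈ (T (β i))ᶜ, w (β i) y
          + ∑ i, (Fintype.card V : ℝ)⁻¹ * ∑ v, ∑ y ∈ T (β i), w v y) :=
        sum_le_sum fun β _ => mul_le_mul_of_nonneg_left (hcost β) ((isPMF_listWeight K).1 β)
    _ = (Fintype.card V : ℝ)⁻¹ * ∑ v, ∑ y ∈ (T v)ᶜ, w v y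
        + K * ((Fintype.card V : ℝ)⁻¹ * ∑ v', (Fintype.card V : ℝ)⁻¹ *
          ∑ v, ∑ y ∈ T v', w v y) := by
        simp_rw [mul_add, sum_add_distrib, mul_left_comm _ (K : ℝ)⁻¹]
        rw [← mul_sum, sum_listWeight_mul_sum fun v => ∑ y ∈ (T v)ᶜ, w v y,
          sum_listWeight_mul_sum fun v' => (Fintype.card V : ℝ)⁻¹ * ∑ v, ∑ y ∈ T v', w v y,
          inv_mul_cancel_left₀ hK0]
    _ ≤ 2 * σ := by linarith [hT.miss_le, hT.mul_cross_le]

lemma sum_listWeight_mul_clash_listCriterion_le [Nonempty V] (hw : IsChannel w) (T : V → Finset B)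
    (ε : ℝ) (β' : Fin K → V) :
    ∑ β, listWeight V K β * (if (listCriterion hw T ε).clash β β' then 1 else 0)
      ≤ Real.exp (-(2 * ε * K)) := by
  by_cases h : (Fintype.card V : ℝ)⁻¹ * ∑ v, ∑ y ∈ listDec T β', w v y ≤ ε
  · simp only [listCriterion, h, true_and]
    exact sum_listWeight_mul_indicator_le_exp (fun v => hw.sum_mem_nonneg v _)
      (fun v => hw.sum_mem_le_one v _) h K
  · simp [listCriterion, h, Real.exp_nonneg]

namespace FamilyCriterion

lemma sum_piWeight_mul_penalty_le_of_isListSize [Nonempty V] (S : FamilyCriterion (Fin K → V))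
    (h : IsListSize V K k ε σ) (hcost : ∑ β, listWeight V K β * S.cost β ≤ 4 * σ)
    (hclash : ∀ β', ∑ β, listWeight V K β * (if S.clash β β' then 1 else 0)
      ≤ 2 * Real.exp (-(2 * ε * K))) :
    ∑ ω : Fin (2 * k) → Fin K → V, piWeight (fun _ => listWeight V K) ω * S.penalty ω
      ≤ 7 * σ := by
  have hk := h.card_pos
  have hdiv : (Fintype.card V : ℝ) * (Fintype.card V + 1) / (2 * k : ℕ) ≤ σ := by
    refine le_trans ?_ h.div_le
    gcongr
    omega
  calc _ ≤ 4 * σ + ((2 * k : ℕ) : ℝ) ^ 2 * (2 * Real.exp (-(2 * ε * K)))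
        + Fintype.card V * (Fintype.card V + 1) / (2 * k : ℕ) :=
        S.sum_piWeight_mul_penalty_le h.length_pos (by omega) hcost hclash
    _ ≤ 7 * σ := by linarith [h.exp_le]

/-- The conjunction of two criteria. -/
def and {L : Type*} (S S' : FamilyCriterion L) : FamilyCriterion L where
  cost a := S.cost a + S'.cost a
  clash a b := S.clash a b ∨ S'.clash a b
  cost_nonneg a := add_nonneg (S.cost_nonneg a) (S'.cost_nonneg a)

variable {S S' : FamilyCriterion (Fin K → V)} {α : Fin k → Fin K → V}

lemma IsGoodFamily.mono {τ' : ℝ} (h : S.IsGoodFamily τ α) (hτ : τ ≤ τ') : S.IsGoodFamily τ' α :=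
  ⟨fun i => (h.1 i).trans hτ, h.2⟩

lemma IsGoodFamily.left (h : (S.and S').IsGoodFamily τ α) : S.IsGoodFamily τ α :=
  ⟨fun i => (le_add_of_nonneg_right (S'.cost_nonneg _)).trans (h.1 i),
    fun i i' hi hclash => h.2.1 i i' hi (Or.inl hclash), h.2.2⟩

lemma IsGoodFamily.right (h : (S.and S').IsGoodFamily τ α) : S'.IsGoodFamily τ α :=
  ⟨fun i => (le_add_of_nonneg_left (S.cost_nonneg _)).trans (h.1 i),
    fun i i' hi hclash => h.2.1 i i' hi (Or.inr hclash), h.2.2⟩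

end FamilyCriterion

lemma sum_piWeight_mul_penalty_listCriterion_le [Nonempty V] (hw : IsChannel w)
    (h : IsListSize V K k ε σ) (hσ : 0 ≤ σ) (hT : IsListDecoder w T K σ) :
    ∑ ω : Fin (2 * k) → Fin K → V, piWeight (fun _ => listWeight V K) ω *
      (listCriterion hw T ε).penalty ω ≤ 7 * σ :=
  (listCriterion hw T ε).sum_piWeight_mul_penalty_le_of_isListSize h
    ((sum_listWeight_mul_cost_listCriterion_le hw h.length_pos hT).trans (by linarith))
    fun β' => (sum_listWeight_mul_clash_listCriterion_le hw T ε β').trans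
      (by linarith [Real.exp_nonneg (-(2 * ε * K))])

lemma sum_piWeight_mul_penalty_and_listCriterion_le {B' : Type*} [Fintype B'] [Nonempty V]
    {w' : V → B' → ℝ} {T' : V → Finset B'} (hw : IsChannel w) (hw' : IsChannel w')
    (h : IsListSize V K k ε σ) (hT : IsListDecoder w T K σ) (hT' : IsListDecoder w' T' K σ) :
    ∑ ω : Fin (2 * k) → Fin K → V, piWeight (fun _ => listWeight V K) ω *
      ((listCriterion hw T ε).and (listCriterion hw' T' ε)).penalty ω ≤ 7 * σ := by
  refine FamilyCriterion.sum_piWeight_mul_penalty_le_of_isListSize _ h ?_ fun β' => ?_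
  · simp only [FamilyCriterion.and, mul_add, sum_add_distrib]
    linarith [sum_listWeight_mul_cost_listCriterion_le (ε := ε) hw h.length_pos hT,
      sum_listWeight_mul_cost_listCriterion_le (ε := ε) hw' h.length_pos hT']
  · have hor (β : Fin K → V) :
        (if ((listCriterion hw T ε).and (listCriterion hw' T' ε)).clash β β' then (1 : ℝ) else 0)
          ≤ (if (listCriterion hw T ε).clash β β' then 1 else 0)
            + if (listCriterion hw' T' ε).clash β β' then 1 else 0 := by
      by_cases h₁ : (listCriterion hw T ε).clash β β' <;>
        by_cases h₂ : (listCriterion hw' T' ε).clash β β' <;>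
          simp [FamilyCriterion.and, h₁, h₂]
    calc _ ≤ ∑ β, listWeight V K β * ((if (listCriterion hw T ε).clash β β' then 1 else 0)
            + if (listCriterion hw' T' ε).clash β β' then 1 else 0) :=
          sum_le_sum fun β _ => mul_le_mul_of_nonneg_left (hor β) ((isPMF_listWeight K).1 β)
      _ ≤ 2 * Real.exp (-(2 * ε * K)) := by
          simp_rw [mul_add, sum_add_distrib]
          linarith [sum_listWeight_mul_clash_listCriterion_le hw T ε β',
            sum_listWeight_mul_clash_listCriterion_le hw' T' ε β']

/-- Both error probabilities of the identification code `(Q, D)` over the channel `w` are at most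
`l`; for `w = Wn W n` this is `IDCodeErr n W Q D l l`. -/
def HasIDErrors {M : Type*} (w : V → B → ℝ) (Q : M → V → ℝ) (D : M → Finset B) (l : ℝ) : Prop :=
  (∀ m, ∑ v, Q m v * ∑ y ∈ (D m)ᶜ, w v y ≤ l) ∧
    ∀ m m', m ≠ m' → ∑ v, Q m v * ∑ y ∈ D m', w v y ≤ l

lemma hasIDErrors_listDec (hw : IsChannel w) (hK : 0 < K) {α : Fin k → Fin K → V}
    {Q : Fin k → V → ℝ}
    (hQ : ∀ m (f : V → ℝ), (∀ v, 0 ≤ f v) → (∀ v, f v ≤ 1) →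
      ∑ v, Q m v * f v ≤ 4 * ε + 32 * ((K : ℝ)⁻¹ * ∑ i, f (α m i)))
    (hα : (listCriterion hw T ε).IsGoodFamily ε α) :
    HasIDErrors w Q (fun m => listDec T (α m)) (132 * ε) := by
  have hK0 : (0 : ℝ) < K := by exact_mod_cast hK
  have hmiss0 (m) : 0 ≤ (K : ℝ)⁻¹ * ∑ i, ∑ y ∈ (T (α m i))ᶜ, w (α m i) y :=
    mul_nonneg (by positivity) (sum_nonneg fun i _ => hw.sum_mem_nonneg _ _)
  have hfalse0 (m) : 0 ≤ (Fintype.card V : ℝ)⁻¹ * ∑ v, ∑ y ∈ listDec T (α m), w v y :=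
    mul_nonneg (by positivity) (sum_nonneg fun i _ => hw.sum_mem_nonneg _ _)
  obtain ⟨hcost, hclash, -⟩ := hα
  refine ⟨fun m => ?_, fun m m' hmm => ?_⟩
  all_goals refine
    (hQ m _ (fun v => hw.sum_mem_nonneg v _) fun v => hw.sum_mem_le_one v _).trans ?_
  · have hmem : (K : ℝ)⁻¹ * ∑ i, ∑ y ∈ (listDec T (α m))ᶜ, w (α m i) y
        ≤ (K : ℝ)⁻¹ * ∑ i, ∑ y ∈ (T (α m i))ᶜ, w (α m i) y := by
      gcongr with i
      · exact fun y _ _ => hw.1 _ y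
      · exact subset_biUnion_of_mem (fun i => T (α m i)) (mem_univ i)
    have := hcost m
    simp only [listCriterion] at this
    linarith [hfalse0 m, hmiss0 m]
  · have := hcost m'
    simp only [listCriterion] at this
    have hfew : ∑ i, ∑ y ∈ listDec T (α m'), w (α m i) y < 4 * ε * K := by
      by_contra! h
      exact hclash m m' hmm ⟨by linarith [hmiss0 m'], h⟩
    have hfew' : (K : ℝ)⁻¹ * ∑ i, ∑ y ∈ listDec T (α m'), w (α m i) y ≤ 4 * ε := by
      rw [inv_mul_le_iff₀ hK0]
      linarith
    linarith

end ListDecoding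

section TripleWeight

variable {V : Type*} [Fintype V] {s : ℝ} {a b c f : V → ℝ}

/-- The input distribution of the encoder: three lists with multiplicities `a`, `b`, `c` are encoded
by a random one of their coincidences, unless there are fewer than `s / 2` of them. -/
def tripleWeight (s : ℝ) (a b c : V → ℝ) (v : V) : ℝ :=
  if tripleMass a b c < s / 2 then uniformWeight V v else a v * b v * c v / tripleMass a b c

lemma tripleWeight_comm (s : ℝ) (a b c : V → ℝ) : tripleWeight s a b c = tripleWeight s b a c := by
  funext v
  simp only [tripleWeight, tripleMass_comm b a c, mul_comm (b v)]

lemma tripleWeight_rotate (s : ℝ) (a b c : V → ℝ) :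
    tripleWeight s a b c = tripleWeight s c a b := by
  funext v
  simp only [tripleWeight, tripleMass_rotate a b c, mul_rotate (c v), mul_assoc]

variable [Nonempty V]

lemma isPMF_tripleWeight (hs : 0 < s) (ha : ∀ v, 0 ≤ a v) (hb : ∀ v, 0 ≤ b v)
    (hc : ∀ v, 0 ≤ c v) : IsPMF (tripleWeight s a b c) := by
  by_cases h : tripleMass a b c < s / 2
  · have heq : tripleWeight s a b c = uniformWeight V := funext fun v => if_pos h
    exact heq ▸ isPMF_uniformWeight
  · have hpos : 0 < tripleMass a b c := by linarith
    refine ⟨fun v => ?_, ?_⟩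
    all_goals simp only [tripleWeight, h, if_false]
    · exact div_nonneg (mul_nonneg (mul_nonneg (ha v) (hb v)) (hc v)) hpos.le
    · rw [← sum_div]
      exact div_self hpos.ne'

lemma sum_tripleWeight_mul_le (hs : 0 < s) (ha : ∀ v, 0 ≤ a v) (hb : ∀ v, 0 ≤ b v)
    (hc : ∀ v, 0 ≤ c v) (hf : ∀ v, 0 ≤ f v) (hf1 : ∀ v, f v ≤ 1) :
    ∑ v, tripleWeight s a b c v * f v
      ≤ (if tripleMass a b c < s / 2 then 1 else 0) + 2 / s * ∑ v, a v * b v * c v * f v := by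
  have hsum : 0 ≤ ∑ v, a v * b v * c v * f v :=
    sum_nonneg fun v _ => mul_nonneg (mul_nonneg (mul_nonneg (ha v) (hb v)) (hc v)) (hf v)
  split_ifs with h
  · have := (isPMF_tripleWeight hs ha hb hc).sum_mul_le hf1
    have : 0 ≤ 2 / s * ∑ v, a v * b v * c v * f v := by positivity
    linarith
  · simp only [tripleWeight, h, if_false, zero_add, div_mul_eq_mul_div]
    rw [← sum_div, div_le_div_iff₀ (by linarith) hs]
    nlinarith

lemma sum_sum_sum_tripleWeight_mul_le {J L : Type*} [Fintype J] [Fintype L] (hs : 0 < s)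
    {b : J → V → ℝ} {c : L → V → ℝ} (ha : ∀ v, 0 ≤ a v) (hb : ∀ j v, 0 ≤ b j v)
    (hc : ∀ l v, 0 ≤ c l v) {d e : ℝ} (hbd : ∀ v, ∑ j, b j v ≤ d) (hce : ∀ v, ∑ l, c l v ≤ e)
    (hf : ∀ v, 0 ≤ f v) (hf1 : ∀ v, f v ≤ 1) :
    ∑ j, ∑ l, ∑ v, tripleWeight s a (b j) (c l) v * f v
      ≤ ∑ j, ∑ l, (if tripleMass a (b j) (c l) < s / 2 then 1 else 0)
        + 2 / s * (d * e) * ∑ v, a v * f v := by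
  have hcol : ∑ j, ∑ l, ∑ v, a v * b j v * c l v * f v ≤ d * e * ∑ v, a v * f v := by
    calc ∑ j, ∑ l, ∑ v, a v * b j v * c l v * f v
        = ∑ v, (∑ j, b j v) * (∑ l, c l v) * (a v * f v) := by
          simp_rw [sum_mul_sum, sum_mul]
          refine ((sum_congr rfl fun j _ => sum_comm).trans sum_comm).trans ?_
          exact sum_congr rfl fun v _ => sum_congr rfl fun j _ => sum_congr rfl fun l _ => by ring
      _ ≤ ∑ v, d * e * (a v * f v) := by
          refine sum_le_sum fun v _ => mul_le_mul_of_nonneg_right ?_ (mul_nonneg (ha v) (hf v))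
          exact mul_le_mul (hbd v) (hce v) (sum_nonneg fun l _ => hc l v)
            ((sum_nonneg fun j _ => hb j v).trans (hbd v))
      _ = d * e * ∑ v, a v * f v := by rw [mul_sum]
  calc _ ≤ ∑ j, ∑ l, ((if tripleMass a (b j) (c l) < s / 2 then 1 else 0)
        + 2 / s * ∑ v, a v * b j v * c l v * f v) :=
        sum_le_sum fun j _ => sum_le_sum fun l _ =>
          sum_tripleWeight_mul_le hs ha (hb j) (hc l) hf hf1
    _ = ∑ j, ∑ l, (if tripleMass a (b j) (c l) < s / 2 then 1 else 0)
        + 2 / s * ∑ j, ∑ l, ∑ v, a v * b j v * c l v * f v := by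
        simp_rw [sum_add_distrib, ← mul_sum]
    _ ≤ _ := by
        rw [mul_assoc (2 / s)]
        gcongr

omit [Nonempty V] in
lemma sum_average_mul {I J : Type*} [Fintype I] [Fintype J] (t : ℝ) (Q : I → J → V → ℝ)
    (f : V → ℝ) :
    ∑ v, (t * ∑ i, ∑ j, Q i j v) * f v = t * ∑ i, ∑ j, ∑ v, Q i j v * f v := by
  simp_rw [mul_assoc, ← mul_sum, sum_mul]
  congr 1
  exact sum_comm.trans (sum_congr rfl fun i _ => sum_comm)

lemma sum_average_tripleWeight_mul_le {K₁ K₂ K₃ k₂ k₃ : ℕ} (hK₁ : 0 < K₁) (hK₂ : 0 < K₂)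
    (hK₃ : 0 < K₃) (hk₂ : 0 < k₂) (hk₃ : 0 < k₃) {ε : ℝ}
    (hs : s = (K₁ * K₂ * K₃ : ℝ) / (Fintype.card V : ℝ) ^ 2) {α : Fin K₁ → V}
    {β : Fin k₂ → Fin K₂ → V} {γ : Fin k₃ → Fin K₃ → V}
    (hβ : ∀ v, ∑ j, listCount (β j) v ≤ 4 * ((K₂ : ℝ) / Fintype.card V) * k₂)
    (hγ : ∀ v, ∑ l, listCount (γ l) v ≤ 4 * ((K₃ : ℝ) / Fintype.card V) * k₃)
    (hfew : ∑ j, ∑ l, (if tripleMass (listCount α) (listCount (β j)) (listCount (γ l)) < s / 2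
      then (1 : ℝ) else 0) ≤ 4 * ε * (k₂ * k₃))
    (hf : ∀ v, 0 ≤ f v) (hf1 : ∀ v, f v ≤ 1) :
    ∑ v, (((k₂ * k₃ : ℕ) : ℝ)⁻¹ * ∑ j, ∑ l,
        tripleWeight s (listCount α) (listCount (β j)) (listCount (γ l)) v) * f v
      ≤ 4 * ε + 32 * ((K₁ : ℝ)⁻¹ * ∑ i, f (α i)) := by
  have : (0 : ℝ) < Fintype.card V := by exact_mod_cast Fintype.card_pos
  have hs0 : 0 < s := by
    rw [hs]
    positivity
  have hconst : 2 / s * (4 * ((K₂ : ℝ) / Fintype.card V) * k₂ * (4 * (K₃ / Fintype.card V) * k₃))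
      = k₂ * k₃ * (32 * (K₁ : ℝ)⁻¹) := by
    rw [hs]
    field_simp
    norm_num
  have hsum := sum_sum_sum_tripleWeight_mul_le hs0 (listCount_nonneg α)
    (fun j => listCount_nonneg (β j)) (fun l => listCount_nonneg (γ l)) hβ hγ hf hf1
  rw [sum_average_mul, inv_mul_le_iff₀ (by positivity)]
  refine hsum.trans ?_
  rw [hconst, sum_listCount_mul]
  push_cast
  linarith

end TripleWeight

/-- `IsCMSIDCode` over arbitrary channels `wY`, `wZ` with a common input alphabet and a common
bound `l` on all errors; for `n`-letter channels it is `IsCMSIDCode`. -/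
def IsSeparateIDCode {V B C : Type*} [Fintype V] [Fintype B] [Fintype C] {k kY kZ : ℕ}
    (wY : V → B → ℝ) (wZ : V → C → ℝ) (Q : Fin k → Fin kY → Fin kZ → V → ℝ)
    (DcY : Fin k → Finset B) (DY : Fin kY → Finset B) (DcZ : Fin k → Finset C)
    (DZ : Fin kZ → Finset C) (l : ℝ) : Prop :=
  (∀ m my mz, IsPMF (Q m my mz)) ∧
  HasIDErrors wY (fun m v => ((kY * kZ : ℕ) : ℝ)⁻¹ * ∑ my, ∑ mz, Q m my mz v) DcY l ∧
  HasIDErrors wY (fun my v => ((k * kZ : ℕ) : ℝ)⁻¹ * ∑ m, ∑ mz, Q m my mz v) DY l ∧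
  HasIDErrors wZ (fun m v => ((kY * kZ : ℕ) : ℝ)⁻¹ * ∑ my, ∑ mz, Q m my mz v) DcZ l ∧
  HasIDErrors wZ (fun mz v => ((k * kY : ℕ) : ℝ)⁻¹ * ∑ m, ∑ my, Q m my mz v) DZ l

/-- There is a code with `k` common, `kY` and `kZ` private messages in the sense of
`IsSeparateIDCode`. -/
def HasSeparateIDCode {V B C : Type*} [Fintype V] [Fintype B] [Fintype C] (wY : V → B → ℝ)
    (wZ : V → C → ℝ) (k kY kZ : ℕ) (l : ℝ) : Prop :=
  ∃ (Q : Fin k → Fin kY → Fin kZ → V → ℝ) (DcY : Fin k → Finset B) (DY : Fin kY → Finset B)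
    (DcZ : Fin k → Finset C) (DZ : Fin kZ → Finset C), IsSeparateIDCode wY wZ Q DcY DY DcZ DZ l

section PoolCode

variable {V B C : Type*} [Fintype V] [Nonempty V] [Fintype B] [Fintype C] {wY : V → B → ℝ}
  {wZ : V → C → ℝ} {TY : V → Finset B} {TZ : V → Finset C} {σ ε : ℝ} {K₁ K₂ K₃ k₁ k₂ k₃ : ℕ}

lemma exists_three_isGoodFamily_listCriterion (hwY : IsChannel wY) (hwZ : IsChannel wZ)
    (hσ₀ : 0 ≤ σ) (hσ : 22 * σ < 1) (h₁ : IsListSize V K₁ k₁ ε σ) (h₂ : IsListSize V K₂ k₂ ε σ)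
    (h₃ : IsListSize V K₃ k₃ ε σ) (hY₁ : IsListDecoder wY TY K₁ σ)
    (hZ₁ : IsListDecoder wZ TZ K₁ σ) (hY₂ : IsListDecoder wY TY K₂ σ)
    (hZ₃ : IsListDecoder wZ TZ K₃ σ) {s : ℝ}
    (hs : s = (K₁ * K₂ * K₃ : ℝ) / (Fintype.card V : ℝ) ^ 2) (hsσ : 32 / s ≤ σ) :
    ∃ (α : Fin k₁ → Fin K₁ → V) (β : Fin k₂ → Fin K₂ → V) (γ : Fin k₃ → Fin K₃ → V),
      (((listCriterion hwY TY ε).and (listCriterion hwZ TZ ε)).IsGoodFamily (44 * σ) α ∧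
        ∀ i, ∑ j, ∑ l, (if tripleMass (listCount (α i)) (listCount (β j)) (listCount (γ l)) < s / 2
          then (1 : ℝ) else 0) ≤ 176 * σ * (k₂ * k₃)) ∧
      ((listCriterion hwY TY ε).IsGoodFamily (44 * σ) β ∧
        ∀ j, ∑ i, ∑ l, (if tripleMass (listCount (α i)) (listCount (β j)) (listCount (γ l)) < s / 2
          then (1 : ℝ) else 0) ≤ 176 * σ * (k₁ * k₃)) ∧
      ((listCriterion hwZ TZ ε).IsGoodFamily (44 * σ) γ ∧
        ∀ l, ∑ i, ∑ j, (if tripleMass (listCount (α i)) (listCount (β j)) (listCount (γ l)) < s / 2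
          then (1 : ℝ) else 0) ≤ 176 * σ * (k₁ * k₂)) := by
  have hPMF (k K : ℕ) : IsPMF (piWeight fun _ : Fin k => listWeight V K) :=
    isPMF_piWeight fun _ => isPMF_listWeight K
  subst hs
  let b (a : Fin K₁ → V) (a' : Fin K₂ → V) (a'' : Fin K₃ → V) : ℝ :=
    if tripleMass (listCount a) (listCount a') (listCount a'')
      < (K₁ * K₂ * K₃ : ℝ) / (Fintype.card V : ℝ) ^ 2 / 2 then 1 else 0
  have hmean : ∑ a, listWeight V K₁ a * ∑ a', listWeight V K₂ a' * ∑ a'', listWeight V K₃ a'' *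
      b a a' a'' ≤ σ :=
    (sum_listWeight_mul_tripleMass_lt_le h₁.length_pos h₂.length_pos h₃.length_pos
      h₁.length_le h₂.length_le h₃.length_le).trans hsσ
  have haverage := (sum_piWeight_mul_average₃ (isPMF_listWeight K₁) (isPMF_listWeight K₂)
    (isPMF_listWeight K₃) (Nat.mul_pos two_pos h₁.card_pos) (Nat.mul_pos two_pos h₂.card_pos)
    (Nat.mul_pos two_pos h₃.card_pos) b).trans_le hmean
  obtain ⟨x, y, z, h⟩ := exists_add_add_add_le (hPMF (2 * k₁) K₁) (hPMF (2 * k₂) K₂)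
    (hPMF (2 * k₃) K₃)
    (sum_piWeight_mul_penalty_and_listCriterion_le hwY hwZ h₁ hY₁ hZ₁)
    (sum_piWeight_mul_penalty_listCriterion_le hwY h₂ hσ₀ hY₂)
    (sum_piWeight_mul_penalty_listCriterion_le hwZ h₃ hσ₀ hZ₃) haverage
  have h2 : 2 * (22 * σ) = 44 * σ := by ring
  have h8 : 8 * (22 * σ) = 176 * σ := by ring
  rw [← h2, ← h8]
  exact exists_three_isGoodFamily h₁.card_pos h₂.card_pos h₃.card_pos _ _ _
    (b := b) (fun _ _ _ => ite_nonneg zero_le_one le_rfl) hσ (h.trans (by linarith))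

lemma hasSeparateIDCode_of_isListDecoder (hwY : IsChannel wY) (hwZ : IsChannel wZ)
    (hσ₀ : 0 ≤ σ) (hσ : 22 * σ < 1) (hσε : 44 * σ ≤ ε) (h₁ : IsListSize V K₁ k₁ ε σ)
    (h₂ : IsListSize V K₂ k₂ ε σ) (h₃ : IsListSize V K₃ k₃ ε σ) (hY₁ : IsListDecoder wY TY K₁ σ)
    (hZ₁ : IsListDecoder wZ TZ K₁ σ) (hY₂ : IsListDecoder wY TY K₂ σ)
    (hZ₃ : IsListDecoder wZ TZ K₃ σ)
    (htriple : 32 / ((K₁ * K₂ * K₃ : ℝ) / (Fintype.card V : ℝ) ^ 2) ≤ σ) :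
    HasSeparateIDCode wY wZ k₁ k₂ k₃ (132 * ε) := by
  set s : ℝ := (K₁ * K₂ * K₃ : ℝ) / (Fintype.card V : ℝ) ^ 2 with hs
  obtain ⟨α, β, γ, ⟨hα, bα⟩, ⟨hβ, bβ⟩, ⟨hγ, bγ⟩⟩ := exists_three_isGoodFamily_listCriterion hwY hwZ
    hσ₀ hσ h₁ h₂ h₃ hY₁ hZ₁ hY₂ hZ₃ hs htriple
  have hK₁ := h₁.length_pos
  have hK₂ := h₂.length_pos
  have hK₃ := h₃.length_pos
  have : (0 : ℝ) < Fintype.card V := by exact_mod_cast Fintype.card_pos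
  have hs0 : 0 < s := by positivity
  have hfew (m n : ℕ) : 176 * σ * (m * n) ≤ 4 * ε * (m * n : ℝ) :=
    mul_le_mul_of_nonneg_right (by linarith) (by positivity)
  have hQ₁ (i) (f : V → ℝ) (hf : ∀ v, 0 ≤ f v) (hf1 : ∀ v, f v ≤ 1) :=
    sum_average_tripleWeight_mul_le hK₁ hK₂ hK₃ h₂.card_pos h₃.card_pos hs hβ.2.2 hγ.2.2
      ((bα i).trans (hfew _ _)) hf hf1
  have hQ₂ (j) (f : V → ℝ) (hf : ∀ v, 0 ≤ f v) (hf1 : ∀ v, f v ≤ 1) := by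
    simp_rw [tripleMass_comm (listCount (α _))] at bβ
    exact sum_average_tripleWeight_mul_le hK₂ hK₁ hK₃ h₁.card_pos h₃.card_pos
      (by rw [hs, mul_comm (K₂ : ℝ)]) hα.2.2 hγ.2.2 ((bβ j).trans (hfew _ _)) hf hf1
  have hQ₃ (l) (f : V → ℝ) (hf : ∀ v, 0 ≤ f v) (hf1 : ∀ v, f v ≤ 1) := by
    simp_rw [tripleMass_rotate (listCount (α _))] at bγ
    exact sum_average_tripleWeight_mul_le hK₃ hK₁ hK₂ h₁.card_pos h₂.card_pos
      (by rw [hs, mul_rotate, mul_rotate]) hα.2.2 hβ.2.2 ((bγ l).trans (hfew _ _)) hf hf1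
  simp_rw [← tripleWeight_comm s (listCount (α _))] at hQ₂
  simp_rw [← tripleWeight_rotate s (listCount (α _))] at hQ₃
  exact ⟨fun i j l => tripleWeight s (listCount (α i)) (listCount (β j)) (listCount (γ l)),
    fun i => listDec TY (α i), fun j => listDec TY (β j), fun i => listDec TZ (α i),
    fun l => listDec TZ (γ l), fun i j l => isPMF_tripleWeight hs0 (listCount_nonneg _)
      (listCount_nonneg _) (listCount_nonneg _),
    hasIDErrors_listDec hwY hK₁ hQ₁ (hα.left.mono hσε),
    hasIDErrors_listDec hwY hK₂ hQ₂ (hβ.mono hσε),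
    hasIDErrors_listDec hwZ hK₁ hQ₁ (hα.right.mono hσε),
    hasIDErrors_listDec hwZ hK₃ hQ₃ (hγ.mono hσε)⟩

end PoolCode

section CodewordPool

variable {A B : Type*} [Fintype A] [Fintype B]

/-- The missed detection probability of the decoding sets `T` for a uniformly drawn input, plus `c`
times their false detection probability for two independent such inputs. -/
def decodingCost (w : A → B → ℝ) (T : A → Finset B) (c : ℝ) : ℝ :=
  (Fintype.card A : ℝ)⁻¹ * ∑ a, ∑ y ∈ (T a)ᶜ, w a y +
    c * ((Fintype.card A : ℝ)⁻¹ * ∑ a', (Fintype.card A : ℝ)⁻¹ * ∑ a, ∑ y ∈ T a', w a y)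

variable {w : A → B → ℝ} {T : A → Finset B}

lemma IsChannel.cross_nonneg (hw : IsChannel w) :
    0 ≤ (Fintype.card A : ℝ)⁻¹ * ∑ a', (Fintype.card A : ℝ)⁻¹ * ∑ a, ∑ y ∈ T a', w a y :=
  mul_nonneg (by positivity) (sum_nonneg fun _ _ => mul_nonneg (by positivity)
    (sum_nonneg fun a _ => hw.sum_mem_nonneg a _))

lemma IsChannel.miss_nonneg (hw : IsChannel w) :
    0 ≤ (Fintype.card A : ℝ)⁻¹ * ∑ a, ∑ y ∈ (T a)ᶜ, w a y :=
  mul_nonneg (by positivity) (sum_nonneg fun a _ => hw.sum_mem_nonneg a _)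

lemma decodingCost_nonneg (hw : IsChannel w) {c : ℝ} (hc : 0 ≤ c) : 0 ≤ decodingCost w T c :=
  add_nonneg hw.miss_nonneg (mul_nonneg hc hw.cross_nonneg)

lemma isListDecoder_of_decodingCost_le (hw : IsChannel w) {K : ℕ} {c σ : ℝ} (hK : K ≤ c)
    (h : decodingCost w T c ≤ σ) : IsListDecoder w T K σ where
  miss_le := (le_add_of_nonneg_right
    (mul_nonneg (K.cast_nonneg.trans hK) hw.cross_nonneg)).trans h
  mul_cross_le := ((mul_le_mul_of_nonneg_right hK hw.cross_nonneg).trans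
    (le_add_of_nonneg_left hw.miss_nonneg)).trans h

lemma sum_piWeight_mul_pair_average_le {p : A → ℝ} (hp : IsPMF p) {N : ℕ} (hN : 0 < N)
    {F : A → A → ℝ} {e : ℝ} (he : 0 ≤ e) (hF : ∀ a, F a a ≤ 1) (hFe : ∀ b, ∑ a, p a * F a b ≤ e) :
    ∑ ω : Fin N → A, piWeight (fun _ => p) ω * ((N : ℝ)⁻¹ *
      ∑ v', (N : ℝ)⁻¹ * ∑ v, F (ω v) (ω v')) ≤ (N : ℝ)⁻¹ + e := by
  have : (0 : ℝ) < N := by exact_mod_cast hN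
  have hpair (v v' : Fin N) : ∑ ω : Fin N → A, piWeight (fun _ => p) ω * F (ω v) (ω v')
      ≤ (if v' = v then 1 else 0) + e := by
    split_ifs with h
    · subst h
      rw [sum_piWeight_mul_apply (fun _ => hp) v' fun a => F a a]
      linarith [hp.sum_mul_le hF]
    · rw [sum_piWeight_mul_apply₂ (fun _ => hp) h fun b a => F a b]
      linarith [hp.sum_mul_le hFe]
  calc _ = (N : ℝ)⁻¹ * ∑ v' : Fin N, (N : ℝ)⁻¹ * ∑ v : Fin N,
        ∑ ω : Fin N → A, piWeight (fun _ => p) ω * F (ω v) (ω v') := by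
        rw [sum_mul_mul_sum_comm]
        simp_rw [sum_mul_mul_sum_comm]
    _ ≤ (N : ℝ)⁻¹ * ∑ v' : Fin N, (N : ℝ)⁻¹ * ∑ v : Fin N, ((if v' = v then 1 else 0) + e) := by
        gcongr with v' _ v _
        exact hpair v v'
    _ = (N : ℝ)⁻¹ + e := by
        simp only [sum_add_distrib, sum_ite_eq, mem_univ, if_true, sum_const, card_univ,
          Fintype.card_fin, nsmul_eq_mul]
        field_simp

lemma sum_piWeight_mul_decodingCost_le (hw : IsChannel w) {p : A → ℝ} (hp : IsPMF p) {N : ℕ}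
    (hN : 0 < N) {c e e' : ℝ} (hc : 0 ≤ c) (he : 0 ≤ e)
    (hmiss : ∑ a, p a * ∑ y ∈ (T a)ᶜ, w a y ≤ e')
    (hcross : ∀ a', ∑ a, p a * ∑ y ∈ T a', w a y ≤ e) :
    ∑ ω : Fin N → A, piWeight (fun _ => p) ω *
      decodingCost (fun v => w (ω v)) (fun v => T (ω v)) c ≤ e' + c * ((N : ℝ)⁻¹ + e) := by
  simp only [decodingCost, Fintype.card_fin, mul_add, sum_add_distrib, mul_left_comm _ c]
  rw [← mul_sum, ← mul_add]
  refine add_le_add ?_ (mul_le_mul_of_nonneg_left ?_ hc)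
  · exact (sum_piWeight_mul_average hp hN fun a => ∑ y ∈ (T a)ᶜ, w a y).trans_le hmiss
  · exact sum_piWeight_mul_pair_average_le (F := fun a b => ∑ y ∈ T b, w a y) hp hN he
      (fun a => hw.sum_mem_le_one a _) hcross

end CodewordPool

section TypicalOutputs

variable {X Y Z : Type*} [Fintype X] [Fintype Y] [Fintype Z] {P : X → ℝ} {W : X → Y → ℝ}

/-- The outputs whose information density with `x` is at least `n * (I(P, W) - δ)`. -/
def typicalOutputs (P : X → ℝ) (W : X → Y → ℝ) (δ : ℝ) {n : ℕ} (x : Fin n → X) :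
    Finset (Fin n → Y) :=
  {y | Real.exp (n * (mutInf P W - δ)) * ∏ i, outDist P W (y i) ≤ Wn W n x y}

lemma sum_piWeight_mul_sum_typicalOutputs_compl_le (hP : IsPMF P) (hW : IsChannel W) {n : ℕ}
    (hn : 0 < n) {δ : ℝ} (hδ : 0 < δ) :
    ∑ x : Fin n → X, piWeight (fun _ => P) x * ∑ y ∈ (typicalOutputs P W δ x)ᶜ, Wn W n x y
      ≤ 16 * (Fintype.card X * Fintype.card Y) / (n * δ ^ 2) := by
  simp only [typicalOutputs, compl_filter, not_le]
  exact sum_piWeight_mul_sum_wn_lower_tail_le hP hW hn hδ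

omit [Fintype Y] in
lemma sum_piWeight_mul_wn (P : X → ℝ) (W : X → Y → ℝ) {n : ℕ} (y : Fin n → Y) :
    ∑ x : Fin n → X, piWeight (fun _ => P) x * Wn W n x y = ∏ i, outDist P W (y i) :=
  sum_piWeight_mul_prod (fun _ => P) fun i x => W x (y i)

lemma sum_piWeight_mul_sum_typicalOutputs_le (P : X → ℝ) (hW : IsChannel W) (δ : ℝ) {n : ℕ}
    (x' : Fin n → X) :
    ∑ x, piWeight (fun _ => P) x * ∑ y ∈ typicalOutputs P W δ x', Wn W n x y
      ≤ Real.exp (-(n * (mutInf P W - δ))) := by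
  simp_rw [mul_sum]
  rw [sum_comm]
  simp_rw [sum_piWeight_mul_wn]
  have hmass : Real.exp (n * (mutInf P W - δ)) *
      ∑ y ∈ typicalOutputs P W δ x', ∏ i, outDist P W (y i) ≤ 1 := by
    rw [mul_sum]
    exact (sum_le_sum fun y hy => (mem_filter.1 hy).2).trans
      ((isChannel_wn hW n).sum_mem_le_one x' _)
  rw [Real.exp_neg, ← one_div, le_div_iff₀ (Real.exp_pos _)]
  linarith

lemma IsChannel.comp {V A B : Type*} [Fintype B] {w : A → B → ℝ} (hw : IsChannel w) (f : V → A) :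
    IsChannel fun v => w (f v) :=
  ⟨fun v => hw.1 (f v), fun v => hw.2 (f v)⟩

lemma exists_codewords_decodingCost_le (hP : IsPMF P) (hW : IsChannel W) {V : X → Z → ℝ}
    (hV : IsChannel V) {n : ℕ} (hn : 0 < n) {δ : ℝ} (hδ : 0 < δ) {N : ℕ} (hN : 0 < N) {c d : ℝ}
    (hc : 0 ≤ c) (hd : 0 ≤ d) :
    ∃ x : Fin N → Fin n → X,
      decodingCost (fun v => Wn W n (x v)) (fun v => typicalOutputs P W δ (x v)) c
        + decodingCost (fun v => Wn V n (x v)) (fun v => typicalOutputs P V δ (x v)) d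
      ≤ 16 * (Fintype.card X * Fintype.card Y) / (n * δ ^ 2)
          + c * ((N : ℝ)⁻¹ + Real.exp (-(n * (mutInf P W - δ))))
        + (16 * (Fintype.card X * Fintype.card Z) / (n * δ ^ 2)
          + d * ((N : ℝ)⁻¹ + Real.exp (-(n * (mutInf P V - δ))))) := by
  have hPn : IsPMF (piWeight fun _ : Fin n => P) := isPMF_piWeight fun _ => hP
  have hWcost := sum_piWeight_mul_decodingCost_le (T := typicalOutputs P W δ) (isChannel_wn hW n)
    hPn hN hc (Real.exp_pos _).le
    (by convert sum_piWeight_mul_sum_typicalOutputs_compl_le hP hW hn hδ)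
    (sum_piWeight_mul_sum_typicalOutputs_le P hW δ)
  have hVcost := sum_piWeight_mul_decodingCost_le (T := typicalOutputs P V δ) (isChannel_wn hV n)
    hPn hN hd (Real.exp_pos _).le
    (by convert sum_piWeight_mul_sum_typicalOutputs_compl_le hP hV hn hδ)
    (sum_piWeight_mul_sum_typicalOutputs_le P hV δ)
  refine (isPMF_piWeight fun _ : Fin N => hPn).exists_le (le_of_eq_of_le ?_
    (add_le_add hWcost hVcost))
  rw [← sum_add_distrib]
  exact sum_congr rfl fun _ _ => mul_add _ _ _

end TypicalOutputs

section CodeTransfer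

variable {V A B C : Type*} [Fintype V] [Fintype A] [Fintype B] [Fintype C]

/-- The image of the weight `q` under `f`. -/
def mapWeight {V A : Type*} [Fintype V] (f : V → A) (q : V → ℝ) (a : A) : ℝ :=
  ∑ v with f v = a, q v

lemma sum_mapWeight_mul (f : V → A) (q : V → ℝ) (F : A → ℝ) :
    ∑ a, mapWeight f q a * F a = ∑ v, q v * F (f v) := by
  rw [← sum_fiberwise univ f]
  refine sum_congr rfl fun a _ => ?_
  rw [mapWeight, sum_mul]
  exact sum_congr rfl fun v hv => by rw [(mem_filter.1 hv).2]

lemma IsPMF.mapWeight {q : V → ℝ} (hq : IsPMF q) (f : V → A) : IsPMF (mapWeight f q) :=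
  ⟨fun _ => sum_nonneg fun v _ => hq.1 v, by simpa [hq.2] using sum_mapWeight_mul f q fun _ => 1⟩

omit [Fintype A] in
lemma average_mapWeight {I J : Type*} [Fintype I] [Fintype J] (f : V → A) (t : ℝ)
    (Q : I → J → V → ℝ) (a : A) :
    t * ∑ i, ∑ j, mapWeight f (Q i j) a = mapWeight f (fun v => t * ∑ i, ∑ j, Q i j v) a := by
  simp only [mapWeight, ← mul_sum]
  exact congrArg (t * ·) ((sum_congr rfl fun i _ => sum_comm).trans sum_comm)

lemma HasIDErrors.mapWeight {M : Type*} {w : A → B → ℝ} {f : V → A} {Q : M → V → ℝ}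
    {D : M → Finset B} {l : ℝ} (h : HasIDErrors (fun v => w (f v)) Q D l) :
    HasIDErrors w (fun m => mapWeight f (Q m)) D l :=
  ⟨fun m => (sum_mapWeight_mul f _ fun a => ∑ y ∈ (D m)ᶜ, w a y).trans_le (h.1 m),
    fun m m' hm => (sum_mapWeight_mul f _ fun a => ∑ y ∈ D m', w a y).trans_le (h.2 m m' hm)⟩

lemma HasSeparateIDCode.of_comp {wY : A → B → ℝ} {wZ : A → C → ℝ} {f : V → A} {k kY kZ : ℕ} {l : ℝ}
    (h : HasSeparateIDCode (fun v => wY (f v)) (fun v => wZ (f v)) k kY kZ l) :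
    HasSeparateIDCode wY wZ k kY kZ l := by
  obtain ⟨Q, DcY, DY, DcZ, DZ, hQ, h₁, h₂, h₃, h₄⟩ := h
  refine ⟨fun m my mz => mapWeight f (Q m my mz), DcY, DY, DcZ, DZ, ?_⟩
  simp only [IsSeparateIDCode, average_mapWeight]
  exact ⟨fun m my mz => (hQ m my mz).mapWeight f, h₁.mapWeight, h₂.mapWeight, h₃.mapWeight,
    h₄.mapWeight⟩

end CodeTransfer

lemma hasSeparateIDCode_wn {X Y Z : Type*} [Fintype X] [Fintype Y] [Fintype Z]
    {WY : X → Y → ℝ} {WZ : X → Z → ℝ} (hWY : IsChannel WY) (hWZ : IsChannel WZ) {P : X → ℝ}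
    (hP : IsPMF P) {n : ℕ} (hn : 0 < n) {δ σ ε : ℝ} (hδ : 0 < δ) (hσ : 22 * σ < 1)
    (hσε : 44 * σ ≤ ε) {N K₁ K₂ K₃ k₁ k₂ k₃ : ℕ} (h₁ : IsListSize (Fin N) K₁ k₁ ε σ)
    (h₂ : IsListSize (Fin N) K₂ k₂ ε σ) (h₃ : IsListSize (Fin N) K₃ k₃ ε σ)
    (hpool : 16 * (Fintype.card X * Fintype.card Y) / (n * δ ^ 2)
          + (K₁ + K₂) * ((N : ℝ)⁻¹ + Real.exp (-(n * (mutInf P WY - δ))))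
        + (16 * (Fintype.card X * Fintype.card Z) / (n * δ ^ 2)
          + (K₁ + K₃) * ((N : ℝ)⁻¹ + Real.exp (-(n * (mutInf P WZ - δ))))) ≤ σ)
    (htriple : 32 / ((K₁ * K₂ * K₃ : ℝ) / (N : ℝ) ^ 2) ≤ σ) :
    HasSeparateIDCode (Wn WY n) (Wn WZ n) k₁ k₂ k₃ (132 * ε) := by
  have hN : 0 < N := by simpa using h₁.length_pos.trans_le h₁.length_le
  have : Nonempty (Fin N) := ⟨⟨0, hN⟩⟩
  obtain ⟨x, hx⟩ := exists_codewords_decodingCost_le hP hWY hWZ hn hδ hN (c := K₁ + K₂)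
    (d := K₁ + K₃) (by positivity) (by positivity)
  have hwY := (isChannel_wn hWY n).comp x
  have hwZ := (isChannel_wn hWZ n).comp x
  have hY0 := decodingCost_nonneg hwY (T := fun v => typicalOutputs P WY δ (x v))
    (c := K₁ + K₂) (by positivity)
  have hZ0 := decodingCost_nonneg hwZ (T := fun v => typicalOutputs P WZ δ (x v))
    (c := K₁ + K₃) (by positivity)
  have hY := (le_add_of_nonneg_right hZ0).trans (hx.trans hpool)
  have hZ := (le_add_of_nonneg_left hY0).trans (hx.trans hpool)
  exact (hasSeparateIDCode_of_isListDecoder hwY hwZ (hY0.trans hY) hσ hσε h₁ h₂ h₃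
    (isListDecoder_of_decodingCost_le hwY (by simp) hY)
    (isListDecoder_of_decodingCost_le hwZ (by simp) hZ)
    (isListDecoder_of_decodingCost_le hwY (by simp) hY)
    (isListDecoder_of_decodingCost_le hwZ (by simp) hZ)
    (by simpa using htriple)).of_comp

/-! ### Direct part -/

section Exponents

variable {a b R₁ R₂ R₃ a₁ a₂ a₃ r δ : ℝ}

/-- Admissible exponents for a code of rates `R₁`, `R₂`, `R₃` over channels of mutual information
`a` and `b`: `exp (n * r)` codewords, lists of `exp (n * a₁)`, `exp (n * a₂)` and `exp (n * a₃)` of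
them for the common message and the two private messages, and typicality slack `δ`. The last
condition makes three random lists share `exp (n * (a₁ + a₂ + a₃ - 2 * r))` codewords. -/
structure IsExponents (a b R₁ R₂ R₃ a₁ a₂ a₃ r δ : ℝ) : Prop where
  slack_pos : 0 < δ
  rate₁_lt : R₁ < a₁
  rate₂_lt : R₂ < a₂
  rate₃_lt : R₃ < a₃
  lt_pool₁ : a₁ < r
  lt_pool₂ : a₂ < r
  lt_pool₃ : a₃ < r
  common_lt_left : a₁ < a - δ
  common_lt_right : a₁ < b - δ
  left_lt : a₂ < a - δ
  right_lt : a₃ < b - δ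
  two_mul_pool_lt : 2 * r < a₁ + a₂ + a₃

lemma IsExponents.swap (h : IsExponents a b R₁ R₂ R₃ a₁ a₂ a₃ r δ) :
    IsExponents b a R₁ R₃ R₂ a₁ a₃ a₂ r δ :=
  ⟨h.slack_pos, h.rate₁_lt, h.rate₃_lt, h.rate₂_lt, h.lt_pool₁, h.lt_pool₃, h.lt_pool₂,
    h.common_lt_right, h.common_lt_left, h.right_lt, h.left_lt,
    by linarith [h.two_mul_pool_lt]⟩

lemma exists_isExponents_of_le (hab : a ≤ b) (ha : 0 < a) (h₁ : R₁ < a) (h₂ : R₂ < a)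
    (h₃ : R₃ < b) (h₃' : R₃ < 2 * a) :
    ∃ a₁ a₂ a₃ r δ, IsExponents a b R₁ R₂ R₃ a₁ a₂ a₃ r δ := by
  have hmin : 0 < min (min (a / 3) (a - R₁)) (min (min (a - R₂) (b - R₃)) ((2 * a - R₃) / 4)) := by
    simp only [lt_min_iff]
    refine ⟨⟨?_, ?_⟩, ⟨?_, ?_⟩, ?_⟩ <;> linarith
  obtain ⟨t, ht, htlt⟩ := exists_between hmin
  obtain ⟨⟨hta, htR₁⟩, ⟨htR₂, htb⟩, htR₃⟩ := by simpa only [lt_min_iff] using htlt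
  have hle_left := min_le_left (b - t) (2 * a - 4 * t)
  have hle_right := min_le_right (b - t) (2 * a - 4 * t)
  have hge : a - t ≤ min (b - t) (2 * a - 4 * t) := le_min (by linarith) (by linarith)
  have hgt : R₃ < min (b - t) (2 * a - 4 * t) := lt_min (by linarith) (by linarith)
  refine ⟨a - t, a - t, min (b - t) (2 * a - 4 * t), min (b - t) (2 * a - 4 * t) + t / 2, t / 2,
    ?_⟩
  constructor <;> linarith

lemma exists_isExponents (ha : 0 < a) (hb : 0 < b) (h₁ : R₁ < a) (h₁' : R₁ < b) (h₂ : R₂ < a)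
    (h₂' : R₂ < 2 * b) (h₃ : R₃ < b) (h₃' : R₃ < 2 * a) :
    ∃ a₁ a₂ a₃ r δ, IsExponents a b R₁ R₂ R₃ a₁ a₂ a₃ r δ := by
  rcases le_total a b with hab | hab
  · exact exists_isExponents_of_le hab ha h₁ h₂ h₃ h₃'
  · obtain ⟨a₁, a₂, a₃, r, δ, h⟩ := exists_isExponents_of_le hab hb h₁' h₃ h₂ h₂'
    exact ⟨a₁, a₃, a₂, r, δ, h.swap⟩

end Exponents

section Asymptotics

open Filter

variable {a a₁ a₂ a₃ c r R ε σ : ℝ}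

lemma natCeil_le_two_mul {x : ℝ} (hx : 1 ≤ x) : (⌈x⌉₊ : ℝ) ≤ 2 * x := by
  have := Nat.ceil_lt_add_one (zero_le_one.trans hx)
  linarith

lemma natCeil_exp_pos (x : ℝ) : 0 < ⌈Real.exp x⌉₊ :=
  Nat.ceil_pos.2 (Real.exp_pos x)

lemma eventually_mul_exp_neg_le (C : ℝ) (hc : 0 < c) (hσ : 0 < σ) :
    ∀ᶠ n : ℕ in atTop, C * Real.exp (-(n * c)) ≤ σ := by
  have h := (tendsto_natCast_succ_pow_mul_exp_neg 0 hc).const_mul C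
  simp only [pow_zero, one_mul, mul_zero] at h
  exact h.eventually_le_const hσ

lemma eventually_exp_mul_le_mul_exp_mul (hRa : R < a) (hε : 0 < ε) :
    ∀ᶠ n : ℕ in atTop, Real.exp (n * R) ≤ ε * Real.exp (n * a) := by
  filter_upwards [eventually_mul_exp_neg_le 1 (sub_pos.2 hRa) hε] with n hn
  have h := mul_le_mul_of_nonneg_right hn (Real.exp_pos (n * a)).le
  rwa [one_mul, ← Real.exp_add, show -(n * (a - R)) + n * a = n * R by ring] at h

lemma tendsto_exp_natCast_mul_atTop (ha : 0 < a) :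
    Tendsto (fun n : ℕ => Real.exp (n * a)) atTop atTop :=
  Real.tendsto_exp_atTop.comp (tendsto_natCast_atTop_atTop.atTop_mul_const ha)

lemma eventually_sq_natCeil_exp_exp_mul_exp_neg_le (ha : 0 < a) (hRa : R < a) (hε : 0 < ε)
    (hσ : 0 < σ) :
    ∀ᶠ n : ℕ in atTop, ((2 * ⌈Real.exp (Real.exp (n * R))⌉₊ : ℕ) : ℝ) ^ 2
      * Real.exp (-(2 * ε * ⌈Real.exp (n * a)⌉₊)) ≤ σ := by
  have hlim := (Real.tendsto_exp_neg_atTop_nhds_zero.comp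
    ((tendsto_exp_natCast_mul_atTop ha).const_mul_atTop hε)).const_mul 16
  rw [mul_zero] at hlim
  filter_upwards [eventually_exp_mul_le_mul_exp_mul hRa (half_pos hε),
    hlim.eventually_le_const hσ] with n hRn hn
  refine le_trans ?_ hn
  have hk := natCeil_le_two_mul (Real.one_le_exp (Real.exp_pos (n * R)).le)
  calc ((2 * ⌈Real.exp (Real.exp (n * R))⌉₊ : ℕ) : ℝ) ^ 2
        * Real.exp (-(2 * ε * ⌈Real.exp (n * a)⌉₊))
      ≤ (4 * Real.exp (Real.exp (n * R))) ^ 2 * Real.exp (-(2 * ε * Real.exp (n * a))) := by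
        gcongr
        · push_cast
          linarith
        · exact Nat.le_ceil _
    _ = 16 * Real.exp (2 * Real.exp (n * R) - 2 * ε * Real.exp (n * a)) := by
        rw [mul_pow, ← Real.exp_nat_mul, mul_assoc, ← Real.exp_add]
        norm_num
        ring_nf
    _ ≤ 16 * Real.exp (-(ε * Real.exp (n * a))) := by
        gcongr
        linarith

lemma eventually_natCeil_mul_succ_div_le (hR : 0 < R) (hr : 0 < r) (hσ : 0 < σ) :
    ∀ᶠ n : ℕ in atTop, (⌈Real.exp (n * r)⌉₊ : ℝ) * (⌈Real.exp (n * r)⌉₊ + 1)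
      / ⌈Real.exp (Real.exp (n * R))⌉₊ ≤ σ := by
  have hlim := (tendsto_natCast_succ_pow_mul_exp_neg 1 hR).const_mul (2 * r + 1)
  rw [mul_zero] at hlim
  filter_upwards [hlim.eventually_le_const one_pos, eventually_mul_exp_neg_le 6 one_pos hσ]
    with n hlin hn
  refine le_trans ?_ hn
  have hA1 : 1 ≤ Real.exp (n * r) := Real.one_le_exp (by positivity)
  have hA := natCeil_le_two_mul hA1
  have hR : (2 * r + 1) * n ≤ Real.exp (n * R) := by
    have h := mul_le_mul_of_nonneg_right hlin (Real.exp_pos (n * R)).le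
    rw [pow_one, one_mul, mul_assoc, mul_assoc, ← Real.exp_add, neg_add_cancel, Real.exp_zero] at h
    nlinarith
  calc _ ≤ 2 * Real.exp (n * r) * (3 * Real.exp (n * r)) / Real.exp (Real.exp (n * R)) := by
        gcongr
        · linarith
        · exact Nat.le_ceil _
    _ ≤ 2 * Real.exp (n * r) * (3 * Real.exp (n * r)) / Real.exp ((2 * r + 1) * n) := by gcongr
    _ = 6 * Real.exp (-(n * 1)) := by
        rw [div_eq_iff (Real.exp_pos _).ne', mul_assoc 6, ← Real.exp_add, mul_mul_mul_comm,
          ← Real.exp_add]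
        norm_num
        ring

lemma eventually_isListSize (hR : 0 < R) (hRa : R < a) (har : a < r) (hε : 0 < ε) (hσ : 0 < σ) :
    ∀ᶠ n : ℕ in atTop, IsListSize (Fin ⌈Real.exp (n * r)⌉₊) ⌈Real.exp (n * a)⌉₊
      ⌈Real.exp (Real.exp (n * R))⌉₊ ε σ := by
  filter_upwards [eventually_sq_natCeil_exp_exp_mul_exp_neg_le (hR.trans hRa) hRa hε hσ,
    eventually_natCeil_mul_succ_div_le hR ((hR.trans hRa).trans har) hσ] with n hexp hdiv
  refine ⟨natCeil_exp_pos _, ?_, natCeil_exp_pos _, hexp, by simpa using hdiv⟩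
  rw [Fintype.card_fin]
  gcongr

lemma natCeil_exp_mul_le {n : ℕ} (ha : 0 ≤ a) :
    (⌈Real.exp (n * a)⌉₊ : ℝ) * ((⌈Real.exp (n * r)⌉₊ : ℝ)⁻¹ + Real.exp (-(n * c)))
      ≤ 2 * Real.exp (-(n * (r - a))) + 2 * Real.exp (-(n * (c - a))) := by
  have hA := natCeil_le_two_mul (Real.one_le_exp (show 0 ≤ n * a by positivity))
  have hN : (⌈Real.exp (n * r)⌉₊ : ℝ)⁻¹ ≤ Real.exp (-(n * r)) := by
    rw [Real.exp_neg]
    exact inv_anti₀ (Real.exp_pos _) (Nat.le_ceil _)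
  calc _ ≤ 2 * Real.exp (n * a) * (Real.exp (-(n * r)) + Real.exp (-(n * c))) := by gcongr
    _ = _ := by
        rw [mul_add, mul_assoc, mul_assoc, ← Real.exp_add, ← Real.exp_add]
        ring_nf

lemma eventually_natCeil_exp_mul_le (ha : 0 ≤ a) (har : a < r) (hac : a < c) (hσ : 0 < σ) :
    ∀ᶠ n : ℕ in atTop,
      (⌈Real.exp (n * a)⌉₊ : ℝ) * ((⌈Real.exp (n * r)⌉₊ : ℝ)⁻¹ + Real.exp (-(n * c))) ≤ σ := by
  filter_upwards [eventually_mul_exp_neg_le 2 (sub_pos.2 har) (half_pos hσ),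
    eventually_mul_exp_neg_le 2 (sub_pos.2 hac) (half_pos hσ)] with n hr hc
  linarith [natCeil_exp_mul_le (n := n) (r := r) (c := c) ha]

lemma eventually_pool_cost_le (C : ℝ) {δ : ℝ} (hδ : 0 < δ) (ha₁ : 0 ≤ a₁) (ha₂ : 0 ≤ a₂)
    (h₁r : a₁ < r) (h₂r : a₂ < r) (h₁c : a₁ < c) (h₂c : a₂ < c) (hσ : 0 < σ) :
    ∀ᶠ n : ℕ in atTop, C / (n * δ ^ 2) + (⌈Real.exp (n * a₁)⌉₊ + ⌈Real.exp (n * a₂)⌉₊ : ℝ)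
      * ((⌈Real.exp (n * r)⌉₊ : ℝ)⁻¹ + Real.exp (-(n * c))) ≤ σ := by
  have hC : ∀ᶠ n : ℕ in atTop, C / (n * δ ^ 2) ≤ σ / 3 :=
    ((tendsto_natCast_atTop_atTop.atTop_mul_const (by positivity)).const_div_atTop
      C).eventually_le_const (by positivity)
  filter_upwards [hC, eventually_natCeil_exp_mul_le ha₁ h₁r h₁c (show 0 < σ / 3 by positivity),
    eventually_natCeil_exp_mul_le ha₂ h₂r h₂c (show 0 < σ / 3 by positivity)] with n h h₁ h₂
  linarith

lemma eventually_div_triple_le (hr : 0 ≤ r) (h : 2 * r < a₁ + a₂ + a₃) (hσ : 0 < σ) :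
    ∀ᶠ n : ℕ in atTop,
      32 / ((⌈Real.exp (n * a₁)⌉₊ * ⌈Real.exp (n * a₂)⌉₊ * ⌈Real.exp (n * a₃)⌉₊ : ℝ)
        / (⌈Real.exp (n * r)⌉₊ : ℝ) ^ 2) ≤ σ := by
  filter_upwards [eventually_mul_exp_neg_le 128 (sub_pos.2 h) hσ] with n hn
  refine le_trans ?_ hn
  have hN := natCeil_le_two_mul (Real.one_le_exp (show 0 ≤ n * r by positivity))
  have : (0 : ℝ) < ⌈Real.exp (n * r)⌉₊ := by exact_mod_cast natCeil_exp_pos _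
  calc _ ≤ 32 / ((Real.exp (n * a₁) * Real.exp (n * a₂) * Real.exp (n * a₃))
      / (2 * Real.exp (n * r)) ^ 2) := by
        gcongr <;> exact Nat.le_ceil _
    _ = _ := by
        rw [div_div_eq_mul_div, div_eq_iff (by positivity), mul_pow, ← Real.exp_nat_mul,
          ← Real.exp_add, ← Real.exp_add, mul_assoc 128, ← Real.exp_add]
        push_cast
        ring_nf

lemma le_log_log_natCeil_exp_exp {n : ℕ} (hn : 0 < n) (R : ℝ) :
    R ≤ 1 / n * Real.log (Real.log ⌈Real.exp (Real.exp (n * R))⌉₊) := by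
  have hk : Real.exp (n * R) ≤ Real.log ⌈Real.exp (Real.exp (n * R))⌉₊ :=
    (Real.le_log_iff_exp_le (by exact_mod_cast natCeil_exp_pos _)).2 (Nat.le_ceil _)
  rw [one_div, inv_mul_eq_div, le_div_iff₀ (by exact_mod_cast hn), mul_comm]
  exact (Real.le_log_iff_exp_le ((Real.exp_pos _).trans_le hk)).2 hk

end Asymptotics

section ForgetMessages

variable {V B C : Type*} [Fintype V] [Fintype B] [Fintype C] {wY : V → B → ℝ} {wZ : V → C → ℝ}
  {k kY kZ : ℕ} {l : ℝ}

lemma average_unique_left {a b : ℕ} (f : Fin a → Fin b → ℝ) :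
    ((1 * b : ℕ) : ℝ)⁻¹ * ∑ _i : Fin 1, ∑ j, (a : ℝ)⁻¹ * ∑ i, f i j
      = ((a * b : ℕ) : ℝ)⁻¹ * ∑ i, ∑ j, f i j := by
  rw [sum_comm (f := f)]
  simp only [univ_unique, sum_singleton, ← mul_sum, ← mul_assoc]
  push_cast
  rw [one_mul, mul_inv_rev]

lemma average_unique_right {a b : ℕ} (f : Fin a → Fin b → ℝ) :
    ((a * 1 : ℕ) : ℝ)⁻¹ * ∑ i, ∑ _j : Fin 1, (b : ℝ)⁻¹ * ∑ j, f i j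
      = ((a * b : ℕ) : ℝ)⁻¹ * ∑ i, ∑ j, f i j := by
  simp only [univ_unique, sum_singleton, ← mul_sum, ← mul_assoc]
  push_cast
  rw [mul_one, mul_inv]

lemma hasIDErrors_univ {M : Type*} [Subsingleton M] (w : V → B → ℝ) (Q : M → V → ℝ) (hl : 0 ≤ l) :
    HasIDErrors w Q (fun _ => univ) l :=
  ⟨fun m => by simpa using hl, fun m m' hm => absurd (Subsingleton.elim m m') hm⟩

namespace HasSeparateIDCode

lemma forget_common (h : HasSeparateIDCode wY wZ k kY kZ l) (hk : 0 < k) (hl : 0 ≤ l) :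
    HasSeparateIDCode wY wZ 1 kY kZ l := by
  obtain ⟨Q, -, DY, -, DZ, hQ, -, h₂, -, h₄⟩ := h
  refine ⟨fun _ my mz v => (k : ℝ)⁻¹ * ∑ m, Q m my mz v, fun _ => univ, DY, fun _ => univ, DZ,
    fun _ my mz => isPMF_average hk fun m => hQ m my mz, hasIDErrors_univ _ _ hl, ?_,
    hasIDErrors_univ _ _ hl, ?_⟩
  · simpa only [average_unique_left] using h₂
  · simpa only [average_unique_left] using h₄

lemma forget_left (h : HasSeparateIDCode wY wZ k kY kZ l) (hkY : 0 < kY) (hl : 0 ≤ l) :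
    HasSeparateIDCode wY wZ k 1 kZ l := by
  obtain ⟨Q, DcY, -, DcZ, DZ, hQ, h₁, -, h₃, h₄⟩ := h
  refine ⟨fun m _ mz v => (kY : ℝ)⁻¹ * ∑ my, Q m my mz v, DcY, fun _ => univ, DcZ, DZ,
    fun m _ mz => isPMF_average hkY fun my => hQ m my mz, ?_, hasIDErrors_univ _ _ hl, ?_, ?_⟩
  · simpa only [average_unique_left] using h₁
  · simpa only [average_unique_left] using h₃
  · simpa only [average_unique_right] using h₄

lemma forget_right (h : HasSeparateIDCode wY wZ k kY kZ l) (hkZ : 0 < kZ) (hl : 0 ≤ l) :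
    HasSeparateIDCode wY wZ k kY 1 l := by
  obtain ⟨Q, DcY, DY, DcZ, -, hQ, h₁, h₂, h₃, -⟩ := h
  refine ⟨fun m my _ v => (kZ : ℝ)⁻¹ * ∑ mz, Q m my mz v, DcY, DY, DcZ, fun _ => univ,
    fun m my _ => isPMF_average hkZ fun mz => hQ m my mz, ?_, ?_, ?_, hasIDErrors_univ _ _ hl⟩
  · simpa only [average_unique_right] using h₁
  · simpa only [average_unique_right] using h₂
  · simpa only [average_unique_right] using h₃

lemma one_one_one {p : V → ℝ} (hp : IsPMF p) (wY : V → B → ℝ) (wZ : V → C → ℝ) (hl : 0 ≤ l) :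
    HasSeparateIDCode wY wZ 1 1 1 l :=
  ⟨fun _ _ _ => p, fun _ => univ, fun _ => univ, fun _ => univ, fun _ => univ, fun _ _ _ => hp,
    hasIDErrors_univ _ _ hl, hasIDErrors_univ _ _ hl, hasIDErrors_univ _ _ hl,
    hasIDErrors_univ _ _ hl⟩

end HasSeparateIDCode

end ForgetMessages

section InnerBound

open Filter Topology

variable {X Y Z : Type*} [Fintype X] [Fintype Y] [Fintype Z]

lemma eventually_hasSeparateIDCode_wn {WY : X → Y → ℝ} {WZ : X → Z → ℝ} (hWY : IsChannel WY)
    (hWZ : IsChannel WZ) {P : X → ℝ} (hP : IsPMF P) {R₁ R₂ R₃ : ℝ} (hR₁ : 0 < R₁) (hR₂ : 0 < R₂)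
    (hR₃ : 0 < R₃) (h₁ : R₁ < mutInf P WY) (h₁' : R₁ < mutInf P WZ) (h₂ : R₂ < mutInf P WY)
    (h₂' : R₂ < 2 * mutInf P WZ) (h₃ : R₃ < mutInf P WZ) (h₃' : R₃ < 2 * mutInf P WY) {l : ℝ}
    (hl : 0 < l) :
    ∀ᶠ n : ℕ in atTop, HasSeparateIDCode (Wn WY n) (Wn WZ n) ⌈Real.exp (Real.exp (n * R₁))⌉₊
      ⌈Real.exp (Real.exp (n * R₂))⌉₊ ⌈Real.exp (Real.exp (n * R₃))⌉₊ l := by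
  obtain ⟨a₁, a₂, a₃, r, δ, h⟩ :=
    exists_isExponents (hR₁.trans h₁) (hR₁.trans h₁') h₁ h₁' h₂ h₂' h₃ h₃'
  have ha₁ := hR₁.trans h.rate₁_lt
  have ha₂ := hR₂.trans h.rate₂_lt
  have ha₃ := hR₃.trans h.rate₃_lt
  obtain ⟨ε, hε⟩ : ∃ ε, l = 132 * ε := ⟨l / 132, by ring⟩
  have hε0 : 0 < ε := by linarith
  obtain ⟨σ, hσ0, hσ⟩ := exists_between (show 0 < min (ε / 44) (1 / 44) by positivity)
  rw [lt_min_iff] at hσ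
  filter_upwards [eventually_gt_atTop 0,
    eventually_isListSize hR₁ h.rate₁_lt h.lt_pool₁ hε0 hσ0,
    eventually_isListSize hR₂ h.rate₂_lt h.lt_pool₂ hε0 hσ0,
    eventually_isListSize hR₃ h.rate₃_lt h.lt_pool₃ hε0 hσ0,
    eventually_pool_cost_le (16 * (Fintype.card X * Fintype.card Y)) h.slack_pos ha₁.le ha₂.le
      h.lt_pool₁ h.lt_pool₂ h.common_lt_left h.left_lt (half_pos hσ0),
    eventually_pool_cost_le (16 * (Fintype.card X * Fintype.card Z)) h.slack_pos ha₁.le ha₃.le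
      h.lt_pool₁ h.lt_pool₃ h.common_lt_right h.right_lt (half_pos hσ0),
    eventually_div_triple_le (ha₁.trans h.lt_pool₁).le h.two_mul_pool_lt hσ0]
    with n hn hsize₁ hsize₂ hsize₃ hpoolY hpoolZ htriple
  rw [hε]
  exact hasSeparateIDCode_wn hWY hWZ hP hn h.slack_pos (by linarith) (by linarith) hsize₁ hsize₂
    hsize₃ (by linarith) htriple

lemma meetsRate_zero (n : ℕ) : MeetsRate n 1 0 :=
  ⟨fun h => absurd h (lt_irrefl 0), fun _ => rfl⟩

lemma exists_meetsRate {C : ℕ → Prop} {n k : ℕ} {R : ℝ} (hR : 0 ≤ R)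
    (hk : R ≤ 1 / n * Real.log (Real.log k)) (hC : C k) (hC1 : C 1) :
    ∃ k', MeetsRate n k' R ∧ C k' := by
  obtain rfl | hR := hR.eq_or_lt
  · exact ⟨1, meetsRate_zero n, hC1⟩
  · exact ⟨k, ⟨fun _ => hk, fun h => absurd h hR.ne'⟩, hC⟩

lemma HasIDErrors.idCodeErr {M : Type*} {n : ℕ} {W : X → Y → ℝ} {Q : M → (Fin n → X) → ℝ}
    {D : M → Finset (Fin n → Y)} {l l₁ l₂ : ℝ} (h : HasIDErrors (Wn W n) Q D l) (h₁ : l ≤ l₁)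
    (h₂ : l ≤ l₂) : IDCodeErr n W Q D l₁ l₂ :=
  ⟨fun m => (le_of_eq (by congr!)).trans ((h.1 m).trans h₁),
    fun m m' hm => (h.2 m m' hm).trans h₂⟩

lemma cmsAchievable_of_eventually {W : X → Y → Z → ℝ} {p : ℝ × ℝ × ℝ} (h₁ : 0 ≤ p.1)
    (h₂ : 0 ≤ p.2.1) (h₃ : 0 ≤ p.2.2)
    (h : ∀ l, 0 < l → ∀ᶠ n : ℕ in atTop, ∃ k, MeetsRate n k p.1 ∧ ∃ kY, MeetsRate n kY p.2.1 ∧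
      ∃ kZ, MeetsRate n kZ p.2.2 ∧ HasSeparateIDCode (Wn (margY W) n) (Wn (margZ W) n) k kY kZ l) :
    CMSAchievable W p := by
  refine ⟨h₁, h₂, h₃, fun l1Y l2Y l1Z l2Z hl1Y hl2Y hl1Z hl2Z => ?_⟩
  obtain ⟨l, hl, hlt⟩ := exists_between
    (show 0 < min (min l1Y l2Y) (min l1Z l2Z) by positivity)
  obtain ⟨⟨h1Y, h2Y⟩, h1Z, h2Z⟩ := by simpa only [lt_min_iff] using hlt
  obtain ⟨n₀, hn₀⟩ := eventually_atTop.1 (h l hl)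
  refine ⟨n₀, fun n hn => ?_⟩
  obtain ⟨k, hk, kY, hkY, kZ, hkZ, Q, DcY, DY, DcZ, DZ, hQ, e₁, e₂, e₃, e₄⟩ := hn₀ n hn
  exact ⟨k, kY, kZ, Q, DcY, DY, DcZ, DZ,
    ⟨hQ, e₁.idCodeErr h1Y.le h2Y.le, e₂.idCodeErr h1Y.le h2Y.le, e₃.idCodeErr h1Z.le h2Z.le,
      e₄.idCodeErr h1Z.le h2Z.le⟩, hk, hkY, hkZ⟩

lemma cmsAchievable_of_lt {W : X → Y → Z → ℝ} (hW : IsBC W) {P : X → ℝ} (hP : IsPMF P)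
    {p : ℝ × ℝ × ℝ} (h₁ : 0 ≤ p.1) (h₂ : 0 ≤ p.2.1) (h₃ : 0 ≤ p.2.2)
    (h₁Y : p.1 < mutInf P (margY W)) (h₁Z : p.1 < mutInf P (margZ W))
    (h₂Y : p.2.1 < mutInf P (margY W)) (h₂Z : p.2.1 < 2 * mutInf P (margZ W))
    (h₃Z : p.2.2 < mutInf P (margZ W)) (h₃Y : p.2.2 < 2 * mutInf P (margY W)) :
    CMSAchievable W p := by
  obtain ⟨R₁, hR₁, hR₁'⟩ := exists_between (lt_min h₁Y h₁Z)
  obtain ⟨R₂, hR₂, hR₂'⟩ := exists_between (lt_min h₂Y h₂Z)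
  obtain ⟨R₃, hR₃, hR₃'⟩ := exists_between (lt_min h₃Z h₃Y)
  rw [lt_min_iff] at hR₁' hR₂' hR₃'
  refine cmsAchievable_of_eventually h₁ h₂ h₃ fun l hl => ?_
  filter_upwards [eventually_gt_atTop 0, eventually_hasSeparateIDCode_wn (isChannel_margY hW)
    (isChannel_margZ hW) hP (h₁.trans_lt hR₁) (h₂.trans_lt hR₂) (h₃.trans_lt hR₃) hR₁'.1 hR₁'.2
    hR₂'.1 hR₂'.2 hR₃'.1 hR₃'.2 hl] with n hn hcode
  have hrate {R R' : ℝ} (hR : R < R') := hR.le.trans (le_log_log_natCeil_exp_exp hn R')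
  obtain ⟨k, hk, hcode⟩ := exists_meetsRate
    (C := fun k => HasSeparateIDCode _ _ k _ _ l) h₁ (hrate hR₁) hcode
    (hcode.forget_common (natCeil_exp_pos _) hl.le)
  obtain ⟨kY, hkY, hcode⟩ := exists_meetsRate
    (C := fun kY => HasSeparateIDCode _ _ k kY _ l) h₂ (hrate hR₂) hcode
    (hcode.forget_left (natCeil_exp_pos _) hl.le)
  obtain ⟨kZ, hkZ, hcode⟩ := exists_meetsRate
    (C := fun kZ => HasSeparateIDCode _ _ k kY kZ l) h₃ (hrate hR₃) hcode
    (hcode.forget_right (natCeil_exp_pos _) hl.le)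
  exact ⟨k, hk, kY, hkY, kZ, hkZ, hcode⟩

lemma cmsAchievable_zero {P : X → ℝ} (hP : IsPMF P) (W : X → Y → Z → ℝ) : CMSAchievable W 0 :=
  cmsAchievable_of_eventually le_rfl le_rfl le_rfl fun _ hl => Eventually.of_forall fun n =>
    ⟨1, meetsRate_zero n, 1, meetsRate_zero n, 1, meetsRate_zero n,
      HasSeparateIDCode.one_one_one (isPMF_piWeight fun _ => hP) _ _ hl.le⟩

theorem subset_closure_setOf_cmsAchievable {W : X → Y → Z → ℝ} (hW : IsBC W) :
    {p : ℝ × ℝ × ℝ | 0 ≤ p.1 ∧ 0 ≤ p.2.1 ∧ 0 ≤ p.2.2 ∧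
        ∃ P : X → ℝ, IsPMF P ∧
          p.1 ≤ mutInf P (margY W) ∧ p.2.1 ≤ mutInf P (margY W) ∧
          p.1 ≤ mutInf P (margZ W) ∧ p.2.2 ≤ mutInf P (margZ W) ∧
          p.2.1 ≤ 2 * mutInf P (margZ W) ∧ p.2.2 ≤ 2 * mutInf P (margY W)}
      ⊆ closure {p : ℝ × ℝ × ℝ | CMSAchievable W p} := by
  rintro p ⟨h₁, h₂, h₃, P, hP, h₁Y, h₂Y, h₁Z, h₃Z, h₂Z, h₃Y⟩
  by_cases hpos : 0 < mutInf P (margY W) ∧ 0 < mutInf P (margZ W)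
  · obtain ⟨hY, hZ⟩ := hpos
    have hlim : Tendsto (fun t : ℝ => t • p) (𝓝[<] 1) (𝓝 p) := by
      have h : Tendsto (fun t : ℝ => t • p) (𝓝 1) (𝓝 ((1 : ℝ) • p)) :=
        (continuous_id.smul continuous_const).tendsto 1
      rw [one_smul] at h
      exact h.mono_left nhdsWithin_le_nhds
    refine mem_closure_of_tendsto hlim ?_
    filter_upwards [Ioo_mem_nhdsLT zero_lt_one] with t ht
    have hmul {x y : ℝ} (hx : 0 ≤ x) (hxy : x ≤ y) (hy : 0 < y) : t * x < y := by
      nlinarith [ht.1, ht.2, hx]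
    exact cmsAchievable_of_lt hW hP (mul_nonneg ht.1.le h₁) (mul_nonneg ht.1.le h₂)
      (mul_nonneg ht.1.le h₃) (hmul h₁ h₁Y hY) (hmul h₁ h₁Z hZ) (hmul h₂ h₂Y hY)
      (hmul h₂ h₂Z (by linarith)) (hmul h₃ h₃Z hZ) (hmul h₃ h₃Y (by linarith))
  · have hp : p = 0 := by
      rw [not_and_or, not_lt, not_lt] at hpos
      refine Prod.ext ?_ (Prod.ext ?_ ?_) <;> simp only [Prod.fst_zero, Prod.snd_zero] <;>
        rcases hpos with h | h <;> linarith
    rw [hp]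
    exact subset_closure (cmsAchievable_zero hP W)

end InnerBound

/-- **Theorem 9.** Outer and inner bounds on the ID capacity
region of the BC with a common message identified separately. -/
theorem bc_cms_id_capacity_bounds
    {X Y Z : Type} [Fintype X] [Fintype Y] [Fintype Z]
    [Nonempty X] [Nonempty Y] [Nonempty Z]
    (W : X → Y → Z → ℝ) (hW : IsBC W) :
    closure {p : ℝ × ℝ × ℝ | CMSAchievable W p}
      ⊆ {p : ℝ × ℝ × ℝ | 0 ≤ p.1 ∧ 0 ≤ p.2.1 ∧ 0 ≤ p.2.2 ∧
          ∃ P : X → ℝ, IsPMF P ∧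
            p.1 ≤ mutInf P (margY W) ∧ p.2.1 ≤ mutInf P (margY W) ∧
            p.1 ≤ mutInf P (margZ W) ∧ p.2.2 ≤ mutInf P (margZ W)} ∧
    {p : ℝ × ℝ × ℝ | 0 ≤ p.1 ∧ 0 ≤ p.2.1 ∧ 0 ≤ p.2.2 ∧
        ∃ P : X → ℝ, IsPMF P ∧
          p.1 ≤ mutInf P (margY W) ∧ p.2.1 ≤ mutInf P (margY W) ∧
          p.1 ≤ mutInf P (margZ W) ∧ p.2.2 ≤ mutInf P (margZ W) ∧
          p.2.1 ≤ 2 * mutInf P (margZ W) ∧ p.2.2 ≤ 2 * mutInf P (margY W)}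
      ⊆ closure {p : ℝ × ℝ × ℝ | CMSAchievable W p} := by
  exact ⟨closure_setOf_cmsAchievable_subset hW, subset_closure_setOf_cmsAchievable hW⟩
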